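/- arXiv:2311.13582 — 8 statements merged into one kernel-verified Lean document; each statement's English description precedes it below -/
import Mathlib

section
/- Let m ≥ 1 and n ≥ 0, and let G_1, …, G_n be graphs. For each i with 1 ≤ i ≤ n, let G'_i = G_i − w_i for some vertex w_i of G_i, and let r_1, …, r_n be integers such that r_i ≥ R(C_4, …, C_4, G_1, …, G_{i−1}, G'_i, G_{i+1}, …, G_n) (with m copies of C_4). Assume that R = R(C_4, …, C_4, G_1, …, G_n) (with m copies of C_4) satisfies R > max_{1 ≤ i ≤ n} |V(G_i)|, and assume moreover that if m = 1 then G_i ≠ K_2 for some i ∈ {1, …, n}. Then R ≤ (Σ_{i=1}^n r_i) − n + 1 + (m² + m)/2 + ⌈ m · √( (m+1)²/4 + (Σ_{i=1}^n r_i) − n ) ⌉. -/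
open SimpleGraph

/-- A graph bundled with its vertex type. -/
structure VGraph : Type 1 where
  V : Type
  G : SimpleGraph V

/-- The cycle `C₄` as a bundled graph. -/
def C4 : VGraph := ⟨Fin 4, SimpleGraph.cycleGraph 4⟩

/-- The path `P₃` (on 3 vertices) as a bundled graph. -/
def P3 : VGraph := ⟨Fin 3, SimpleGraph.pathGraph 3⟩

/-- The complete graph `K_k` as a bundled graph. -/
def Kc (k : ℕ) : VGraph := ⟨Fin k, ⊤⟩

/-- The star `K_{1,k}`: vertex `0` is the center, joined to the `k` leaves. -/
def starGraph (k : ℕ) : SimpleGraph (Fin (k + 1)) :=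
  SimpleGraph.fromRel (fun u _ => u = 0)

/-- The book `B_k = K₂ + kK₁`: vertices `0, 1` form the spine, joined
to everything; the `k` pages are pairwise nonadjacent. -/
def bookGraph (k : ℕ) : SimpleGraph (Fin (k + 2)) :=
  SimpleGraph.fromRel (fun u _ => u.val < 2)

/-- Deletion of a vertex (with all incident edges) from a bundled graph. -/
def VGraph.delete (X : VGraph) (w : X.V) : VGraph :=
  ⟨{v : X.V // v ≠ w}, X.G.induce {v | v ≠ w}⟩

/-- Disjoint union with a single isolated vertex, `G ∪ K₁`. -/
def VGraph.addK1 (X : VGraph) : VGraph :=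
  ⟨Option X.V, SimpleGraph.fromRel (fun u v => ∃ a b, u = some a ∧ v = some b ∧ X.G.Adj a b)⟩

/-- `ramseyProp l N` : every coloring of the edges of the complete graph on `N`
vertices with `l.length` colors admits, for some color `i`, a subgraph isomorphic
to the `i`-th graph of `l` all of whose edges have color `i`. -/
def ramseyProp (l : List VGraph) (N : ℕ) : Prop :=
  ∀ c : Sym2 (Fin N) → Fin l.length,
    ∃ (i : Fin l.length) (f : (l.get i).V ↪ Fin N),
      ∀ u v, (l.get i).G.Adj u v → c s(f u, f v) = i

/-- The Ramsey number of a list of graphs: the least positive `N`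
satisfying `ramseyProp l N`. -/
noncomputable def ramseyNumber (l : List VGraph) : ℕ :=
  sInf {N | 0 < N ∧ ramseyProp l N}

/-- Matrix form of the regular friendship theorem. -/
lemma friendship_aux {V : Type*} [Fintype V] [DecidableEq V] (M : Matrix V V ℤ) (d : ℤ)
    (hdiag : ∀ v, M v v = 0) (hrow : ∀ v, ∑ u, M v u = d)
    (hsq : ∀ u v, (M * M) u v = if u = v then d else 1)
    (hN : (Fintype.card V : ℤ) - 1 = d ^ 2 - d) : d ≤ 2 := by
  by_contra hd
  push Not at hd
  set p := (d - 1).natAbs.minFac with hp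
  have hprime : p.Prime := Nat.minFac_prime (by omega)
  have : Fact p.Prime := ⟨hprime⟩
  have hdvd : (p : ℤ) ∣ d - 1 := by
    rw [Int.natCast_dvd]; exact Nat.minFac_dvd _
  have hd1 : ((d : ℤ) : ZMod p) = 1 := by
    have := (ZMod.intCast_zmod_eq_zero_iff_dvd (d - 1) p).2 hdvd
    push_cast at this
    exact sub_eq_zero.1 this
  let A : Matrix V V (ZMod p) := M.map (Int.castRingHom (ZMod p))
  let J : Matrix V V (ZMod p) := Matrix.of fun _ _ => 1
  have hA2 : A * A = J := by
    have : A * A = (M * M).map (Int.castRingHom (ZMod p)) := by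
      simp only [A, Matrix.map_mul]
    rw [this]
    ext u v
    simp only [Matrix.map_apply, hsq, J, Matrix.of_apply]
    split_ifs <;> simp [hd1]
  have hAJ : A * J = J := by
    ext u v
    simp only [Matrix.mul_apply, J, Matrix.of_apply, mul_one, A, Matrix.map_apply]
    rw [← map_sum, hrow]
    simpa using hd1
  have hpow : ∀ k : ℕ, A ^ (k + 2) = J := by
    intro k
    induction k with
    | zero => rw [zero_add, pow_two, hA2]
    | succ k ih => rw [show k + 1 + 2 = (k + 2) + 1 by ring, pow_succ', ih, hAJ]
  have hAp : A ^ p = J := by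
    have := hpow (p - 2)
    rwa [Nat.sub_add_cancel hprime.two_le] at this
  have htr := ZMod.trace_pow_card A
  rw [hAp] at htr
  have htA : Matrix.trace A = 0 := by
    simp [Matrix.trace, A, hdiag]
  have htJ : Matrix.trace J = 1 := by
    have h1 : Matrix.trace J = (Fintype.card V : ZMod p) := by simp [Matrix.trace, J]
    have h2 : ((Fintype.card V : ℤ) : ZMod p) = ((d ^ 2 - d + 1 : ℤ) : ZMod p) := by
      congr 1; linarith
    push_cast at h2
    rw [h1, h2, hd1]; ring
  rw [htA, htJ, zero_pow hprime.ne_zero] at htr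
  exact one_ne_zero htr

/-- The counting core. -/
lemma counting_core {V : Type*} [Fintype V] [DecidableEq V] [Nonempty V] (m : ℕ) (hm : 1 ≤ m)
    (M : Fin m → Matrix V V ℤ) (hdiag : ∀ j v, M j v v = 0)
    (hidem : ∀ j u v, M j u v * M j u v = M j u v)
    (hsymm : ∀ j u v, M j u v = M j v u)
    (hcodeg : ∀ j u v, u ≠ v → (M j * M j) u v ≤ 1)
    (D : ℤ) (hDm : (m : ℤ) ≤ D)
    (hD : (m : ℤ) ^ 2 * ((Fintype.card V : ℤ) - 1) ≤ D ^ 2 - m * D)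
    (hT : ∀ v, D ≤ ∑ j, ∑ u, M j v u)
    (hT' : ∀ v, ∑ j, ∑ u, M j v u ≤ (Fintype.card V : ℤ) - 1) :
    m = 1 ∧ D = 2 ∧ Fintype.card V = 3 := by
  set N : ℤ := (Fintype.card V : ℤ) with hNdef
  have hm0 : (0 : ℤ) < m := by exact_mod_cast hm
  let d : Fin m → V → ℤ := fun j v => ∑ u, M j v u
  let T : V → ℤ := fun v => ∑ j, d j v
  let q : V → ℤ := fun v => ∑ j, (d j v ^ 2 - d j v)
  have hTD : ∀ v, D ≤ T v := hT
  -- variance identity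
  have hvar : ∀ v, ∑ j, ((m : ℤ) * d j v - T v) ^ 2
      = (m : ℤ) * ((m : ℤ) * q v - (T v ^ 2 - m * T v)) := by
    intro v
    have h1 : ∀ j, ((m : ℤ) * d j v - T v) ^ 2
        = (m : ℤ) ^ 2 * (d j v ^ 2 - d j v) + ((m : ℤ) ^ 2 - 2 * m * T v) * d j v + T v ^ 2 := by
      intro j; ring
    simp only [h1, Finset.sum_add_distrib, ← Finset.mul_sum, Finset.sum_const, Finset.card_univ,
      Fintype.card_fin, nsmul_eq_mul]
    change (m : ℤ) ^ 2 * q v + _ * T v + _ = _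
    ring
  have hq1 : ∀ v, T v ^ 2 - m * T v ≤ (m : ℤ) * q v := by
    intro v
    have h0 : 0 ≤ ∑ j, ((m : ℤ) * d j v - T v) ^ 2 := Finset.sum_nonneg fun _ _ => sq_nonneg _
    rw [hvar v] at h0
    have := nonneg_of_mul_nonneg_right h0 hm0
    linarith
  have hq2 : ∀ v, D ^ 2 - m * D ≤ T v ^ 2 - m * T v := by
    intro v
    nlinarith [mul_nonneg (sub_nonneg.2 (hTD v)) (show (0 : ℤ) ≤ T v + D - m by linarith [hTD v])]
  have hq : ∀ v, (m : ℤ) * (N - 1) ≤ q v := by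
    intro v
    have : (m : ℤ) * ((m : ℤ) * (N - 1)) ≤ m * q v := by
      linarith [hq1 v, hq2 v]
    exact le_of_mul_le_mul_left this hm0
  -- double counting
  have hMdiag : ∀ j v, (M j * M j) v v = d j v := by
    intro j v
    simp only [Matrix.mul_apply, d]
    refine Finset.sum_congr rfl fun u _ => ?_
    rw [hsymm j u v, hidem]
  have hdc : ∀ j, ∑ v, (d j v ^ 2 - d j v)
      = ∑ u, ∑ v, if u = v then 0 else (M j * M j) u v := by
    intro j
    have h1 : ∑ u, ∑ v, (M j * M j) u v = ∑ v, d j v ^ 2 := by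
      simp only [Matrix.mul_apply]
      have : ∀ u, ∑ v, ∑ x, M j u x * M j x v = ∑ x, M j u x * d j x := by
        intro u
        rw [Finset.sum_comm]
        simp only [d, Finset.mul_sum]
      simp only [this]
      rw [Finset.sum_comm]
      refine Finset.sum_congr rfl fun x _ => ?_
      rw [← Finset.sum_mul, pow_two]
      congr 1
      exact Finset.sum_congr rfl fun u _ => hsymm j u x
    have h2 : ∀ u, ∑ v, (M j * M j) u v
        = (∑ v, if u = v then 0 else (M j * M j) u v) + d j u := by
      intro u
      rw [← hMdiag j u]
      have : ∀ v, (M j * M j) u v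
          = (if u = v then 0 else (M j * M j) u v) + (if u = v then (M j * M j) u v else 0) := by
        intro v; split_ifs <;> simp
      rw [Finset.sum_congr rfl fun v _ => this v, Finset.sum_add_distrib]
      simp
    simp only [h2, Finset.sum_add_distrib] at h1
    rw [Finset.sum_sub_distrib]
    linarith
  have hle : ∀ j u v, (if u = v then 0 else (M j * M j) u v) ≤ (if u = v then (0 : ℤ) else 1) := by
    intro j u v
    split_ifs with h
    · exact le_rfl
    · exact hcodeg j u v h
  have hones : ∀ u : V, ∑ v, (if u = v then (0 : ℤ) else 1) = N - 1 := by
    intro u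
    have h1 : ∀ v, (if u = v then (0 : ℤ) else 1) = 1 - (if u = v then (1 : ℤ) else 0) := by
      intro v; split_ifs <;> simp
    simp only [h1, Finset.sum_sub_distrib]
    simp [hNdef]
  have hsumq : ∑ v, q v = ∑ j, ∑ u, ∑ v, if u = v then 0 else (M j * M j) u v := by
    simp only [q]
    rw [Finset.sum_comm]
    exact Finset.sum_congr rfl fun j _ => hdc j
  have hlow : ∑ _v : V, (m : ℤ) * (N - 1) ≤ ∑ v, q v := Finset.sum_le_sum fun v _ => hq v
  have hrow : ∀ j u, (∑ v, if u = v then 0 else (M j * M j) u v)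
      ≤ ∑ v : V, (if u = v then (0 : ℤ) else 1) :=
    fun j u => Finset.sum_le_sum fun v _ => hle j u v
  have hlay : ∀ j, (∑ u, ∑ v, if u = v then 0 else (M j * M j) u v)
      ≤ ∑ u : V, ∑ v : V, (if u = v then (0 : ℤ) else 1) :=
    fun j => Finset.sum_le_sum fun u _ => hrow j u
  have hall : (∑ j, ∑ u, ∑ v, if u = v then 0 else (M j * M j) u v)
      ≤ ∑ _j : Fin m, ∑ u : V, ∑ v : V, (if u = v then (0 : ℤ) else 1) :=
    Finset.sum_le_sum fun j _ => hlay j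
  have htot : ∑ _j : Fin m, ∑ u : V, ∑ v : V, (if u = v then (0 : ℤ) else 1)
      = ∑ _v : V, (m : ℤ) * (N - 1) := by
    simp only [hones]
    simp
    ring
  have heq1 : ∑ _v : V, (m : ℤ) * (N - 1) = ∑ v, q v :=
    le_antisymm hlow (by rw [hsumq]; exact hall.trans_eq htot)
  have heq2 : (∑ j, ∑ u, ∑ v, if u = v then 0 else (M j * M j) u v)
      = ∑ _j : Fin m, ∑ u : V, ∑ v : V, (if u = v then (0 : ℤ) else 1) := by
    rw [← hsumq, htot, heq1]
  have hqeq : ∀ v, (m : ℤ) * (N - 1) = q v := fun v =>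
    (Finset.sum_eq_sum_iff_of_le fun v _ => hq v).1 heq1 v (Finset.mem_univ _)
  have hco : ∀ j u v, u ≠ v → (M j * M j) u v = 1 := by
    intro j u v huv
    have a1 := (Finset.sum_eq_sum_iff_of_le fun j _ => hlay j).1 heq2 j (Finset.mem_univ _)
    have a2 := (Finset.sum_eq_sum_iff_of_le fun u _ => hrow j u).1 a1 u (Finset.mem_univ _)
    have a3 := (Finset.sum_eq_sum_iff_of_le fun v _ => hle j u v).1 a2 v (Finset.mem_univ _)
    simpa [huv] using a3
  have hTeq : ∀ v, T v = D := by
    intro v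
    have h1 : (T v - D) * (T v + D - m) ≤ 0 := by
      have := hq1 v
      rw [← hqeq v] at this
      nlinarith
    have h2 := hTD v
    by_contra hne
    have h3 : 0 < T v - D := by
      have := lt_of_le_of_ne h2 (Ne.symm hne); linarith
    have h4 : 0 < T v + D - m := by linarith
    nlinarith [mul_pos h3 h4]
  have hdeg : ∀ j v, (m : ℤ) * d j v = D := by
    intro j v
    have h0 : ∑ j, ((m : ℤ) * d j v - T v) ^ 2 ≤ 0 := by
      rw [hvar v, ← hqeq v, hTeq v]
      nlinarith
    have h1 : ∑ j, ((m : ℤ) * d j v - T v) ^ 2 = 0 :=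
      le_antisymm h0 (Finset.sum_nonneg fun _ _ => sq_nonneg _)
    have h2 := (Finset.sum_eq_zero_iff_of_nonneg fun _ _ => sq_nonneg _).1 h1 j (Finset.mem_univ _)
    have h3 : (m : ℤ) * d j v - T v = 0 := by simpa using h2
    rw [hTeq v] at h3
    linarith
  obtain ⟨v0⟩ := ‹Nonempty V›
  let j0 : Fin m := ⟨0, hm⟩
  set e := d j0 v0 with he
  have hme : (m : ℤ) * e = D := hdeg j0 v0
  have hconst : ∀ v, d j0 v = e := fun v =>
    mul_left_cancel₀ hm0.ne' ((hdeg j0 v).trans hme.symm)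
  have hNe : N - 1 = e ^ 2 - e := by
    have h1 : (m : ℤ) * q v0 = D ^ 2 - m * D := by
      have h2 : ∑ j, ((m : ℤ) * d j v0 - T v0) ^ 2 = 0 := by
        refine Finset.sum_eq_zero fun j _ => ?_
        rw [hdeg, hTeq]; ring
      rw [hvar v0, hTeq] at h2
      rcases mul_eq_zero.1 h2 with h | h
      · exact absurd h hm0.ne'
      · linarith
    rw [← hqeq v0, ← hme] at h1
    have h3 : ((m : ℤ) ^ 2) * (N - 1) = (m : ℤ) ^ 2 * (e ^ 2 - e) := by linarith
    exact mul_left_cancel₀ (pow_ne_zero 2 hm0.ne') h3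
  have he2 : e ≤ 2 := by
    refine friendship_aux (M j0) e (hdiag j0) hconst ?_ hNe
    intro u v
    split_ifs with h
    · subst h; rw [hMdiag]; exact hconst u
    · exact hco j0 u v h
  have he1 : 1 ≤ e := by
    by_contra hlt
    have : e ≤ 0 := by omega
    nlinarith
  have hTN : D ≤ N - 1 := (hT v0).trans (hT' v0)
  have : e = 1 ∨ e = 2 := by omega
  rcases this with h | h
  · rw [h] at hNe; norm_num at hNe; omega
  · rw [h] at hNe hme
    norm_num at hNe
    refine ⟨by omega, by omega, by omega⟩

/-- Monochromatic copy of `Y` in colour `k`, inside `S`. -/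
def HasCopy {V K : Type} (c : Sym2 V → K) (k : K) (Y : VGraph) (S : Set V) : Prop :=
  ∃ f : Y.V ↪ V, (∀ u, f u ∈ S) ∧ ∀ u v, Y.G.Adj u v → c s(f u, f v) = k

lemma ramsey_iff (m n : ℕ) (X : Fin n → VGraph) (N : ℕ) :
    ramseyProp (List.replicate m C4 ++ List.ofFn X) N ↔
      ∀ c : Sym2 (Fin N) → Fin m ⊕ Fin n,
        (∃ j, HasCopy c (Sum.inl j) C4 Set.univ) ∨ ∃ i, HasCopy c (Sum.inr i) (X i) Set.univ := by
  set l := List.replicate m C4 ++ List.ofFn X with hl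
  have hlen : l.length = m + n := by simp [hl]
  let e : Fin m ⊕ Fin n ≃ Fin l.length := finSumFinEquiv.trans (finCongr hlen.symm)
  have he1 : ∀ j, l.get (e (Sum.inl j)) = C4 := by
    intro j
    simp [e, hl, List.getElem_append_left]
  have he2 : ∀ i, l.get (e (Sum.inr i)) = X i := by
    intro i
    simp [e, hl, List.getElem_append_right]
  have key : ∀ c : Sym2 (Fin N) → Fin l.length,
      (∃ (i : Fin l.length) (f : (l.get i).V ↪ Fin N),
        ∀ u v, (l.get i).G.Adj u v → c s(f u, f v) = i) ↔
      ∃ k, HasCopy c (e k) (l.get (e k)) Set.univ := by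
    intro c
    constructor
    · rintro ⟨i, f, hf⟩
      obtain ⟨k, rfl⟩ := e.surjective i
      exact ⟨k, f, fun _ => trivial, hf⟩
    · rintro ⟨k, f, -, hf⟩
      exact ⟨e k, f, hf⟩
  have key2 : ∀ (c : Sym2 (Fin N) → Fin m ⊕ Fin n) k Y,
      HasCopy (fun x => e (c x)) (e k) Y Set.univ ↔ HasCopy c k Y Set.univ := by
    intro c k Y
    simp [HasCopy]
  have key3 : ∀ (c : Sym2 (Fin N) → Fin m ⊕ Fin n),
      (∃ k, HasCopy (fun x => e (c x)) (e k) (l.get (e k)) Set.univ) ↔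
      ((∃ j, HasCopy c (Sum.inl j) C4 Set.univ) ∨
        ∃ i, HasCopy c (Sum.inr i) (X i) Set.univ) := by
    intro c
    simp only [key2, Sum.exists, he1, he2]
  constructor
  · intro h c
    exact (key3 c).1 ((key _).1 (h fun x => e (c x)))
  · intro h c
    have := (key3 fun x => e.symm (c x)).2 (h _)
    simp only [Equiv.apply_symm_apply] at this
    exact (key c).2 this

lemma ramsey_sub {m n : ℕ} {X : Fin n → VGraph} {N : ℕ}
    (h : ramseyProp (List.replicate m C4 ++ List.ofFn X) N) {V : Type}
    (c : Sym2 V → Fin m ⊕ Fin n) (S : Finset V) (hS : N ≤ S.card) :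
    (∃ j, HasCopy c (Sum.inl j) C4 S) ∨ ∃ i, HasCopy c (Sum.inr i) (X i) S := by
  obtain ⟨g⟩ : Nonempty (Fin N ↪ S) := by
    apply Function.Embedding.nonempty_of_card_le
    simpa using hS
  let g' : Fin N ↪ V := g.trans (Function.Embedding.subtype _)
  have tr : ∀ k Y, HasCopy (fun x => c (x.map g')) k Y Set.univ → HasCopy c k Y S := by
    rintro k Y ⟨f, -, hf⟩
    refine ⟨f.trans g', fun u => (g (f u)).2, fun u v huv => ?_⟩
    have := hf u v huv
    simpa using this
  rcases (ramsey_iff m n X N).1 h (fun x => c (x.map g')) with ⟨j, hj⟩ | ⟨i, hi⟩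
  · exact Or.inl ⟨j, tr _ _ hj⟩
  · exact Or.inr ⟨i, tr _ _ hi⟩

lemma HasCopy.mono {V K : Type} {c : Sym2 V → K} {k : K} {Y : VGraph} {S : Set V}
    (h : HasCopy c k Y S) : HasCopy c k Y Set.univ := by
  obtain ⟨f, -, hf⟩ := h
  exact ⟨f, fun _ => trivial, hf⟩

lemma HasCopy.delete {V K : Type} {c : Sym2 V → K} {k : K} {Y : VGraph} {S : Set V}
    (h : HasCopy c k Y S) (w : Y.V) : HasCopy c k (Y.delete w) S := by
  obtain ⟨f, hS, hf⟩ := h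
  exact ⟨(Function.Embedding.subtype _).trans f, fun u => hS _, fun u v huv => hf _ _ huv⟩

/-- Adding back the deleted vertex. -/
lemma HasCopy.extend {V K : Type} {c : Sym2 V → K} {k : K} {Y : VGraph} {w : Y.V} {x : V}
    (h : HasCopy c k (Y.delete w) {u | x ≠ u ∧ c s(x, u) = k}) : HasCopy c k Y Set.univ := by
  classical
  obtain ⟨f, hS, hf⟩ := h
  refine ⟨⟨fun y => if hy : y = w then x else f ⟨y, hy⟩, ?_⟩, fun _ => trivial, ?_⟩
  · intro a b hab
    by_cases ha : a = w <;> by_cases hb : b = w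
    · rw [ha, hb]
    · simp only [ha, hb, dite_true, dite_false] at hab
      exact absurd hab (hS _).1
    · simp only [ha, hb, dite_true, dite_false] at hab
      exact absurd hab.symm (hS _).1
    · simp only [ha, hb, dite_false] at hab
      exact congrArg Subtype.val (f.injective hab)
  · intro a b hab
    change c s((if hy : a = w then x else f ⟨a, hy⟩), (if hy : b = w then x else f ⟨b, hy⟩)) = k
    by_cases ha : a = w <;> by_cases hb : b = w
    · rw [ha, hb] at hab
      exact absurd hab (Y.G.loopless.irrefl _)
    · rw [dif_pos ha, dif_neg hb]
      exact (hS _).2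
    · rw [dif_neg ha, dif_pos hb, Sym2.eq_swap]
      exact (hS _).2
    · rw [dif_neg ha, dif_neg hb]
      exact hf _ _ hab

lemma hasCopy_C4 {V K : Type} {c : Sym2 V → K} {k : K} {u v x y : V}
    (huv : u ≠ v) (hxy : x ≠ y) (hux : u ≠ x) (huy : u ≠ y) (hvx : v ≠ x) (hvy : v ≠ y)
    (h1 : c s(u, x) = k) (h2 : c s(x, v) = k) (h3 : c s(u, y) = k) (h4 : c s(y, v) = k) :
    HasCopy c k C4 Set.univ := by
  have hinj : Function.Injective ![u, x, v, y] := by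
    intro a b hab
    fin_cases a <;> fin_cases b <;> simp_all [eq_comm]
  refine ⟨⟨![u, x, v, y], hinj⟩, fun _ => trivial, ?_⟩
  have h1' : c s(x, u) = k := by rw [Sym2.eq_swap]; exact h1
  have h2' : c s(v, x) = k := by rw [Sym2.eq_swap]; exact h2
  have h3' : c s(y, u) = k := by rw [Sym2.eq_swap]; exact h3
  have h4' : c s(v, y) = k := by rw [Sym2.eq_swap]; exact h4
  change ∀ a b : Fin 4, (SimpleGraph.cycleGraph 4).Adj a b → c s(![u, x, v, y] a, ![u, x, v, y] b) = k
  intro a b hab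
  rw [SimpleGraph.cycleGraph_adj] at hab
  fin_cases a <;> fin_cases b <;> first | assumption | (exfalso; revert hab; decide)

lemma card_color_le {m n N R : ℕ} {X : Fin n → VGraph} (i : Fin n) (w : (X i).V)
    (hR : ramseyProp (List.replicate m C4 ++
      List.ofFn (Function.update X i ((X i).delete w))) R)
    (c : Sym2 (Fin N) → Fin m ⊕ Fin n)
    (h1 : ∀ j, ¬ HasCopy c (Sum.inl j) C4 Set.univ)
    (h2 : ∀ i, ¬ HasCopy c (Sum.inr i) (X i) Set.univ) (x : Fin N) :
    (Finset.univ.filter fun u => x ≠ u ∧ c s(x, u) = Sum.inr i).card < R := by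
  by_contra hlt
  push Not at hlt
  rcases ramsey_sub hR c _ hlt with ⟨j, hj⟩ | ⟨i', hi'⟩
  · exact h1 j hj.mono
  · by_cases hii : i' = i
    · subst hii
      rw [Function.update_self] at hi'
      refine h2 i' (HasCopy.extend (w := w) (x := x) ?_)
      simpa using hi'
    · rw [Function.update_of_ne hii] at hi'
      exact h2 i' hi'.mono

/-- Adjacency matrix (off-diagonal) of colour `k`. -/
def colMat {N : ℕ} {K : Type} [DecidableEq K] (c : Sym2 (Fin N) → K) (k : K) :
    Matrix (Fin N) (Fin N) ℤ :=
  Matrix.of fun u v => if u ≠ v ∧ c s(u, v) = k then 1 else 0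

lemma colMat_codeg {N : ℕ} {K : Type} [DecidableEq K] (c : Sym2 (Fin N) → K) (k : K)
    (h : ¬ HasCopy c k C4 Set.univ) (u v : Fin N) (huv : u ≠ v) :
    (colMat c k * colMat c k) u v ≤ 1 := by
  have h1 : (colMat c k * colMat c k) u v =
      ((Finset.univ.filter fun x =>
        (u ≠ x ∧ c s(u, x) = k) ∧ (x ≠ v ∧ c s(x, v) = k)).card : ℤ) := by
    simp only [Matrix.mul_apply, colMat, Matrix.of_apply, Finset.card_filter, Nat.cast_sum]
    refine Finset.sum_congr rfl fun x _ => ?_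
    by_cases ha : u ≠ x ∧ c s(u, x) = k <;> by_cases hb : x ≠ v ∧ c s(x, v) = k <;>
      simp [ha, hb]
  rw [h1]
  norm_cast
  rw [Finset.card_le_one]
  intro x hx y hy
  simp only [Finset.mem_filter, Finset.mem_univ, true_and] at hx hy
  by_contra hxy
  exact h (hasCopy_C4 huv hxy hx.1.1 hy.1.1 (Ne.symm hx.2.1) (Ne.symm hy.2.1) hx.1.2 hx.2.2 hy.1.2 hy.2.2)

lemma colMat_total {N m n : ℕ} (c : Sym2 (Fin N) → Fin m ⊕ Fin n) (v : Fin N) :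
    (∑ j, ∑ u, colMat c (Sum.inl j) v u) + ∑ i, ∑ u, colMat c (Sum.inr i) v u = (N : ℤ) - 1 := by
  rw [← Fintype.sum_sum_type (fun k => ∑ u, colMat c k v u), Finset.sum_comm]
  have h1 : ∀ u, ∑ k, colMat c k v u = 1 - (if v = u then (1 : ℤ) else 0) := by
    intro u
    by_cases h : v = u
    · simp [colMat, h]
    · simp [colMat, h]
  simp only [h1, Finset.sum_sub_distrib]
  simp

/-- Small graphs are contained in everything large enough. -/
lemma hasCopy_of_no_edge {N : ℕ} {K : Type} (c : Sym2 (Fin N) → K) (k : K) (Y : VGraph)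
    [Fintype Y.V] (hc : Fintype.card Y.V ≤ N) (h : ∀ a b, ¬ Y.G.Adj a b) :
    HasCopy c k Y Set.univ := by
  obtain ⟨f⟩ : Nonempty (Y.V ↪ Fin N) := by
    apply Function.Embedding.nonempty_of_card_le
    simpa using hc
  exact ⟨f, fun _ => trivial, fun a b hab => absurd hab (h a b)⟩

lemma iso_of_small {Y : VGraph} [Fintype Y.V] (h2 : Fintype.card Y.V ≤ 2)
    (h : ∃ a b, Y.G.Adj a b) : Nonempty (Y.G ≃g (⊤ : SimpleGraph (Fin 2))) := by
  classical
  obtain ⟨a, b, hab⟩ := h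
  have hne : a ≠ b := hab.ne
  have hall : ∀ x, x = a ∨ x = b := by
    intro x
    by_contra hx
    push Not at hx
    have h3 : ({x, a, b} : Finset Y.V).card = 3 := by
      rw [Finset.card_eq_three]
      exact ⟨x, a, b, hx.1, hx.2, hne, rfl⟩
    have := Finset.card_le_univ ({x, a, b} : Finset Y.V)
    omega
  have hcard : Fintype.card Y.V = 2 := by
    have h3 : ({a, b} : Finset Y.V).card = 2 := Finset.card_pair hne
    have := Finset.card_le_univ ({a, b} : Finset Y.V)
    omega
  let e := Fintype.equivFinOfCardEq hcard
  refine ⟨⟨e, ?_⟩⟩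
  intro x y
  simp only [SimpleGraph.top_adj, ne_eq, EmbeddingLike.apply_eq_iff_eq]
  constructor
  · intro hxy
    rcases hall x with rfl | rfl <;> rcases hall y with rfl | rfl
    · exact absurd rfl hxy
    · exact hab
    · exact hab.symm
    · exact absurd rfl hxy
  · exact fun hxy => hxy.ne

/-- Main theorem: upper bound on `R(C₄,…,C₄ (m copies), G₁,…,Gₙ)`. -/
theorem statement0 (m n : ℕ) (hm : 1 ≤ m) (X : Fin n → VGraph)
    [∀ i, Fintype (X i).V] (w : ∀ i, (X i).V) (r : Fin n → ℤ)
    (hr : ∀ i, (ramseyNumber (List.replicate m C4 ++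
        List.ofFn (Function.update X i ((X i).delete (w i)))) : ℤ) ≤ r i)
    (hmax : ∀ i, Fintype.card (X i).V <
        ramseyNumber (List.replicate m C4 ++ List.ofFn X))
    (hK2 : m = 1 → ∃ i, ¬ Nonempty ((X i).G ≃g (⊤ : SimpleGraph (Fin 2)))) :
    ((ramseyNumber (List.replicate m C4 ++ List.ofFn X) : ℝ)) ≤
      (∑ i, (r i : ℝ)) - n + 1 + ((m : ℝ) ^ 2 + m) / 2 +
      (⌈(m : ℝ) * Real.sqrt (((m : ℝ) + 1) ^ 2 / 4 + (∑ i, (r i : ℝ)) - n)⌉ : ℝ) := by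
  by_contra hcon
  push Not at hcon
  set R := ramseyNumber (List.replicate m C4 ++ List.ofFn X) with hRdef
  -- sub-Ramsey numbers are genuine
  have hsub : ∀ i, 0 < ramseyNumber (List.replicate m C4 ++
      List.ofFn (Function.update X i ((X i).delete (w i)))) ∧
      ramseyProp (List.replicate m C4 ++
      List.ofFn (Function.update X i ((X i).delete (w i))))
      (ramseyNumber (List.replicate m C4 ++
      List.ofFn (Function.update X i ((X i).delete (w i))))) := by
    intro i
    have hpos : 0 < R := lt_of_le_of_lt (Nat.zero_le _) (hmax i)
    have hmem : 0 < R ∧ ramseyProp (List.replicate m C4 ++ List.ofFn X) R :=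
      Nat.sInf_mem (Nat.nonempty_of_pos_sInf hpos)
    have hne : {N | 0 < N ∧ ramseyProp (List.replicate m C4 ++
        List.ofFn (Function.update X i ((X i).delete (w i)))) N}.Nonempty := by
      refine ⟨R, hpos, (ramsey_iff _ _ _ _).2 fun c => ?_⟩
      rcases (ramsey_iff _ _ _ _).1 hmem.2 c with h | ⟨i', hi'⟩
      · exact Or.inl h
      · refine Or.inr ⟨i', ?_⟩
        by_cases hii : i' = i
        · subst hii
          rw [Function.update_self]
          exact hi'.delete _
        · rw [Function.update_of_ne hii]
          exact hi'
    exact Nat.sInf_mem hne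
  have hr1 : ∀ i, 1 ≤ r i := by
    intro i
    have h1 := (hsub i).1
    have h2 := hr i
    omega
  set s : ℤ := ∑ i, (r i - 1) with hs
  have hs0 : 0 ≤ s := Finset.sum_nonneg fun i _ => by linarith [hr1 i]
  have hsR : (∑ i, (r i : ℝ)) - n = (s : ℝ) := by
    simp [hs]
  rw [add_sub_assoc, hsR] at hcon
  set x : ℝ := (m : ℝ) * Real.sqrt (((m : ℝ) + 1) ^ 2 / 4 + (s : ℝ)) with hx
  have hs0' : (0 : ℝ) ≤ s := by exact_mod_cast hs0
  have hx0 : 0 ≤ x := by positivity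
  have hx2 : x ^ 2 = (m : ℝ) ^ 2 * (((m : ℝ) + 1) ^ 2 / 4 + (s : ℝ)) := by
    rw [hx, mul_pow, Real.sq_sqrt (by positivity)]
  obtain ⟨k, hk⟩ : ∃ k : ℤ, (m : ℤ) ^ 2 + m = 2 * k := by
    obtain ⟨k, hk⟩ := Int.even_mul_succ_self (m : ℤ)
    exact ⟨k, by linarith⟩
  have hkR : ((m : ℝ) ^ 2 + m) / 2 = (k : ℝ) := by
    have : ((m : ℝ) ^ 2 + m) = 2 * (k : ℝ) := by exact_mod_cast hk
    rw [this]; ring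
  rw [hkR] at hcon
  have hconZ : s + 1 + k + ⌈x⌉ < (R : ℤ) := by exact_mod_cast hcon
  have hceil0 : 0 ≤ ⌈x⌉ := Int.ceil_nonneg hx0
  have hmZ : (1 : ℤ) ≤ m := by exact_mod_cast hm
  have hkm : (m : ℤ) ≤ k := by nlinarith
  obtain ⟨N, hN⟩ : ∃ N, R = N + 1 := ⟨R - 1, by omega⟩
  have hN2 : 2 ≤ N := by omega
  set D : ℤ := (N : ℤ) - 1 - s with hD
  have hDk : k + ⌈x⌉ ≤ D := by rw [hN] at hconZ; push_cast at hconZ; linarith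
  have hDR : (k : ℝ) + x ≤ D := by
    have h1 : ((k + ⌈x⌉ : ℤ) : ℝ) ≤ (D : ℝ) := by exact_mod_cast hDk
    push_cast at h1
    linarith [Int.le_ceil x]
  have hDineq : (m : ℤ) ^ 2 * ((N : ℤ) - 1) ≤ D ^ 2 - m * D := by
    have h1 : x ^ 2 ≤ ((D : ℝ) - k) ^ 2 := by
      apply pow_le_pow_left₀ hx0; linarith
    rw [hx2, ← hkR] at h1
    have h2 : (m : ℝ) ^ 2 * ((D : ℝ) + s) ≤ (D : ℝ) ^ 2 - m * D := by nlinarith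
    have h3 : (m : ℤ) ^ 2 * (D + s) ≤ D ^ 2 - m * D := by exact_mod_cast h2
    have h4 : (N : ℤ) - 1 = D + s := by rw [hD]; ring
    rw [h4]; exact h3
  -- extremal colouring
  have hnot : ¬ ramseyProp (List.replicate m C4 ++ List.ofFn X) N := by
    intro h
    have : R ≤ N := Nat.sInf_le ⟨by omega, h⟩
    omega
  rw [ramsey_iff] at hnot
  push Not at hnot
  obtain ⟨c, hc1, hc2⟩ := hnot
  have hdeg : ∀ i v, ∑ u, colMat c (Sum.inr i) v u ≤ r i - 1 := by
    intro i v
    have h1 := card_color_le i (w i) (hsub i).2 c hc1 hc2 v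
    have h2 : ∑ u, colMat c (Sum.inr i) v u
        = ((Finset.univ.filter fun u => v ≠ u ∧ c s(v, u) = Sum.inr i).card : ℤ) := by
      simp [colMat]
    have h3 := hr i
    rw [h2]
    omega
  have hnonneg : ∀ i v, 0 ≤ ∑ u, colMat c (Sum.inr i) v u := by
    intro i v
    refine Finset.sum_nonneg fun u _ => ?_
    simp only [colMat, Matrix.of_apply]
    split_ifs <;> norm_num
  have : Nonempty (Fin N) := ⟨⟨0, by omega⟩⟩
  obtain ⟨hm1, hD2, hN3⟩ := counting_core m hm (fun j => colMat c (Sum.inl j))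
    (fun j v => by simp [colMat])
    (fun j u v => by simp [colMat])
    (fun j u v => by simp only [colMat, Matrix.of_apply]; rw [Sym2.eq_swap]; simp only [ne_comm])
    (fun j u v huv => colMat_codeg c _ (hc1 j) u v huv)
    D (by linarith) (by simpa using hDineq)
    (fun v => by
      have h1 := colMat_total c v
      have h2 : ∑ i, ∑ u, colMat c (Sum.inr i) v u ≤ s := Finset.sum_le_sum fun i _ => hdeg i v
      linarith)
    (fun v => by
      have h1 := colMat_total c v
      have h2 : 0 ≤ ∑ i, ∑ u, colMat c (Sum.inr i) v u := Finset.sum_nonneg fun i _ => hnonneg i v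
      simp only [Fintype.card_fin]
      linarith)
  rw [Fintype.card_fin] at hN3
  have hs00 : s = 0 := by omega
  obtain ⟨i, hi⟩ := hK2 hm1
  apply hi
  have hri : r i = 1 := by
    have h1 : r i - 1 ≤ s := Finset.single_le_sum (f := fun i => r i - 1)
      (fun i _ => by linarith [hr1 i]) (Finset.mem_univ i)
    linarith [hr1 i]
  have hRi : ramseyNumber (List.replicate m C4 ++
      List.ofFn (Function.update X i ((X i).delete (w i)))) = 1 := by
    have h1 := (hsub i).1
    have h2 := hr i
    omega
  have hprop := (hsub i).2
  rw [hRi, ramsey_iff] at hprop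
  have hcardN : ∀ i, Fintype.card (X i).V ≤ N := fun i => by have := hmax i; omega
  rcases hprop (fun _ => Sum.inr i) with ⟨j, f, -, -⟩ | ⟨i', hi'⟩
  · have h1 : f (0 : Fin 4) = f (1 : Fin 4) := Subsingleton.elim _ _
    exact absurd (f.injective h1) (show ¬ (0 : Fin 4) = 1 by decide)
  · by_cases hii : i' = i
    · subst hii
      rw [Function.update_self] at hi'
      obtain ⟨f, -, -⟩ := hi'
      refine iso_of_small ?_ ?_
      · by_contra hlt
        push Not at hlt
        obtain ⟨a, b, d, hab, had, hbd⟩ := Fintype.two_lt_card_iff.1 hlt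
        have hsubs : ∀ a b : (X i').V, a ≠ w i' → b ≠ w i' → a = b := by
          intro a b ha hb
          have h1 : f (⟨a, ha⟩ : {v : (X i').V // v ≠ w i'})
              = f (⟨b, hb⟩ : {v : (X i').V // v ≠ w i'}) := Subsingleton.elim _ _
          exact congrArg Subtype.val (f.injective h1)
        by_cases ha : a = w i'
        · exact hbd (hsubs b d (fun h => hab (ha.trans h.symm)) (fun h => had (ha.trans h.symm)))
        · by_cases hb : b = w i'
          · exact had (hsubs a d ha (fun h => hbd (hb.trans h.symm)))
          · exact hab (hsubs a b ha hb)
      · by_contra hno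
        push Not at hno
        exact hc2 i' (hasCopy_of_no_edge c _ _ (hcardN i') hno)
    · rw [Function.update_of_ne hii] at hi'
      obtain ⟨f, -, -⟩ := hi'
      exact absurd (hasCopy_of_no_edge c _ _ (hcardN i') fun a b hab =>
        hab.ne (f.injective (Subsingleton.elim _ _))) (hc2 i')
end

section
/- Let m ≥ 1 and n ≥ 0, and let G_1, …, G_n be graphs. For each i with 1 ≤ i ≤ n, let G'_i = G_i − w_i for some vertex w_i of G_i, and let r_1, …, r_n be integers such that r_i ≥ R(C_4, …, C_4, G_1, …, G_{i−1}, G'_i, G_{i+1}, …, G_n) (with m copies of C_4). Assume that R(C_4, …, C_4, G_1, …, G_n) (with m copies of C_4) > max_{1 ≤ i ≤ n} |V(G_i)|, and assume moreover that if m = 1 then G_i ≠ K_2 for some i ∈ {1, …, n}. Then R(P_3, C_4, …, C_4, G_1, …, G_n) (with m−1 copies of C_4) ≤ (Σ_{i=1}^n r_i) − n + (m² + m)/2 + ⌈ m · √( (m+1)²/4 + (Σ_{i=1}^n r_i) − n ) ⌉. -/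
open SimpleGraph

/-- A copy of `Y` in color `i`. -/
def Mono {V ι : Type} (Y : VGraph) (c : Sym2 V → ι) (i : ι) : Prop :=
  ∃ f : Y.V ↪ V, ∀ u v, Y.G.Adj u v → c s(f u, f v) = i

/-- The color degree. -/
noncomputable def cdeg {N : ℕ} {ι : Type} (c : Sym2 (Fin N) → ι) (i : ι) (v : Fin N) : ℕ :=
  by classical exact (Finset.univ.filter (fun u => u ≠ v ∧ c s(v, u) = i)).card

lemma ramseyProp_iff {ι : Type} (l : List VGraph) (Y : ι → VGraph) (e : ι ≃ Fin l.length)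
    (h : ∀ i, l.get (e i) = Y i) (N : ℕ) :
    ramseyProp l N ↔ ∀ c : Sym2 (Fin N) → ι, ∃ i, Mono (Y i) c i := by
  constructor
  · intro H c
    obtain ⟨i, hi⟩ := H (fun x => e (c x))
    obtain ⟨j, rfl⟩ := e.surjective i
    refine ⟨j, ?_⟩
    rw [← h]
    obtain ⟨f, hf⟩ := hi
    exact ⟨f, fun u v huv => e.injective (hf u v huv)⟩
  · intro H c
    obtain ⟨j, hj⟩ := H (fun x => e.symm (c x))
    rw [← h] at hj
    obtain ⟨f, hf⟩ := hj
    exact ⟨e j, f, fun u v huv => by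
      exact (Equiv.symm_apply_eq e).1 (hf u v huv)⟩

lemma ramseyProp_app {M n : ℕ} (l : List VGraph) (A : Fin M → VGraph) (X : Fin n → VGraph)
    (hl : l = List.ofFn A ++ List.ofFn X) (N : ℕ) :
    ramseyProp l N ↔ ∀ c : Sym2 (Fin N) → Fin M ⊕ Fin n, ∃ i, Mono (Sum.elim A X i) c i := by
  subst hl
  rw [← List.ofFn_fin_append]
  refine ramseyProp_iff _ _ (finSumFinEquiv.trans (finCongr (by simp))) ?_ N
  rintro (i | i) <;> simp

lemma rep_eq (m : ℕ) : List.replicate m C4 = List.ofFn (fun _ : Fin m => C4) := by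
  simp

lemma mono_P3_of_C4 {V ι : Type} (c : Sym2 V → ι) (i : ι) (h : Mono C4 c i) : Mono P3 c i := by
  obtain ⟨f, hf⟩ := h
  refine ⟨⟨fun x : Fin 3 => f (Fin.castSucc x : Fin 4), fun a b hab => ?_⟩, ?_⟩
  · exact Fin.castSucc_injective _ (f.injective hab)
  · intro u v huv
    apply hf
    change Fin 3 at u v
    change (pathGraph 3).Adj u v at huv
    change (cycleGraph 4).Adj _ _
    revert huv
    rw [pathGraph_adj]
    fin_cases u <;> fin_cases v <;> simp [cycleGraph_adj]

lemma mono_P3_mk {V ι : Type} (c : Sym2 V → ι) (i : ι) (v a b : V) (hav : a ≠ v) (hbv : b ≠ v)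
    (hab : a ≠ b) (ha : c s(v, a) = i) (hb : c s(v, b) = i) : Mono P3 c i := by
  refine ⟨⟨fun x : Fin 3 => ![a, v, b] x, fun x y hxy => ?_⟩, ?_⟩
  · change Fin 3 at x y
    have := hav.symm
    have := hbv.symm
    have := hab.symm
    fin_cases x <;> fin_cases y <;> first | rfl | (exfalso; simp_all)
  · intro x y hxy
    change Fin 3 at x y
    change (pathGraph 3).Adj x y at hxy
    have ha' : c s(a, v) = i := by rw [Sym2.eq_swap]; exact ha
    have hb' : c s(b, v) = i := by rw [Sym2.eq_swap]; exact hb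
    revert hxy
    rw [pathGraph_adj]
    fin_cases x <;> fin_cases y <;>
      first | (intro _; assumption) | (intro hxy; exfalso; simp at hxy)

lemma mono_C4_mk {V ι : Type} (c : Sym2 V → ι) (i : ι) (v a w b : V) (hav : a ≠ v) (hbv : b ≠ v)
    (hab : a ≠ b) (haw : a ≠ w) (hbw : b ≠ w) (hvw : v ≠ w) (ha : c s(v, a) = i)
    (hb : c s(v, b) = i) (hwa : c s(w, a) = i) (hwb : c s(w, b) = i) : Mono C4 c i := by
  refine ⟨⟨fun x : Fin 4 => ![v, a, w, b] x, fun x y hxy => ?_⟩, ?_⟩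
  · change Fin 4 at x y
    have := hav.symm
    have := hbv.symm
    have := hab.symm
    have := haw.symm
    have := hbw.symm
    have := hvw.symm
    fin_cases x <;> fin_cases y <;> first | rfl | (exfalso; simp_all)
  · intro x y hxy
    change Fin 4 at x y
    change (cycleGraph 4).Adj x y at hxy
    have ha' : c s(a, v) = i := by rw [Sym2.eq_swap]; exact ha
    have hb' : c s(b, v) = i := by rw [Sym2.eq_swap]; exact hb
    have hwa' : c s(a, w) = i := by rw [Sym2.eq_swap]; exact hwa
    have hwb' : c s(b, w) = i := by rw [Sym2.eq_swap]; exact hwb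
    fin_cases x <;> fin_cases y <;> first | (exfalso; revert hxy; decide) | assumption

lemma sum_cdeg {N : ℕ} {ι : Type} [Fintype ι] (c : Sym2 (Fin N) → ι) (v : Fin N) :
    ∑ i, cdeg c i v = N - 1 := by
  classical
  unfold cdeg
  have := Finset.card_eq_sum_card_fiberwise (f := fun u => c s(v, u))
    (s := Finset.univ.filter (fun u => u ≠ v)) (t := Finset.univ) (by simp)
  rw [Finset.filter_ne', Finset.card_erase_of_mem (Finset.mem_univ _), Finset.card_univ,
    Fintype.card_fin] at this
  rw [this]
  refine Finset.sum_congr rfl fun i _ => ?_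
  congr 1
  ext u
  simp

lemma cdeg_P3 {N : ℕ} {ι : Type} (c : Sym2 (Fin N) → ι) (i : ι) (h : ¬ Mono P3 c i) (v : Fin N) :
    cdeg c i v ≤ 1 := by
  classical
  unfold cdeg
  rw [Finset.card_le_one]
  intro a ha b hb
  simp only [Finset.mem_filter, Finset.mem_univ, true_and] at ha hb
  by_contra hab
  exact h (mono_P3_mk c i v a b ha.1 hb.1 hab ha.2 hb.2)

lemma cdeg_C4 {N : ℕ} {ι : Type} (c : Sym2 (Fin N) → ι) (i : ι) (h : ¬ Mono C4 c i) :
    ∑ v, (cdeg c i v * cdeg c i v - cdeg c i v) ≤ N * N - N := by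
  classical
  unfold cdeg
  have key : ∀ v : Fin N, ∀ S : Finset (Fin N), S.card * S.card - S.card = S.offDiag.card :=
    fun v S => (Finset.offDiag_card S).symm
  have : ∑ v : Fin N, (Finset.univ.filter (fun u => u ≠ v ∧ c s(v, u) = i)).offDiag.card
      ≤ (Finset.univ : Finset (Fin N)).offDiag.card := by
    rw [← Finset.card_biUnion]
    · apply Finset.card_le_card
      intro p hp
      simp only [Finset.mem_biUnion, Finset.mem_offDiag, Finset.mem_univ, true_and] at hp ⊢
      obtain ⟨v, hv⟩ := hp
      exact hv.2.2
    · intro v _ w _ hvw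
      change Disjoint _ _
      rw [Finset.disjoint_left]
      rintro ⟨a, b⟩ h1 h2
      simp only [Finset.mem_offDiag, Finset.mem_filter, Finset.mem_univ, true_and] at h1 h2
      obtain ⟨⟨a1, a2⟩, ⟨b1, b2⟩, hab⟩ := h1
      obtain ⟨⟨a3, a4⟩, ⟨b3, b4⟩, -⟩ := h2
      exact h (mono_C4_mk c i v a w b a1 b1 hab a3 b3 hvw a2 b2 a4 b4)
  rw [Finset.offDiag_card, Finset.card_univ, Fintype.card_fin] at this
  refine le_trans (le_of_eq ?_) this
  exact Finset.sum_congr rfl fun v _ => key v _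

lemma cdeg_C4' {N : ℕ} {ι : Type} (c : Sym2 (Fin N) → ι) (i : ι) (h : ¬ Mono C4 c i) :
    ∑ v, ((cdeg c i v : ℤ) ^ 2 - cdeg c i v) ≤ (N : ℤ) * (N - 1) := by
  have h1 := cdeg_C4 c i h
  have e : ∀ k : ℕ, ((k * k - k : ℕ) : ℤ) = (k : ℤ) ^ 2 - k := fun k => by
    rw [Nat.cast_sub (Nat.le_mul_self k)]; push_cast; ring
  have h2 : ((∑ v, (cdeg c i v * cdeg c i v - cdeg c i v) : ℕ) : ℤ) ≤ ((N * N - N : ℕ) : ℤ) := by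
    exact_mod_cast h1
  rw [Nat.cast_sum, e] at h2
  simp only [e] at h2
  linarith [h2]

lemma main_count (M n N : ℕ) (S : ℤ) (c : Sym2 (Fin N) → Fin (M + 1) ⊕ Fin n)
    (h0 : ¬ Mono P3 c (Sum.inl 0)) (hC : ∀ j : Fin M, ¬ Mono C4 c (Sum.inl j.succ))
    (hdeg : ∀ v, ∑ i, (cdeg c (Sum.inr i) v : ℤ) ≤ S) (hN : 0 < N)
    (hy : (M : ℤ) + 2 ≤ N - S) :
    ((M : ℤ) = 0 → (N : ℤ) - S ≤ 2) ∧
      ((N : ℤ) - S - 2) * (N - S - 2 - M) ≤ M ^ 2 * (N - 1) := by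
  have hD : ∀ v, (N : ℤ) - S - 2 ≤ ∑ j : Fin M, (cdeg c (Sum.inl j.succ) v : ℤ) := by
    intro v
    have h1 : ((∑ i, cdeg c i v : ℕ) : ℤ) = ((N - 1 : ℕ) : ℤ) := by rw [sum_cdeg]
    rw [Fintype.sum_sum_type, Fin.sum_univ_succ] at h1
    push_cast [Nat.cast_sub (Nat.succ_le_of_lt hN)] at h1
    have h2 : (cdeg c (Sum.inl 0) v : ℤ) ≤ 1 := by exact_mod_cast cdeg_P3 c _ h0 v
    linarith [hdeg v]
  constructor
  · intro hM
    have hM : M = 0 := by exact_mod_cast hM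
    subst hM
    have := hD ⟨0, hN⟩
    simp at this
    linarith
  · have hv : ∀ v, ((N : ℤ) - S - 2) * (N - S - 2 - M) ≤
        M * ∑ j : Fin M, ((cdeg c (Sum.inl j.succ) v : ℤ) ^ 2 - cdeg c (Sum.inl j.succ) v) := by
      intro v
      have cs := sq_sum_le_card_mul_sum_sq (s := (Finset.univ : Finset (Fin M)))
        (f := fun j => (cdeg c (Sum.inl j.succ) v : ℤ))
      rw [Finset.card_univ, Fintype.card_fin] at cs
      rw [Finset.sum_sub_distrib]
      have hDv := hD v
      generalize ∑ j : Fin M, (cdeg c (Sum.inl j.succ) v : ℤ) = D at *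
      nlinarith [mul_nonneg (sub_nonneg.2 hDv) (by linarith : (0 : ℤ) ≤ D + (N - S - 2) - M)]
    have h1 := Finset.sum_le_sum (fun v (_ : v ∈ (Finset.univ : Finset (Fin N))) => hv v)
    rw [Finset.sum_const, Finset.card_univ, Fintype.card_fin, nsmul_eq_mul,
      ← Finset.mul_sum, Finset.sum_comm] at h1
    have h2 := Finset.sum_le_sum (fun j (_ : j ∈ (Finset.univ : Finset (Fin M))) =>
      cdeg_C4' c _ (hC j))
    rw [Finset.sum_const, Finset.card_univ, Fintype.card_fin, nsmul_eq_mul] at h2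
    have h3 := mul_le_mul_of_nonneg_left h2 (Int.natCast_nonneg M)
    have hN' : (0 : ℤ) < N := by exact_mod_cast hN
    refine le_of_mul_le_mul_left ?_ hN'
    calc _ ≤ _ := h1.trans h3
      _ = _ := by ring

lemma mono_of_comp {V W ι : Type} (Y : VGraph) (c : Sym2 V → ι) (i : ι) (g : W ↪ V)
    (h : Mono Y (fun x => c (Sym2.map g x)) i) : Mono Y c i := by
  obtain ⟨f, hf⟩ := h
  exact ⟨f.trans g, fun u v huv => by simpa using hf u v huv⟩

/-- degree bound in the color of `X i` -/
lemma cdeg_X {N R : ℕ} {ι : Type} (Y : VGraph) (w : Y.V) (c : Sym2 (Fin N) → ι) (i : ι)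
    (hY : ¬ Mono Y c i)
    (hR : ∀ c' : Sym2 (Fin R) → ι, (∃ g : Fin R ↪ Fin N, c' = fun x => c (Sym2.map g x)) →
      Mono (Y.delete w) c' i) (v : Fin N) : cdeg c i v < R := by
  classical
  by_contra hlt
  rw [not_lt] at hlt
  unfold cdeg at hlt
  set S := Finset.univ.filter (fun u => u ≠ v ∧ c s(v, u) = i) with hS
  obtain ⟨T, hTS, hT⟩ := Finset.exists_subset_card_eq hlt
  let g : Fin R ↪ Fin N := (T.orderEmbOfFin hT).toEmbedding
  have hg : ∀ x, g x ≠ v ∧ c s(v, g x) = i := by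
    intro x
    have : g x ∈ S := hTS (Finset.orderEmbOfFin_mem T hT x)
    simpa [hS] using this
  obtain ⟨f, hf⟩ := hR _ ⟨g, rfl⟩
  change {x : Y.V // x ≠ w} ↪ Fin R at f
  apply hY
  obtain ⟨F, hFw, hFn⟩ : ∃ F : Y.V → Fin N, F w = v ∧ ∀ x (h : x ≠ w), F x = g (f ⟨x, h⟩) :=
    ⟨fun x => if h : x = w then v else g (f ⟨x, h⟩), by simp, fun x h => by simp [h]⟩
  refine ⟨⟨F, ?_⟩, ?_⟩
  · intro a b hab
    by_cases ha : a = w <;> by_cases hb : b = w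
    · rw [ha, hb]
    · rw [ha, hFw, hFn b hb] at hab
      exact absurd hab.symm (hg _).1
    · rw [hb, hFw, hFn a ha] at hab
      exact absurd hab (hg _).1
    · rw [hFn a ha, hFn b hb] at hab
      simpa using f.injective (g.injective hab)
  · intro a b hab
    change c s(F a, F b) = i
    by_cases ha : a = w <;> by_cases hb : b = w
    · subst ha; subst hb; exact absurd hab (Y.G.loopless.irrefl _)
    · rw [ha, hFw, hFn b hb]
      exact (hg _).2
    · rw [hb, hFw, hFn a ha, Sym2.eq_swap]
      exact (hg _).2
    · rw [hFn a ha, hFn b hb]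
      exact hf ⟨a, ha⟩ ⟨b, hb⟩ hab

lemma mono_delete {V ι : Type} (Y : VGraph) (w : Y.V) (c : Sym2 V → ι) (i : ι)
    (h : Mono Y c i) : Mono (Y.delete w) c i := by
  obtain ⟨f, hf⟩ := h
  exact ⟨⟨fun x : {x : Y.V // x ≠ w} => f x.1, fun a b hab => Subtype.ext (f.injective hab)⟩,
    fun u v huv => hf _ _ huv⟩

lemma ramseyNumber_spec (l : List VGraph) (N : ℕ) (hN : 0 < N) (h : ramseyProp l N) :
    0 < ramseyNumber l ∧ ramseyProp l (ramseyNumber l) :=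
  Nat.sInf_mem (s := {N | 0 < N ∧ ramseyProp l N}) ⟨N, hN, h⟩

lemma ramseyNumber_pos_spec (l : List VGraph) (h : 0 < ramseyNumber l) :
    ramseyProp l (ramseyNumber l) := by
  have := Nat.nonempty_of_pos_sInf h
  exact (Nat.sInf_mem this).2

/-- two vertices and an edge give `K₂` -/
lemma iso_K2 (Y : VGraph) [Fintype Y.V] (hc : Fintype.card Y.V ≤ 2) (u v : Y.V)
    (huv : Y.G.Adj u v) : Nonempty (Y.G ≃g (⊤ : SimpleGraph (Fin 2))) := by
  classical
  have h2 : Fintype.card Y.V = 2 := by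
    have := Fintype.one_lt_card_iff.2 ⟨u, v, huv.ne⟩
    omega
  have hu : ∀ x, x = u ∨ x = v := by
    intro x
    by_contra hx
    push Not at hx
    have := Finset.card_le_univ ({x, u, v} : Finset Y.V)
    rw [Finset.card_eq_three.2 ⟨x, u, v, hx.1, hx.2, huv.ne, rfl⟩] at this
    omega
  have e : Y.V ≃ Fin 2 := Fintype.equivFinOfCardEq h2
  refine ⟨⟨e, ?_⟩⟩
  intro a b
  simp only [top_adj, ne_eq, EmbeddingLike.apply_eq_iff_eq]
  constructor
  · intro hab
    rcases hu a with rfl | rfl <;> rcases hu b with rfl | rfl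
    · exact absurd rfl hab
    · exact huv
    · exact huv.symm
    · exact absurd rfl hab
  · exact fun h => h.ne

/-- Upper bound on `R(P₃, C₄,…,C₄ (m−1 copies), G₁,…,Gₙ)` in terms of bounds
`rᵢ` for the Ramsey numbers `R(C₄,…,C₄ (m copies), G₁,…,G'ᵢ,…,Gₙ)`. -/
theorem statement2 (m n : ℕ) (hm : 1 ≤ m) (X : Fin n → VGraph)
    [∀ i, Fintype (X i).V] (w : ∀ i, (X i).V) (r : Fin n → ℤ)
    (hr : ∀ i, (ramseyNumber (List.replicate m C4 ++
        List.ofFn (Function.update X i ((X i).delete (w i)))) : ℤ) ≤ r i)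
    (hmax : ∀ i, Fintype.card (X i).V <
        ramseyNumber (List.replicate m C4 ++ List.ofFn X))
    (hK2 : m = 1 → ∃ i, ¬ Nonempty ((X i).G ≃g (⊤ : SimpleGraph (Fin 2)))) :
    ((ramseyNumber (P3 :: (List.replicate (m - 1) C4 ++ List.ofFn X)) : ℝ)) ≤
      (∑ i, (r i : ℝ)) - n + ((m : ℝ) ^ 2 + m) / 2 +
      (⌈(m : ℝ) * Real.sqrt (((m : ℝ) + 1) ^ 2 / 4 + (∑ i, (r i : ℝ)) - n)⌉ : ℝ) := by
  classical
  obtain ⟨M, rfl⟩ : ∃ M, m = M + 1 := ⟨m - 1, by omega⟩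
  have rpX : ∀ (Z : Fin n → VGraph) (N : ℕ),
      ramseyProp (List.replicate (M + 1) C4 ++ List.ofFn Z) N ↔ _ :=
    fun Z N => ramseyProp_app _ (fun _ : Fin (M + 1) => C4) Z (by rw [rep_eq]) N
  have rpP : ∀ N, ramseyProp (P3 :: (List.replicate (M + 1 - 1) C4 ++ List.ofFn X)) N ↔ _ :=
    fun N => ramseyProp_app _ (Fin.cons P3 (fun _ : Fin M => C4)) X
      (by simp [List.ofFn_succ]) N
  -- every `X i` has an edge
  have hedge : ∀ i, ∃ u v, (X i).G.Adj u v := by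
    intro i
    by_contra hno
    push Not at hno
    have hpos : 0 < Fintype.card (X i).V := Fintype.card_pos_iff.2 ⟨w i⟩
    have : ramseyNumber (List.replicate (M + 1) C4 ++ List.ofFn X) ≤ Fintype.card (X i).V := by
      refine Nat.sInf_le ⟨hpos, ?_⟩
      rw [rpX]
      intro c
      exact ⟨Sum.inr i, (Fintype.equivFin (X i).V).toEmbedding,
        fun u v huv => absurd huv (hno u v)⟩
    have := hmax i
    omega
  let R : Fin n → ℕ := fun i => ramseyNumber (List.replicate (M + 1) C4 ++
        List.ofFn (Function.update X i ((X i).delete (w i))))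
  have hR : ∀ i, 0 < R i ∧ ramseyProp (List.replicate (M + 1) C4 ++
        List.ofFn (Function.update X i ((X i).delete (w i)))) (R i) := by
    intro i
    have hpos : 0 < ramseyNumber (List.replicate (M + 1) C4 ++ List.ofFn X) :=
      lt_of_le_of_lt (Nat.zero_le _) (hmax i)
    refine ramseyNumber_spec _ _ hpos ?_
    have h1 := ramseyNumber_pos_spec _ hpos
    rw [rpX] at h1 ⊢
    intro c
    obtain ⟨j, hj⟩ := h1 c
    refine ⟨j, ?_⟩
    rcases j with j | j
    · exact hj
    · simp only [Sum.elim_inr] at hj ⊢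
      by_cases hji : j = i
      · subst hji
        rw [Function.update_self]
        exact mono_delete _ _ _ _ hj
      · rw [Function.update_of_ne hji]
        exact hj
  have hr' : ∀ i, (R i : ℤ) ≤ r i := hr
  have hr1 : ∀ i, 1 ≤ r i := fun i => by
    have := (hR i).1
    have := hr' i
    omega
  have hR2 : ∀ i, ¬ Nonempty ((X i).G ≃g (⊤ : SimpleGraph (Fin 2))) → 2 ≤ r i := by
    intro i hi
    by_contra hlt
    have h1 : R i = 1 := by
      have := (hR i).1
      have := hr' i
      omega
    have h2 := (hR i).2
    rw [h1, rpX] at h2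
    obtain ⟨j, hj⟩ := h2 (fun _ => Sum.inr i)
    rcases j with j | j
    · obtain ⟨f, -⟩ := hj
      change Fin 4 ↪ Fin 1 at f
      have := Fintype.card_le_of_embedding f
      simp at this
    · simp only [Sum.elim_inr] at hj
      by_cases hji : j = i
      · subst hji
        rw [Function.update_self] at hj
        obtain ⟨f, -⟩ := hj
        change {x : (X j).V // x ≠ w j} ↪ Fin 1 at f
        have h3 := Fintype.card_le_of_embedding f
        rw [Fintype.card_subtype_compl, Fintype.card_subtype_eq, Fintype.card_fin] at h3
        obtain ⟨u, v, huv⟩ := hedge j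
        exact hi (iso_K2 (X j) (by omega) u v huv)
      · rw [Function.update_of_ne hji] at hj
        obtain ⟨f, -⟩ := hj
        obtain ⟨u, v, huv⟩ := hedge j
        exact huv.ne (f.injective (Subsingleton.elim _ _))
  -- the arithmetic
  obtain ⟨S, hS⟩ : ∃ S : ℤ, S = ∑ i, (r i - 1) := ⟨_, rfl⟩
  have hS0 : 0 ≤ S := by
    rw [hS]; exact Finset.sum_nonneg fun i _ => by linarith [hr1 i]
  have hS1 : M = 0 → 1 ≤ S := by
    intro hM
    obtain ⟨i, hi⟩ := hK2 (by omega)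
    have h2 := hR2 i hi
    have := Finset.single_le_sum (f := fun i => r i - 1) (s := Finset.univ)
      (fun i _ => by linarith [hr1 i]) (Finset.mem_univ i)
    rw [hS]
    linarith
  have hSr : (∑ i, (r i : ℝ)) - n = (S : ℝ) := by
    rw [hS]; push_cast; simp
  rw [add_sub_assoc, hSr]
  have hSR : (0 : ℝ) ≤ S := by exact_mod_cast hS0
  obtain ⟨T, hT⟩ : ∃ T : ℕ, (M + 1) * (M + 2) = 2 * T :=
    (Nat.even_mul_succ_self (M + 1)).two_dvd
  have hTR : (((M + 1 : ℕ) : ℝ) ^ 2 + (M + 1 : ℕ)) / 2 = T := by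
    have : (((M + 1) * (M + 2) : ℕ) : ℝ) = ((2 * T : ℕ) : ℝ) := by rw [hT]
    push_cast at this ⊢
    linarith
  rw [hTR]
  set q : ℝ := Real.sqrt ((((M + 1 : ℕ) : ℝ) + 1) ^ 2 / 4 + (S : ℝ)) with hq
  have hq2 : q ^ 2 = (((M + 1 : ℕ) : ℝ) + 1) ^ 2 / 4 + (S : ℝ) :=
    Real.sq_sqrt (by positivity)
  have hq0 : 0 ≤ q := Real.sqrt_nonneg _
  have hqm : ((M : ℝ) + 2) / 2 ≤ q := by
    apply Real.le_sqrt_of_sq_le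
    push_cast
    linarith
  set K : ℤ := ⌈((M + 1 : ℕ) : ℝ) * q⌉ with hK
  have hKle : ((M + 1 : ℕ) : ℝ) * q ≤ K := Int.le_ceil _
  have hTZ : ((M : ℤ) + 1) * (M + 2) = 2 * T := by exact_mod_cast hT
  have hTR' : ((M : ℝ) + 1) * (M + 2) = 2 * T := by exact_mod_cast hT
  have hM0 : (0 : ℝ) ≤ M := Nat.cast_nonneg _
  push_cast at hKle hq2
  have hKT : (T : ℤ) ≤ K := by
    have : (T : ℝ) ≤ K := by nlinarith
    exact_mod_cast this
  have hT1 : (1 : ℤ) ≤ T := by nlinarith [Int.natCast_nonneg M]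
  -- key inequality
  have hkey : ((M : ℤ) + 1) ^ 2 * S ≤ (T + K) * ((T + K) - (M + 1) * (M + 2)) := by
    have h1 : (((M : ℝ) + 1) * q) ^ 2 ≤ (K : ℝ) ^ 2 := by
      apply pow_le_pow_left₀ (by positivity) hKle
    have : ((M : ℝ) + 1) ^ 2 * S ≤ (T + K) * ((T + K) - (M + 1) * (M + 2)) := by
      rw [hTR']
      have hTT : (T : ℝ) ^ 2 = ((M : ℝ) + 1) ^ 2 * ((M + 1 + 1) ^ 2 / 4) := by
        have : (T : ℝ) = ((M : ℝ) + 1) * (M + 2) / 2 := by linarith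
        rw [this]; ring
      rw [mul_pow, hq2] at h1
      nlinarith
    exact_mod_cast this
  have hK1 : M = 0 → 3 ≤ (T : ℤ) + K := by
    intro hM
    have hs := hS1 hM
    subst hM
    have hT' : (T : ℤ) = 1 := by push_cast at hTZ; linarith
    rw [hT'] at hkey hKT ⊢
    push_cast at hkey
    by_contra hlt
    have : K = 1 := by omega
    rw [this] at hkey
    linarith
  obtain ⟨N, hN⟩ : ∃ N : ℕ, (N : ℤ) = S + T + K := ⟨(S + T + K).toNat, by omega⟩
  have hNR : (S : ℝ) + T + K = N := by exact_mod_cast hN.symm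
  rw [hNR]
  have hNpos : 0 < N := by omega
  suffices hmain : ramseyProp (P3 :: (List.replicate (M + 1 - 1) C4 ++ List.ofFn X)) N by
    have hle : ramseyNumber (P3 :: (List.replicate (M + 1 - 1) C4 ++ List.ofFn X)) ≤ N :=
      Nat.sInf_le ⟨hNpos, hmain⟩
    exact_mod_cast hle
  rw [rpP]
  intro c
  by_contra hcon
  push Not at hcon
  have h0 : ¬ Mono P3 c (Sum.inl 0) := by simpa using hcon (Sum.inl 0)
  have hC : ∀ j : Fin M, ¬ Mono C4 c (Sum.inl j.succ) := fun j => by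
    simpa using hcon (Sum.inl j.succ)
  have hX : ∀ i, ¬ Mono (X i) c (Sum.inr i) := fun i => by simpa using hcon (Sum.inr i)
  have hC' : ∀ j : Fin (M + 1), ¬ Mono C4 c (Sum.inl j) := by
    intro j
    refine Fin.cases ?_ hC j
    exact fun h => h0 (mono_P3_of_C4 _ _ h)
  have hd : ∀ i v, cdeg c (Sum.inr i) v < R i := by
    intro i v
    refine cdeg_X (X i) (w i) c _ (hX i) ?_ v
    rintro c' ⟨g, rfl⟩
    have h2 := (hR i).2
    rw [rpX] at h2
    obtain ⟨j, hj⟩ := h2 (fun x => c (Sym2.map g x))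
    rcases j with j | j
    · exact absurd (mono_of_comp _ _ _ g hj) (hC' j)
    · simp only [Sum.elim_inr] at hj
      by_cases hji : j = i
      · subst hji
        rw [Function.update_self] at hj
        exact hj
      · rw [Function.update_of_ne hji] at hj
        exact absurd (mono_of_comp _ _ _ g hj) (hX j)
  have hdeg : ∀ v, ∑ i, (cdeg c (Sum.inr i) v : ℤ) ≤ S := by
    intro v
    rw [hS]
    refine Finset.sum_le_sum fun i _ => ?_
    have := hd i v
    have := hr' i
    omega
  have hMZ : (0 : ℤ) ≤ M := Int.natCast_nonneg M
  obtain ⟨hA, hB⟩ := main_count M n N S c h0 hC hdeg hNpos (by nlinarith)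
  by_cases hM : M = 0
  · have := hK1 hM
    have := hA (by exact_mod_cast hM)
    linarith
  · have hM1 : (1 : ℤ) ≤ M := by omega
    have hNS : (N : ℤ) - S = T + K := by linarith
    have hNe : (N : ℤ) = S + (T + K) := by linarith
    rw [hNS] at hB
    rw [hNe] at hB
    generalize (T : ℤ) + K = y at *
    have hy : 0 ≤ y := by linarith
    nlinarith [mul_nonneg hMZ hS0, mul_nonneg (sub_nonneg.2 hM1) hy]
end

section
/- For every integer k ≥ 2, the two-color Ramsey number satisfies R(C_4, K_{1,k}) ≤ k + ⌈√k⌉ + 1. -/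
open SimpleGraph

open Finset in
lemma no_polarity {N m : ℕ} (G : SimpleGraph (Fin N)) [DecidableRel G.Adj] (hN0 : 0 < N)
    (hm : 2 ≤ m) (hN : N ≤ m * m + m + 1)
    (hc : ∀ v w, v ≠ w → (G.neighborFinset v ∩ G.neighborFinset w).card ≤ 1)
    (hd : ∀ v, m + 1 ≤ G.degree v) : False := by
  have dc : ∀ v, ∑ w, (G.neighborFinset v ∩ G.neighborFinset w).card
      = ∑ u ∈ G.neighborFinset v, G.degree u := by
    intro v
    have h1 : ∀ w, (G.neighborFinset v ∩ G.neighborFinset w).card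
        = ∑ u ∈ G.neighborFinset v, if G.Adj u w then 1 else 0 := by
      intro w
      rw [Finset.sum_boole, Nat.cast_id]
      congr 1
      ext u
      simp [G.adj_comm]
    simp_rw [h1]
    rw [Finset.sum_comm]
    refine Finset.sum_congr rfl fun u _ => ?_
    rw [Finset.sum_boole, Nat.cast_id, ← G.card_neighborFinset_eq_degree]
    congr 1
    ext w
    simp
  have split : ∀ v, ∑ w, (G.neighborFinset v ∩ G.neighborFinset w).card
      = G.degree v + ∑ w ∈ univ.erase v, (G.neighborFinset v ∩ G.neighborFinset w).card := by
    intro v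
    rw [← Finset.add_sum_erase univ _ (Finset.mem_univ v)]
    simp
  have cardE : ∀ v : Fin N, (univ.erase v).card = N - 1 := by
    intro v
    simp [Finset.card_erase_of_mem]
  have ub : ∀ v, ∑ w ∈ univ.erase v, (G.neighborFinset v ∩ G.neighborFinset w).card ≤ N - 1 := by
    intro v
    rw [← cardE v, Finset.card_eq_sum_ones]
    exact Finset.sum_le_sum fun w hw => hc v w (Finset.ne_of_mem_erase hw).symm
  have lb : ∀ v, G.degree v * (m + 1) ≤ ∑ u ∈ G.neighborFinset v, G.degree u := by
    intro v
    rw [← G.card_neighborFinset_eq_degree v, ← smul_eq_mul]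
    exact Finset.card_nsmul_le_sum _ _ _ fun u _ => hd u
  have deg : ∀ v, G.degree v = m + 1 := by
    intro v
    have h1 := dc v
    have h2 := split v
    have h3 := ub v
    have h4 := lb v
    have h5 := hd v
    have h6 : N - 1 ≤ m * m + m := by omega
    have h7 : G.degree v * m ≤ (m + 1) * m := by nlinarith
    have := Nat.le_of_mul_le_mul_right h7 (by omega)
    omega
  have hNe : N = m * m + m + 1 := by
    have v : Fin N := ⟨0, hN0⟩
    have h1 := dc v
    have h2 := split v
    have h3 := ub v
    have h4 := lb v
    rw [deg v] at h4 h2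
    have : m * m + m ≤ N - 1 := by nlinarith
    omega
  have one : ∀ v w, v ≠ w → (G.neighborFinset v ∩ G.neighborFinset w).card = 1 := by
    intro v w hvw
    have h1 := dc v
    have h2 := split v
    have h4 := lb v
    rw [deg v] at h4 h2
    have h3 : ∑ w ∈ univ.erase v, (G.neighborFinset v ∩ G.neighborFinset w).card
        = ∑ w ∈ univ.erase v, 1 := by
      apply le_antisymm
      · exact Finset.sum_le_sum fun w hw => hc v w (Finset.ne_of_mem_erase hw).symm
      · rw [← Finset.card_eq_sum_ones, cardE]
        have : N - 1 = m * m + m := by omega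
        nlinarith
    exact (Finset.sum_eq_sum_iff_of_le
      (fun w hw => hc v w (Finset.ne_of_mem_erase hw).symm)).1 h3 w (by simp [hvw.symm])
  obtain ⟨p, hp, hpm⟩ := Nat.exists_prime_and_dvd (show m ≠ 1 by omega)
  have : Fact p.Prime := ⟨hp⟩
  have hm0 : (m : ZMod p) = 0 := (ZMod.natCast_eq_zero_iff m p).2 hpm
  set J : Matrix (Fin N) (Fin N) (ZMod p) := Matrix.of fun _ _ => 1 with hJ
  set A := G.adjMatrix (ZMod p) with hA
  have hAA : A * A = J := by
    ext v w
    rw [hA, SimpleGraph.adjMatrix_mul_apply]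
    simp only [SimpleGraph.adjMatrix_apply, Finset.sum_boole]
    have : ({u ∈ G.neighborFinset v | G.Adj u w} : Finset _)
        = G.neighborFinset v ∩ G.neighborFinset w := by
      ext u; simp [G.adj_comm]
    rw [this]
    by_cases h : v = w
    · subst h
      simp [deg, hm0, hJ]
    · simp [one v w h, hJ]
  have hAJ : A * J = J := by
    ext v w
    rw [hA, SimpleGraph.adjMatrix_mul_apply]
    simp [hJ, deg, hm0]
  have hpow : ∀ n, A ^ (n + 2) = J := by
    intro n
    induction n with
    | zero => rw [zero_add, pow_two, hAA]
    | succ n ih => rw [show n + 1 + 2 = (n + 2) + 1 by ring, pow_succ', ih, hAJ]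
  have ht := ZMod.trace_pow_card A
  obtain ⟨n, hn⟩ := Nat.exists_eq_add_of_le hp.two_le
  have hp' : A ^ p = J := by
    have := hpow n
    rwa [add_comm n 2, ← hn] at this
  rw [hp', hA, SimpleGraph.trace_adjMatrix, zero_pow hp.ne_zero] at ht
  have : Matrix.trace J = (N : ZMod p) := by simp [Matrix.trace, hJ]
  rw [this, hNe] at ht
  simp [hm0] at ht

lemma ramsey_ub (k m : ℕ) (hm : 2 ≤ m) (hkm : k ≤ m * m) :
    ramseyProp [C4, ⟨Fin (k + 1), starGraph k⟩] (k + m + 1) := by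
  classical
  intro c
  change Sym2 (Fin (k + m + 1)) → Fin 2 at c
  let G : SimpleGraph (Fin (k + m + 1)) :=
    { Adj := fun u v => u ≠ v ∧ c s(u, v) = 0
      symm := ⟨fun u v h => ⟨h.1.symm, by rw [Sym2.eq_swap]; exact h.2⟩⟩
      loopless := ⟨fun u h => h.1 rfl⟩ }
  by_contra hcon
  refine no_polarity (m := m) G (by omega) hm (by omega) ?_ ?_
  · intro v w hvw
    by_contra! h
    obtain ⟨a, ha, b, hb, hab⟩ := Finset.one_lt_card.1 h
    simp only [Finset.mem_inter, SimpleGraph.mem_neighborFinset] at ha hb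
    obtain ⟨⟨hva, cva⟩, hwa, cwa⟩ := ha
    obtain ⟨⟨hvb, cvb⟩, hwb, cwb⟩ := hb
    apply hcon
    have cav : c s(a, v) = 0 := by rw [Sym2.eq_swap]; exact cva
    have caw : c s(a, w) = 0 := by rw [Sym2.eq_swap]; exact cwa
    have cbv : c s(b, v) = 0 := by rw [Sym2.eq_swap]; exact cvb
    have cbw : c s(b, w) = 0 := by rw [Sym2.eq_swap]; exact cwb
    have hinj : Function.Injective (![v, a, w, b] : Fin 4 → Fin (k + m + 1)) := by
      intro i j hij
      fin_cases i <;> fin_cases j <;> simp_all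
    refine ⟨(0 : Fin 2), (⟨![v, a, w, b], hinj⟩ : Fin 4 ↪ Fin (k + m + 1)), ?_⟩
    change ∀ i j : Fin 4, (SimpleGraph.cycleGraph 4).Adj i j →
      c s((![v, a, w, b] : Fin 4 → Fin (k + m + 1)) i,
        (![v, a, w, b] : Fin 4 → Fin (k + m + 1)) j) = 0
    intro i j hij
    rw [SimpleGraph.cycleGraph_adj] at hij
    fin_cases i <;> fin_cases j <;> first | assumption | (exfalso; revert hij; decide)
  · intro v
    by_contra! h
    apply hcon
    let S : Finset (Fin (k + m + 1)) := (Finset.univ.erase v) \ G.neighborFinset v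
    have hS : k ≤ S.card := by
      have h1 := Finset.le_card_sdiff (G.neighborFinset v) (Finset.univ.erase v)
      rw [G.card_neighborFinset_eq_degree, Finset.card_erase_of_mem (Finset.mem_univ v)] at h1
      simp only [Finset.card_univ, Fintype.card_fin] at h1
      change _ ≤ S.card at h1
      omega
    let e := S.orderEmbOfCardLe hS
    have he : ∀ i, e i ∈ S := fun i => S.orderEmbOfCardLe_mem hS i
    have hev : ∀ i, e i ≠ v ∧ c s(v, e i) = 1 := by
      intro i
      have := he i
      simp only [S, Finset.mem_sdiff, Finset.mem_erase, SimpleGraph.mem_neighborFinset] at this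
      refine ⟨this.1.1, ?_⟩
      have h2 : ¬ c s(v, e i) = 0 := fun h0 => this.2 ⟨this.1.1.symm, h0⟩
      revert h2
      generalize c s(v, e i) = x
      revert x; decide
    have hinj : Function.Injective (Fin.cons v e : Fin (k + 1) → Fin (k + m + 1)) := by
      rw [Fin.cons_injective_iff]
      refine ⟨?_, e.injective⟩
      rintro ⟨i, hi⟩
      exact (hev i).1 hi
    refine ⟨(1 : Fin 2), (⟨Fin.cons v e, hinj⟩ : Fin (k + 1) ↪ Fin (k + m + 1)), ?_⟩
    change ∀ i j : Fin (k + 1), (_root_.starGraph k).Adj i j →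
      c s((Fin.cons v e : Fin (k + 1) → Fin (k + m + 1)) i,
        (Fin.cons v e : Fin (k + 1) → Fin (k + m + 1)) j) = 1
    intro i j hij
    rw [_root_.starGraph, SimpleGraph.fromRel_adj] at hij
    obtain ⟨hne, rfl | rfl⟩ := hij
    · obtain ⟨j, rfl⟩ := Fin.exists_succ_eq.2 hne.symm
      simpa using (hev j).2
    · obtain ⟨i, rfl⟩ := Fin.exists_succ_eq.2 hne
      rw [Sym2.eq_swap]
      simpa using (hev i).2

/-- For `k ≥ 2`, `R(C₄, K_{1,k}) ≤ k + ⌈√k⌉ + 1`. -/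
theorem statement4 (k : ℕ) (hk : 2 ≤ k) :
    ((ramseyNumber [C4, ⟨Fin (k + 1), starGraph k⟩] : ℝ)) ≤
      (k : ℝ) + (⌈Real.sqrt k⌉ : ℝ) + 1 := by
  obtain ⟨m, hm⟩ := Int.eq_ofNat_of_zero_le (Int.ceil_nonneg (Real.sqrt_nonneg (k : ℝ)))
  have h1 : Real.sqrt k ≤ (m : ℝ) := by
    have := Int.le_ceil (Real.sqrt (k : ℝ))
    rw [hm] at this
    exact_mod_cast this
  have hkm : k ≤ m * m := by
    have := (Real.sqrt_le_left (by positivity)).1 h1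
    rw [pow_two] at this
    exact_mod_cast this
  have hm2 : 2 ≤ m := by
    by_contra! h
    have : m * m ≤ 1 := by interval_cases m <;> simp
    omega
  have : ramseyNumber [C4, ⟨Fin (k + 1), starGraph k⟩] ≤ k + m + 1 :=
    Nat.sInf_le ⟨by omega, ramsey_ub k m hm2 hkm⟩
  rw [hm]
  exact_mod_cast this
end

section
/- For every integer k ≥ 2, the two-color Ramsey number of C_4 versus the book B_k satisfies R(C_4, B_k) ≤ R(C_4, K_{1,k}) + ⌈√(R(C_4, K_{1,k}))⌉ + 1, and consequently R(C_4, B_k) ≤ k + ⌈ √( k + ⌈√k⌉ + 1 ) ⌉ + ⌈√k⌉ + 2. -/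
open SimpleGraph

/-- Two-colour reformulation of the Ramsey property. -/
theorem rp_iff (X : VGraph) (N : ℕ) : ramseyProp [C4, X] N ↔
    ∀ c : Sym2 (Fin N) → Fin 2,
      (∃ f : Fin 4 ↪ Fin N, ∀ u v, (SimpleGraph.cycleGraph 4).Adj u v → c s(f u, f v) = 0) ∨
      (∃ f : X.V ↪ Fin N, ∀ u v, X.G.Adj u v → c s(f u, f v) = 1) := by
  constructor
  · intro h c
    obtain ⟨i, f, hf⟩ := h c
    match i, f, hf with
    | ⟨0, _⟩, f, hf => exact Or.inl ⟨f, hf⟩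
    | ⟨1, _⟩, f, hf => exact Or.inr ⟨f, hf⟩
  · intro h c
    rcases h c with ⟨f, hf⟩ | ⟨f, hf⟩
    · exact ⟨(⟨0, by simp⟩ : Fin 2), f, hf⟩
    · exact ⟨(⟨1, by simp⟩ : Fin 2), f, hf⟩

/-- Friendship-type lemma. -/
theorem core {N : ℕ} (G : SimpleGraph (Fin N)) [DecidableRel G.Adj] (s : ℕ) (hs : 2 ≤ s)
    (hN0 : 0 < N) (hN : N ≤ s ^ 2 + s + 1) (hdeg : ∀ v, s + 1 ≤ G.degree v)
    (hc4 : ∀ u w a b, u ≠ w → G.Adj u a → G.Adj u b → G.Adj w a → G.Adj w b → a = b) :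
    False := by
  classical
  set f : Fin N → Fin N → ℕ := fun v w => (G.neighborFinset v ∩ G.neighborFinset w).card with hf
  have hf1 : ∀ v w, v ≠ w → f v w ≤ 1 := by
    intro v w hvw
    apply Finset.card_le_one.mpr
    intro a ha b hb
    simp only [Finset.mem_inter, SimpleGraph.mem_neighborFinset] at ha hb
    exact hc4 v w a b hvw ha.1 hb.1 ha.2 hb.2
  have hfv : ∀ v, f v v = G.degree v := by
    intro v; simp [hf]
  have hsum : ∀ v, ∑ w, f v w = ∑ u ∈ G.neighborFinset v, G.degree u := by
    intro v
    have h1 : ∀ w, f v w = ∑ u ∈ G.neighborFinset v, if G.Adj u w then 1 else 0 := by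
      intro w
      rw [← Finset.card_filter]
      simp only [hf]
      congr 1
      ext u
      simp [G.adj_comm]
    simp_rw [h1]
    rw [Finset.sum_comm]
    apply Finset.sum_congr rfl
    intro u _
    rw [← Finset.card_filter, ← SimpleGraph.card_neighborFinset_eq_degree]
    congr 1
    ext w
    simp
  have hsplit : ∀ v, ∑ w, f v w = G.degree v + ∑ w ∈ Finset.univ.erase v, f v w := by
    intro v
    rw [← hfv v, Finset.add_sum_erase _ _ (Finset.mem_univ v)]
  have hcard : ∀ v : Fin N, (Finset.univ.erase v).card = N - 1 := by
    intro v; simp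
  have hup : ∀ v, ∑ w ∈ Finset.univ.erase v, f v w ≤ N - 1 := by
    intro v
    calc _ ≤ ∑ w ∈ Finset.univ.erase v, 1 :=
          Finset.sum_le_sum (fun w hw => hf1 v w (Finset.ne_of_mem_erase hw).symm)
      _ = N - 1 := by simp
  have hlow : ∀ v, G.degree v * (s + 1) ≤ ∑ w, f v w := by
    intro v
    rw [hsum v, ← SimpleGraph.card_neighborFinset_eq_degree, ← smul_eq_mul]
    exact Finset.card_nsmul_le_sum _ _ _ (fun u _ => hdeg u)
  have hds : ∀ v, G.degree v * s ≤ N - 1 := by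
    intro v
    have h1 := hlow v
    have h2 := hsplit v
    have h3 := hup v
    rw [mul_add, mul_one] at h1
    omega
  have hN' : N - 1 ≤ (s + 1) * s := by
    have : (s + 1) * s = s ^ 2 + s := by ring
    omega
  have hreg : ∀ v, G.degree v = s + 1 := by
    intro v
    apply le_antisymm _ (hdeg v)
    exact Nat.le_of_mul_le_mul_right ((hds v).trans hN') (by omega)
  have hNeq : N - 1 = (s + 1) * s := by
    apply le_antisymm hN'
    have := hds ⟨0, hN0⟩
    rwa [hreg] at this
  have hfone : ∀ v w, v ≠ w → f v w = 1 := by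
    intro v w hvw
    by_contra hne
    have hlt : f v w < 1 := lt_of_le_of_ne (hf1 v w hvw) hne
    have : ∑ w ∈ Finset.univ.erase v, f v w < ∑ w ∈ Finset.univ.erase v, 1 := by
      apply Finset.sum_lt_sum
      · exact fun w hw => hf1 v w (Finset.ne_of_mem_erase hw).symm
      · exact ⟨w, Finset.mem_erase.mpr ⟨hvw.symm, Finset.mem_univ _⟩, hlt⟩
    have h1 := hlow v
    have h2 := hsplit v
    rw [hreg] at h1 h2
    have h4 : ∑ w ∈ Finset.univ.erase v, 1 = N - 1 := by simp
    rw [mul_add, mul_one] at h1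
    omega
  -- linear algebra modulo a prime divisor of `s`
  obtain ⟨p, hp, hps⟩ := Nat.exists_prime_and_dvd (show s ≠ 1 by omega)
  have : Fact p.Prime := ⟨hp⟩
  have hs0 : (s : ZMod p) = 0 := (ZMod.natCast_eq_zero_iff s p).mpr hps
  have hNp : (N : ZMod p) = 1 := by
    have : N = (s + 1) * s + 1 := by omega
    rw [this]; push_cast; rw [hs0]; simp
  set A : Matrix (Fin N) (Fin N) (ZMod p) := G.adjMatrix (ZMod p) with hA
  set J : Matrix (Fin N) (Fin N) (ZMod p) := Matrix.of fun _ _ => 1 with hJ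
  have hA2 : A * A = J := by
    ext v w
    have h1 : (A * A) v w = (f v w : ZMod p) := by
      rw [hA, SimpleGraph.adjMatrix_mul_apply]
      simp only [SimpleGraph.adjMatrix_apply]
      rw [Finset.sum_boole]
      simp only [hf]
      congr 2
      ext u
      simp [G.adj_comm]
    rw [h1]
    by_cases h : v = w
    · subst h
      rw [hfv, hreg]; simp [hs0, hJ]
    · rw [hfone v w h]; simp [hJ]
  have hJA : J * A = J := by
    ext v w
    rw [hA, SimpleGraph.mul_adjMatrix_apply]
    simp [hJ, hreg, hs0]
  have hpow : ∀ n, A ^ (n + 2) = J := by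
    intro n
    induction n with
    | zero => rw [zero_add, pow_two, hA2]
    | succ n ih => rw [show n + 1 + 2 = (n + 2) + 1 by ring, pow_succ, ih, hJA]
  have hAp : A ^ p = J := by
    have := hpow (p - 2)
    rwa [Nat.sub_add_cancel hp.two_le] at this
  have htr := ZMod.trace_pow_card A
  rw [hAp, hA, SimpleGraph.trace_adjMatrix, zero_pow hp.ne_zero] at htr
  have : Matrix.trace J = (N : ZMod p) := by simp [Matrix.trace, hJ]
  rw [this, hNp] at htr
  exact one_ne_zero htr

/-- A colouring with no `C₄` in colour 0 and `N ≤ s² + s + 1` vertices has a vertex of small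
colour-0 degree. -/
theorem exists_small {N : ℕ} (c : Sym2 (Fin N) → Fin 2) (s : ℕ) (hs : 2 ≤ s)
    (hN0 : 0 < N) (hN : N ≤ s ^ 2 + s + 1)
    (hc : ¬ ∃ f : Fin 4 ↪ Fin N, ∀ u v, (SimpleGraph.cycleGraph 4).Adj u v → c s(f u, f v) = 0) :
    ∃ v, N - 1 - s ≤ (Finset.univ.filter (fun w => v ≠ w ∧ c s(v, w) = 1)).card := by
  classical
  by_contra hcon
  push Not at hcon
  let G : SimpleGraph (Fin N) :=
    { Adj := fun u w => u ≠ w ∧ c s(u, w) = 0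
      symm := ⟨fun u w h => ⟨h.1.symm, by rw [Sym2.eq_swap]; exact h.2⟩⟩
      loopless := ⟨fun u h => h.1 rfl⟩ }
  apply core G s hs hN0 hN
  · intro v
    have h1 := hcon v
    have h2 : G.degree v + (Finset.univ.filter (fun w => v ≠ w ∧ c s(v, w) = 1)).card = N - 1 := by
      have : (Finset.univ.erase v).card = N - 1 := by simp
      rw [← this, ← SimpleGraph.card_neighborFinset_eq_degree, ← Finset.card_union_of_disjoint]
      · congr 1
        ext w
        simp only [Finset.mem_union, SimpleGraph.mem_neighborFinset, Finset.mem_filter,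
          Finset.mem_univ, true_and, Finset.mem_erase, and_true]
        change (v ≠ w ∧ c s(v, w) = 0) ∨ _ ↔ _
        have : c s(v, w) = 0 ∨ c s(v, w) = 1 := by omega
        tauto
      · rw [Finset.disjoint_left]
        intro w hw hw'
        have h3 : c s(v, w) = 0 := ((SimpleGraph.mem_neighborFinset _ _ _).mp hw).2
        have h4 := (Finset.mem_filter.mp hw').2.2
        rw [h3] at h4
        exact absurd h4 (by decide)
    omega
  · intro u w a b huw hua hub hwa hwb
    by_contra hab
    apply hc
    have e1 := hua.1
    have e2 := hub.1
    have e3 := hwa.1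
    have e4 := hwb.1
    have c1 := hua.2
    have c2 := hub.2
    have c3 := hwa.2
    have c4 := hwb.2
    have c1' : c s(a, u) = 0 := by rw [Sym2.eq_swap]; exact c1
    have c2' : c s(b, u) = 0 := by rw [Sym2.eq_swap]; exact c2
    have c3' : c s(a, w) = 0 := by rw [Sym2.eq_swap]; exact c3
    have c4' : c s(b, w) = 0 := by rw [Sym2.eq_swap]; exact c4
    refine ⟨⟨![u, a, w, b], ?_⟩, ?_⟩
    · intro i j hij
      fin_cases i <;> fin_cases j <;> simp_all
    · intro i j hij
      have hij' : i - j = 1 ∨ j - i = 1 := (SimpleGraph.cycleGraph_adj).mp hij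
      clear hij
      revert hij'
      fin_cases i <;> fin_cases j <;> intro hij' <;>
        first
        | exact absurd hij' (by decide)
        | simpa using by assumption

/-- Parsons' bound as a Ramsey property. -/
theorem star_prop (k t : ℕ) (ht2 : 2 ≤ t) (ht : k ≤ t ^ 2) :
    ramseyProp [C4, ⟨Fin (k + 1), starGraph k⟩] (k + t + 1) := by
  classical
  rw [rp_iff]
  intro c
  by_contra hcon
  rw [not_or] at hcon
  obtain ⟨v, hv⟩ := exists_small c t ht2 (by omega) (by omega) hcon.1
  apply hcon.2
  set S := Finset.univ.filter (fun w => v ≠ w ∧ c s(v, w) = 1) with hS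
  have hk : k ≤ Fintype.card S := by rw [Fintype.card_coe]; omega
  obtain ⟨e⟩ : Nonempty (Fin k ↪ S) := by
    apply Function.Embedding.nonempty_of_card_le; simpa using hk
  have heS : ∀ i, v ≠ (e i : Fin (k + t + 1)) ∧ c s(v, (e i : Fin (k + t + 1))) = 1 :=
    fun i => (Finset.mem_filter.mp (e i).2).2
  refine ⟨⟨Fin.cons v (fun i => (e i : Fin (k + t + 1))), ?_⟩, ?_⟩
  · rw [Fin.cons_injective_iff]
    refine ⟨?_, Subtype.val_injective.comp e.injective⟩
    rintro ⟨i, hi⟩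
    exact (heS i).1 hi.symm
  · intro i j hij
    obtain ⟨hne, h⟩ := (SimpleGraph.fromRel_adj _ _ _).mp hij
    change c s((Fin.cons v (fun i => (e i : Fin (k + t + 1))) : Fin (k + 1) → _) i,
      (Fin.cons v (fun i => (e i : Fin (k + t + 1))) : Fin (k + 1) → _) j) = 1
    change Fin (k + 1) at i j
    rcases h with h | h
    · subst h
      obtain ⟨m, rfl⟩ := Fin.exists_succ_eq.mpr hne.symm
      simpa using (heS m).2
    · subst h
      obtain ⟨m, rfl⟩ := Fin.exists_succ_eq.mpr hne
      rw [Sym2.eq_swap]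
      simpa using (heS m).2

/-- The main step. -/
theorem book_prop (k R s : ℕ) (hs2 : 2 ≤ s) (hs : R ≤ s ^ 2)
    (hR : ramseyProp [C4, ⟨Fin (k + 1), starGraph k⟩] R) :
    ramseyProp [C4, ⟨Fin (k + 2), bookGraph k⟩] (R + s + 1) := by
  classical
  rw [rp_iff] at hR ⊢
  intro c
  by_contra hcon
  rw [not_or] at hcon
  obtain ⟨v, hv⟩ := exists_small c s hs2 (by omega) (by omega) hcon.1
  set S := Finset.univ.filter (fun w => v ≠ w ∧ c s(v, w) = 1) with hS
  have hk : R ≤ Fintype.card S := by rw [Fintype.card_coe]; omega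
  obtain ⟨e⟩ : Nonempty (Fin R ↪ S) := by
    apply Function.Embedding.nonempty_of_card_le; simpa using hk
  have heS : ∀ i, v ≠ (e i : Fin (R + s + 1)) ∧ c s(v, (e i : Fin (R + s + 1))) = 1 :=
    fun i => (Finset.mem_filter.mp (e i).2).2
  let e' : Fin R ↪ Fin (R + s + 1) := e.trans (Function.Embedding.subtype _)
  rcases hR (fun x => c (x.map e')) with ⟨f, hf⟩ | ⟨f, hf⟩
  · exact hcon.1 ⟨f.trans e', fun u w h => by simpa using hf u w h⟩
  · apply hcon.2
    change Fin (k + 1) ↪ Fin R at f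
    have hf' : ∀ i : Fin (k + 1), i ≠ 0 → c s(e' (f 0), e' (f i)) = 1 := by
      intro i hi
      have := hf (0 : Fin (k + 1)) i ((SimpleGraph.fromRel_adj _ _ _).mpr ⟨hi.symm, Or.inl rfl⟩)
      simpa using this
    have key : ∀ i j : Fin (k + 2), i ≠ j → i.val < 2 →
        c s((Fin.cons v (fun i => e' (f i)) : Fin (k + 2) → Fin (R + s + 1)) i,
          (Fin.cons v (fun i => e' (f i)) : Fin (k + 2) → Fin (R + s + 1)) j) = 1 := by
      intro i j hne hi
      induction i using Fin.cases with
      | zero =>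
        obtain ⟨m, rfl⟩ := Fin.exists_succ_eq.mpr hne.symm
        simp only [Fin.cons_zero, Fin.cons_succ]; exact (heS (f m)).2
      | succ i =>
        have hi0 : i = 0 := by
          apply Fin.ext
          simp only [Fin.val_succ] at hi
          simp only [Fin.val_zero]
          omega
        subst hi0
        induction j using Fin.cases with
        | zero =>
          rw [Sym2.eq_swap]
          simp only [Fin.cons_zero, Fin.cons_succ]; exact (heS (f 0)).2
        | succ j =>
          simp only [Fin.cons_succ]
          exact hf' j (fun h => hne (by rw [h]))
    refine ⟨⟨Fin.cons v (fun i => e' (f i)), ?_⟩, ?_⟩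
    · rw [Fin.cons_injective_iff]
      refine ⟨?_, e'.injective.comp f.injective⟩
      rintro ⟨i, hi⟩
      exact (heS (f i)).1 hi.symm
    · intro i j hij
      obtain ⟨hne, h⟩ := (SimpleGraph.fromRel_adj _ _ _).mp hij
      rcases h with h | h
      · exact key i j hne h
      · rw [Sym2.eq_swap]
        exact key j i hne.symm h

theorem ceil_sqrt_nat (n : ℕ) : ∃ t : ℕ, n ≤ t ^ 2 ∧ (⌈Real.sqrt n⌉ : ℝ) = t ∧
    (2 ≤ n → 2 ≤ t) := by
  refine ⟨⌈Real.sqrt n⌉₊, ?_, ?_, ?_⟩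
  · have h1 : Real.sqrt n ≤ ⌈Real.sqrt n⌉₊ := Nat.le_ceil _
    have h2 : (n : ℝ) ≤ (⌈Real.sqrt n⌉₊ : ℝ) ^ 2 := (Real.sqrt_le_left (by positivity)).mp h1
    exact_mod_cast h2
  · rw [natCast_ceil_eq_intCast_ceil (Real.sqrt_nonneg _)]
  · intro h
    have : 1 < ⌈Real.sqrt n⌉₊ := by
      rw [Nat.lt_ceil]
      rw [Real.lt_sqrt (by norm_num)]
      have : (2 : ℝ) ≤ n := by exact_mod_cast h
      push_cast
      linarith
    omega

/-- For `k ≥ 2`, `R(C₄,B_k) ≤ R(C₄,K_{1,k}) + ⌈√(R(C₄,K_{1,k}))⌉ + 1`, and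
consequently `R(C₄,B_k) ≤ k + ⌈√(k + ⌈√k⌉ + 1)⌉ + ⌈√k⌉ + 2`. -/
theorem statement5 (k : ℕ) (hk : 2 ≤ k) :
    ((ramseyNumber [C4, ⟨Fin (k + 2), bookGraph k⟩] : ℝ)) ≤
      (ramseyNumber [C4, ⟨Fin (k + 1), starGraph k⟩] : ℝ) +
      (⌈Real.sqrt (ramseyNumber [C4, ⟨Fin (k + 1), starGraph k⟩])⌉ : ℝ) + 1 ∧
    ((ramseyNumber [C4, ⟨Fin (k + 2), bookGraph k⟩] : ℝ)) ≤
      (k : ℝ) + (⌈Real.sqrt ((k : ℝ) + (⌈Real.sqrt k⌉ : ℝ) + 1)⌉ : ℝ) +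
      (⌈Real.sqrt k⌉ : ℝ) + 2 := by
  classical
  obtain ⟨t, ht1, ht2, ht3⟩ := ceil_sqrt_nat k
  have hsp := star_prop k t (ht3 hk) ht1
  set R := ramseyNumber [C4, ⟨Fin (k + 1), starGraph k⟩] with hRdef
  have hmem : R ∈ {N | 0 < N ∧ ramseyProp [C4, ⟨Fin (k + 1), starGraph k⟩] N} :=
    Nat.sInf_mem ⟨k + t + 1, by omega, hsp⟩
  have hRle : R ≤ k + t + 1 := Nat.sInf_le ⟨by omega, hsp⟩
  have hR2 : 2 ≤ R := by
    rcases (rp_iff _ _).mp hmem.2 (fun _ => 0) with ⟨f, _⟩ | ⟨f, _⟩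
    · have := Fintype.card_le_of_embedding f
      simp at this
      omega
    · change Fin (k + 1) ↪ Fin R at f
      have := Fintype.card_le_of_embedding f
      simp at this
      omega
  obtain ⟨s, hs1, hs2, hs3⟩ := ceil_sqrt_nat R
  have hB : ramseyNumber [C4, ⟨Fin (k + 2), bookGraph k⟩] ≤ R + s + 1 :=
    Nat.sInf_le ⟨by omega, book_prop k R s (hs3 hR2) hs1 hmem.2⟩
  have hB' : (ramseyNumber [C4, ⟨Fin (k + 2), bookGraph k⟩] : ℝ) ≤ R + s + 1 := by
    exact_mod_cast hB
  have hRle' : (R : ℝ) ≤ k + t + 1 := by exact_mod_cast hRle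
  refine ⟨by rw [hs2]; exact hB', ?_⟩
  have hmono : (⌈Real.sqrt R⌉ : ℝ) ≤ ⌈Real.sqrt ((k : ℝ) + (t : ℝ) + 1)⌉ := by
    exact_mod_cast Int.ceil_mono (Real.sqrt_le_sqrt hRle')
  rw [ht2]
  rw [hs2] at hmono
  linarith
end

section
/- Let m, n, k_1, …, k_n ≥ 1 be integers such that m + Σ_{i=1}^n k_i ≥ n + 2. Then R(C_4, …, C_4, K_{1,k_1}, …, K_{1,k_n}) (with m copies of C_4) ≤ 1 + (Σ_{i=1}^n k_i) − n + (m² + m)/2 + ⌈ m · √( (m+1)²/4 + (Σ_{i=1}^n k_i) − n ) ⌉. -/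
open SimpleGraph

open Finset in
/-- Trace argument for regular friendship graphs. -/
lemma friendship_trace {V : Type} [Fintype V] [DecidableEq V] (p : ℕ) [Fact p.Prime]
    (A : Matrix V V (ZMod p)) (htr : A.trace = 0)
    (hAA : A * A = Matrix.of fun _ _ => 1)
    (hAJ : A * (Matrix.of fun _ _ => 1) = (Matrix.of fun _ _ => 1))
    (hcard : (Fintype.card V : ZMod p) = 1) : False := by
  have hpow : ∀ k : ℕ, A ^ (k + 2) = Matrix.of fun _ _ => 1 := by
    intro k
    induction k with
    | zero => rw [zero_add, pow_two, hAA]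
    | succ k ih => rw [show k + 1 + 2 = (k + 2) + 1 by ring, pow_succ', ih, hAJ]
  have hp := (Fact.out : p.Prime)
  have h2 := hp.two_le
  have h1 := ZMod.trace_pow_card A
  obtain ⟨k, rfl⟩ : ∃ k, p = k + 2 := ⟨p - 2, by omega⟩
  rw [hpow k, htr, zero_pow (by omega)] at h1
  simp only [Matrix.trace, Matrix.diag, Matrix.of_apply, sum_const, card_univ, nsmul_eq_mul,
    mul_one] at h1
  rw [hcard] at h1
  exact one_ne_zero h1

/-- A regular friendship graph (given by its 0/1 matrix) has degree at most 2. -/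
lemma friendship_degree (N : ℕ) (d : ℤ) (a : Fin N → Fin N → ℤ)
    (hdiag : ∀ u, a u u = 0)
    (hsym : ∀ u v, a u v = a v u)
    (h01 : ∀ u v, a u v * a u v = a u v)
    (hreg : ∀ u, ∑ v, a u v = d)
    (hcod : ∀ u v, u ≠ v → ∑ w, a u w * a w v = 1)
    (hN : (N : ℤ) = d ^ 2 - d + 1) : d ≤ 2 := by
  by_contra hd
  push Not at hd
  set p := Nat.minFac (d - 1).toNat with hp
  have : Fact p.Prime := ⟨Nat.minFac_prime (by omega)⟩
  have hdvd : (p : ℤ) ∣ d - 1 := by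
    have := Nat.minFac_dvd (d - 1).toNat
    have h2 : (((d - 1).toNat : ℕ) : ℤ) = d - 1 := Int.toNat_of_nonneg (by omega)
    rw [← h2]
    exact_mod_cast this
  have hd1 : (d : ZMod p) = 1 := by
    have := (ZMod.intCast_zmod_eq_zero_iff_dvd (d - 1) p).2 hdvd
    push_cast at this
    exact sub_eq_zero.1 this
  refine friendship_trace p (Matrix.of fun u v : Fin N => (a u v : ZMod p)) ?_ ?_ ?_ ?_
  · simp [Matrix.trace, hdiag]
  · ext u v
    simp only [Matrix.mul_apply, Matrix.of_apply]
    by_cases huv : u = v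
    · subst huv
      have : ∑ w, a u w * a w u = d := by
        rw [← hreg u]
        refine Finset.sum_congr rfl fun w _ => ?_
        rw [hsym w u, h01]
      have h3 := congrArg (Int.cast : ℤ → ZMod p) this
      push_cast at h3
      rw [h3, hd1]
    · have h3 := congrArg (Int.cast : ℤ → ZMod p) (hcod u v huv)
      push_cast at h3
      exact h3
  · ext u v
    simp only [Matrix.mul_apply, Matrix.of_apply, mul_one]
    have h3 := congrArg (Int.cast : ℤ → ZMod p) (hreg u)
    push_cast at h3
    rw [h3, hd1]
  · have h3 := congrArg (Int.cast : ℤ → ZMod p) hN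
    push_cast at h3
    rw [Fintype.card_fin, h3, hd1]
    ring

/-- Cherry counting. -/
lemma cherry_count (N : ℕ) (a : Fin N → Fin N → ℤ)
    (hsym : ∀ u v, a u v = a v u)
    (h01 : ∀ u v, a u v * a u v = a u v) :
    ∑ u, ∑ v, (if u = v then 0 else (1 - ∑ w, a u w * a w v)) =
      N * (N - 1) - ∑ w, ((∑ v, a w v) ^ 2 - ∑ v, a w v) := by
  have h1 : ∀ u v : Fin N, (if u = v then 0 else (1 - ∑ w, a u w * a w v)) =
      (1 - ∑ w, a u w * a w v) - (if u = v then (1 - ∑ w, a u w * a w u) else 0) := by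
    intro u v
    split_ifs with h
    · subst h; ring
    · ring
  simp_rw [h1, Finset.sum_sub_distrib]
  have h2 : ∑ u, ∑ v, ∑ w, a u w * a w v = ∑ w, (∑ v, a w v) ^ 2 := by
    have : ∀ u, ∑ v, ∑ w, a u w * a w v = ∑ w, a w u * ∑ v, a w v := by
      intro u
      rw [Finset.sum_comm]
      refine Finset.sum_congr rfl fun w _ => ?_
      rw [Finset.mul_sum, hsym u w]
    simp_rw [this]
    rw [Finset.sum_comm]
    refine Finset.sum_congr rfl fun w _ => ?_
    rw [← Finset.sum_mul, pow_two]
  have h3 : ∀ u, ∑ w, a u w * a w u = ∑ w, a u w := by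
    intro u
    refine Finset.sum_congr rfl fun w _ => ?_
    rw [hsym w u, h01]
  rw [h2]
  simp_rw [h3]
  simp
  ring

lemma ramsey_core (N m : ℕ) (s D : ℤ) (a : Fin m → Fin N → Fin N → ℤ)
    (hN0 : 0 < N) (hm : 1 ≤ m) (hs : 0 ≤ s) (hms : 2 ≤ m + s)
    (hN : (N : ℤ) = D + s + 1) (hDm : (m : ℤ) ≤ D)
    (hD : (m + m ^ 2) * D + m ^ 2 * s ≤ D ^ 2)
    (hdiag : ∀ j u, a j u u = 0)
    (hsym : ∀ j u v, a j u v = a j v u)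
    (h01 : ∀ j u v, a j u v * a j u v = a j u v)
    (hcod : ∀ j u v, u ≠ v → ∑ w, a j u w * a j w v ≤ 1)
    (hdeg : ∀ v, D ≤ ∑ j, ∑ u, a j v u) : False := by
  have hm' : (1 : ℤ) ≤ m := by exact_mod_cast hm
  have hN' : (1 : ℤ) ≤ N := by exact_mod_cast hN0
  set x : Fin m → Fin N → ℤ := fun j v => ∑ u, a j v u with hx
  have hnn : ∀ j u v, 0 ≤ (if u = v then 0 else (1 - ∑ w, a j u w * a j w v)) := by
    intro j u v
    split_ifs with h
    · exact le_rfl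
    · linarith [hcod j u v h]
  have hch : ∀ j, ∑ u, ∑ v, (if u = v then 0 else (1 - ∑ w, a j u w * a j w v)) =
      N * (N - 1) - ∑ w, (x j w ^ 2 - x j w) := fun j => cherry_count N (a j) (hsym j) (h01 j)
  have hcj : ∀ j, ∑ w, x j w ^ 2 ≤ N * (N - 1) + ∑ w, x j w := by
    intro j
    have h1 := hch j
    have h2 : 0 ≤ ∑ u, ∑ v, (if u = v then 0 else (1 - ∑ w, a j u w * a j w v)) :=
      Finset.sum_nonneg fun u _ => Finset.sum_nonneg fun v _ => hnn j u v
    rw [h1, Finset.sum_sub_distrib] at h2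
    linarith
  set Q : ℤ := ∑ j, ∑ w, x j w ^ 2 with hQ
  set T : ℤ := ∑ j, ∑ w, x j w with hT
  have hQT : Q ≤ m * (N * (N - 1)) + T := by
    have := Finset.sum_le_sum (fun j (_ : j ∈ Finset.univ) => hcj j)
    rw [Finset.sum_add_distrib] at this
    simpa using this
  have hTD : N * D ≤ T := by
    have := Finset.sum_le_sum (fun j (_ : j ∈ Finset.univ) => hdeg j)
    rw [hT, Finset.sum_comm]
    simpa using this
  have hsq : ∑ j, ∑ w, (m * x j w - D) ^ 2 = m ^ 2 * Q - 2 * m * D * T + m * (N * D ^ 2) := by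
    have : ∀ j w, (m * x j w - D) ^ 2 = m ^ 2 * x j w ^ 2 - 2 * m * D * x j w + D ^ 2 := by
      intro j w; ring
    simp_rw [this, Finset.sum_add_distrib, Finset.sum_sub_distrib, ← Finset.mul_sum]
    simp [hQ, hT]
  have hkey : m ^ 2 * Q - 2 * m * D * T + m * (N * D ^ 2) ≤
      m * N * (m ^ 2 * (N - 1) + m * D - D ^ 2) := by
    have h1 : (m : ℤ) ^ 2 * Q ≤ m ^ 2 * (m * (N * (N - 1)) + T) :=
      mul_le_mul_of_nonneg_left hQT (by positivity)
    have h2 : 0 ≤ (2 * m * D - m ^ 2) * (T - N * D) := by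
      apply mul_nonneg
      · nlinarith
      · linarith
    nlinarith
  have hneg : (m : ℤ) ^ 2 * (N - 1) + m * D - D ^ 2 ≤ 0 := by
    rw [hN]; nlinarith
  have hsq0 : 0 ≤ ∑ j, ∑ w, (m * x j w - D) ^ 2 :=
    Finset.sum_nonneg fun j _ => Finset.sum_nonneg fun w _ => sq_nonneg _
  have hmN : (0 : ℤ) < m * N := by positivity
  have hzero : (m : ℤ) ^ 2 * (N - 1) + m * D - D ^ 2 = 0 := by
    rw [hsq] at hsq0
    by_contra hne
    have : (m : ℤ) ^ 2 * (N - 1) + m * D - D ^ 2 < 0 := lt_of_le_of_ne hneg hne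
    have := mul_neg_of_pos_of_neg hmN this
    linarith
  have hall : ∑ j, ∑ w, (m * x j w - D) ^ 2 = 0 := by
    apply le_antisymm _ hsq0
    rw [hsq]; rw [hzero] at hkey; linarith
  have hxD : ∀ j w, m * x j w = D := by
    intro j w
    have h1 := (Finset.sum_eq_zero_iff_of_nonneg
      (fun j _ => Finset.sum_nonneg fun w _ => sq_nonneg _)).1 hall j (Finset.mem_univ _)
    have h2 := (Finset.sum_eq_zero_iff_of_nonneg
      (fun w _ => sq_nonneg _)).1 h1 w (Finset.mem_univ _)
    have h3 := pow_eq_zero_iff (two_ne_zero) |>.1 h2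
    linarith
  let j0 : Fin m := ⟨0, hm⟩
  let v0 : Fin N := ⟨0, hN0⟩
  obtain ⟨d, hd⟩ : ∃ d, d = x j0 v0 := ⟨_, rfl⟩
  have hDd : D = m * d := by rw [hd, hxD]
  have hreg : ∀ w, x j0 w = d := by
    intro w
    have := hxD j0 w
    rw [hDd] at this
    exact mul_left_cancel₀ (by positivity) this
  have hNd : (N : ℤ) = d ^ 2 - d + 1 := by
    have h1 : (m : ℤ) ^ 2 * (N - 1 + d - d ^ 2) = 0 := by
      rw [hDd] at hzero; linarith
    have h2 : (N : ℤ) - 1 + d - d ^ 2 = 0 := by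
      rcases mul_eq_zero.1 h1 with h | h
      · have : (0 : ℤ) < (m : ℤ) ^ 2 := by positivity
        omega
      · exact h
    linarith
  have hcod1 : ∀ u v, u ≠ v → ∑ w, a j0 u w * a j0 w v = 1 := by
    intro u v huv
    have h1 := hch j0
    simp_rw [hreg] at h1
    rw [Finset.sum_const, Finset.card_univ, Fintype.card_fin, nsmul_eq_mul,
      show (N : ℤ) * (N - 1) - N * (d ^ 2 - d) = 0 by
        rw [show (N : ℤ) - 1 = d ^ 2 - d by linarith]; ring] at h1
    have h2 := (Finset.sum_eq_zero_iff_of_nonneg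
      (fun u _ => Finset.sum_nonneg fun v _ => hnn j0 u v)).1 h1 u (Finset.mem_univ _)
    have h3 := (Finset.sum_eq_zero_iff_of_nonneg
      (fun v _ => hnn j0 u v)).1 h2 v (Finset.mem_univ _)
    rw [if_neg huv] at h3
    linarith
  have hd2 := friendship_degree N d (a j0) (hdiag j0) (hsym j0) (h01 j0) hreg hcod1 hNd
  have hd1 : 1 ≤ d := by
    by_contra hlt
    push Not at hlt
    nlinarith
  have hds : d * (d - 1 - m) = s := by rw [hDd] at hN; linarith
  have : d = 1 ∨ d = 2 := by omega
  rcases this with rfl | rfl <;> omega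

lemma arith_core (m s : ℕ) (hm : 1 ≤ m) :
    ∃ D : ℕ, (1 + (s : ℝ) + ((m : ℝ) ^ 2 + m) / 2 +
      (⌈(m : ℝ) * Real.sqrt (((m : ℝ) + 1) ^ 2 / 4 + s)⌉ : ℝ)) = ((D + s + 1 : ℕ) : ℝ) ∧
      m ≤ D ∧ ((m : ℤ) + m ^ 2) * D + m ^ 2 * s ≤ (D : ℤ) ^ 2 := by
  set r : ℝ := (m : ℝ) * Real.sqrt (((m : ℝ) + 1) ^ 2 / 4 + s) with hr
  have hr0 : 0 ≤ r := by positivity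
  have hr2 : r ^ 2 = m ^ 2 * (((m : ℝ) + 1) ^ 2 / 4 + s) := by
    rw [hr, mul_pow, Real.sq_sqrt (by positivity)]
  have hc0 : 0 ≤ ⌈r⌉ := Int.ceil_nonneg hr0
  obtain ⟨t, ht⟩ := Int.eq_ofNat_of_zero_le hc0
  have hrt : r ≤ t := by
    have := Int.le_ceil r
    rw [ht] at this
    exact_mod_cast this
  obtain ⟨q, hq⟩ := Nat.even_mul_succ_self m
  have hqR : ((m : ℝ) ^ 2 + m) = 2 * q := by
    have : ((m * (m + 1) : ℕ) : ℝ) = ((q + q : ℕ) : ℝ) := by exact_mod_cast hq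
    push_cast at this
    linarith
  refine ⟨q + t, ?_, ?_, ?_⟩
  · rw [ht, hqR]
    push_cast
    ring
  · nlinarith
  · have h2 : r ^ 2 ≤ (t : ℝ) ^ 2 := by gcongr
    have h3 : ((m : ℝ) + m ^ 2) * ((q + t : ℕ) : ℝ) + m ^ 2 * s ≤ ((q + t : ℕ) : ℝ) ^ 2 := by
      have h4 : r ^ 2 = q ^ 2 + m ^ 2 * s := by
        rw [hr2, show (q : ℝ) = ((m : ℝ) ^ 2 + m) / 2 by linarith]; ring
      rw [show (m : ℝ) + m ^ 2 = 2 * q by linarith]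
      push_cast
      nlinarith
    exact_mod_cast h3

lemma vec4_injective {α : Type} (u w v z : α) (h1 : u ≠ w) (h2 : u ≠ v) (h3 : u ≠ z)
    (h4 : w ≠ v) (h5 : w ≠ z) (h6 : v ≠ z) :
    Function.Injective (![u, w, v, z] : Fin 4 → α) := by
  rw [← List.nodup_ofFn]
  simp [*]

lemma ramsey_main (m n : ℕ) (k : Fin n → ℕ) (hm : 1 ≤ m)
    (hk : ∀ i, 1 ≤ k i) (s D N : ℕ) (hs : ∑ i, k i = s + n) (hms : 2 ≤ m + s)
    (hN : N = D + s + 1) (hDm : m ≤ D)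
    (hD : ((m : ℤ) + m ^ 2) * D + m ^ 2 * s ≤ (D : ℤ) ^ 2) :
    ramseyProp (List.replicate m C4 ++
        List.ofFn (fun i => (⟨Fin (k i + 1), starGraph (k i)⟩ : VGraph))) N := by
  set l := List.replicate m C4 ++
        List.ofFn (fun i => (⟨Fin (k i + 1), starGraph (k i)⟩ : VGraph)) with hl
  intro c
  by_contra hcon
  have hlen : l.length = m + n := by simp [hl]
  have hgen : ∀ (i : Fin l.length) (X : VGraph), l.get i = X →
      ∀ f : X.V ↪ Fin N, ∃ u v, X.G.Adj u v ∧ c s(f u, f v) ≠ i := by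
    intro i X hX f
    subst hX
    by_contra hno
    push Not at hno
    exact hcon ⟨i, f, hno⟩
  -- C4 freeness
  have hC4 : ∀ j : Fin m, ∀ u v w z : Fin N, u ≠ v → w ≠ z → u ≠ w → u ≠ z → v ≠ w → v ≠ z →
      (c s(u, w)).val = j → (c s(w, v)).val = j → (c s(u, z)).val = j → (c s(z, v)).val = j →
      False := by
    intro j u v w z huv hwz huw huz hvw hvz h1 h2 h3 h4
    have hj : j.val < l.length := by omega
    have hget : l.get ⟨j.val, hj⟩ = C4 := by
      simp [hl]
    have hinj : Function.Injective (![u, w, v, z] : Fin 4 → Fin N) :=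
      vec4_injective u w v z huw huv huz hvw.symm hwz hvz
    obtain ⟨x, y, hxy, hne⟩ := hgen _ _ hget ⟨_, hinj⟩
    apply hne
    apply Fin.ext
    change (cycleGraph 4).Adj x y at hxy
    change Fin 4 at x y
    have h1' := h1; have h2' := h2; have h3' := h3; have h4' := h4
    rw [Sym2.eq_swap] at h1' h2' h3' h4'
    fin_cases x <;> fin_cases y <;>
      first
      | exact h1 | exact h2 | exact h3 | exact h4
      | exact h1' | exact h2' | exact h3' | exact h4'
      | (exfalso; revert hxy; decide)
  -- star degree bound
  have hstar : ∀ i : Fin n, ∀ v : Fin N,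
      (Finset.univ.filter fun u => u ≠ v ∧ (c s(v, u)).val = m + i.val).card + 1 ≤ k i := by
    intro i v
    by_contra hlt
    push Not at hlt
    have hle : k i ≤ (Finset.univ.filter
      fun u => u ≠ v ∧ (c s(v, u)).val = m + i.val).card := by omega
    obtain ⟨t, hts, htc⟩ := Finset.exists_subset_card_eq hle
    have hj : m + i.val < l.length := by omega
    have hget : l.get ⟨m + i.val, hj⟩ = ⟨Fin (k i + 1), starGraph (k i)⟩ := by
      simp [hl]
    let e := t.orderEmbOfFin htc
    have he : ∀ x, e x ≠ v ∧ (c s(v, e x)).val = m + i.val := by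
      intro x
      have := hts (t.orderEmbOfFin_mem htc x)
      simpa using this
    have hinj : Function.Injective (Fin.cons v e : Fin (k i + 1) → Fin N) := by
      rw [Fin.cons_injective_iff]
      refine ⟨?_, e.injective⟩
      rintro ⟨x, hx⟩
      exact (he x).1 hx
    obtain ⟨x, y, hxy, hne⟩ := hgen _ _ hget ⟨_, hinj⟩
    apply hne
    apply Fin.ext
    change Fin (k i + 1) at x y
    change (_root_.starGraph (k i)).Adj x y at hxy
    change (c s((Fin.cons v e : Fin (k i + 1) → Fin N) x,
      (Fin.cons v e : Fin (k i + 1) → Fin N) y)).val = m + i.val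
    simp only [_root_.starGraph, SimpleGraph.fromRel_adj] at hxy
    obtain ⟨hne', h0 | h0⟩ := hxy
    · subst h0
      obtain ⟨y', rfl⟩ := Fin.exists_succ_eq.2 (Ne.symm hne')
      simpa using (he y').2
    · subst h0
      obtain ⟨x', rfl⟩ := Fin.exists_succ_eq.2 hne'
      rw [Sym2.eq_swap]
      simpa using (he x').2
  -- total degree
  let dg : ℕ → Fin N → ℕ := fun i v =>
    (Finset.univ.filter fun u => u ≠ v ∧ (c s(v, u)).val = i).card
  have htot : ∀ v, ∑ i ∈ Finset.range (m + n), dg i v = N - 1 := by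
    intro v
    have h1 := Finset.card_eq_sum_card_fiberwise (s := Finset.univ.erase v)
      (t := Finset.range (m + n)) (f := fun u => (c s(v, u)).val) (by
        intro u _
        have := (c s(v, u)).isLt
        simp only [Finset.coe_range, Set.mem_Iio]
        omega)
    rw [Finset.card_erase_of_mem (Finset.mem_univ _), Finset.card_univ, Fintype.card_fin] at h1
    rw [h1]
    refine Finset.sum_congr rfl fun i _ => ?_
    simp only [dg]
    congr 1
    ext u
    simp
  have hdeg : ∀ v, D ≤ ∑ j : Fin m, dg j v := by
    intro v
    have h1 := htot v
    rw [Finset.sum_range_add, Finset.sum_range, Finset.sum_range] at h1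
    have h2 := Finset.sum_le_sum (fun i (_ : i ∈ Finset.univ) => hstar i v)
    rw [Finset.sum_add_distrib, hs] at h2
    simp only [Finset.sum_const, Finset.card_univ, Fintype.card_fin, smul_eq_mul, mul_one] at h2
    change ∑ i : Fin n, dg (m + i.val) v + n ≤ s + n at h2
    omega
  refine ramsey_core N m s D
    (fun j u v => if v ≠ u ∧ (c s(u, v)).val = j.val then 1 else 0)
    (by omega) hm (by positivity) (by exact_mod_cast hms) (by exact_mod_cast hN)
    (by exact_mod_cast hDm) hD ?_ ?_ ?_ ?_ ?_
  · intro j u; simp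
  · intro j u v
    simp only [Sym2.eq_swap (a := u) (b := v), ne_comm (a := u) (b := v)]
  · intro j u v
    split_ifs <;> simp
  · intro j u v huv
    by_contra hlt
    push Not at hlt
    have h1 : ∀ w, ((if w ≠ u ∧ (c s(u, w)).val = j.val then (1 : ℤ) else 0) *
        (if v ≠ w ∧ (c s(w, v)).val = j.val then 1 else 0)) =
        if (w ≠ u ∧ (c s(u, w)).val = j.val) ∧ (v ≠ w ∧ (c s(w, v)).val = j.val)
          then 1 else 0 := by
      intro w
      rw [ite_zero_mul_ite_zero, mul_one]
    simp_rw [h1] at hlt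
    rw [Finset.sum_boole] at hlt
    have hlt' := Nat.cast_lt.1 (hlt.trans_eq' (by simp : ((1 : ℕ) : ℤ) = 1))
    obtain ⟨w, hw, z, hz, hwz⟩ := Finset.one_lt_card.1 hlt'
    simp only [Finset.mem_filter, Finset.mem_univ, true_and] at hw hz
    exact hC4 j u v w z huv hwz hw.1.1.symm hz.1.1.symm hw.2.1 hz.2.1 hw.1.2 hw.2.2 hz.1.2 hz.2.2
  · intro v
    have := hdeg v
    have h2 : ((D : ℕ) : ℤ) ≤ ((∑ j : Fin m, dg j v : ℕ) : ℤ) := by exact_mod_cast this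
    refine h2.trans_eq ?_
    push_cast
    refine Finset.sum_congr rfl fun j _ => ?_
    simp only [dg]
    rw [Finset.sum_boole]

/-- Upper bound on `R(C₄,…,C₄ (m copies), K_{1,k₁},…,K_{1,kₙ})`. -/
theorem statement6 (m n : ℕ) (k : Fin n → ℕ) (hm : 1 ≤ m) (hn : 1 ≤ n)
    (hk : ∀ i, 1 ≤ k i) (h : n + 2 ≤ m + ∑ i, k i) :
    ((ramseyNumber (List.replicate m C4 ++
        List.ofFn (fun i => (⟨Fin (k i + 1), starGraph (k i)⟩ : VGraph))) : ℝ)) ≤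
      1 + (∑ i, (k i : ℝ)) - n + ((m : ℝ) ^ 2 + m) / 2 +
      (⌈(m : ℝ) * Real.sqrt (((m : ℝ) + 1) ^ 2 / 4 + (∑ i, (k i : ℝ)) - n)⌉ : ℝ) := by
  obtain ⟨s, hs⟩ : ∃ s, ∑ i, k i = s + n := by
    have h1 := Finset.sum_le_sum (fun i (_ : i ∈ Finset.univ) => hk i)
    simp only [Finset.sum_const, Finset.card_univ, Fintype.card_fin, smul_eq_mul, mul_one] at h1
    exact ⟨∑ i, k i - n, by omega⟩
  have hsR : ∑ i, (k i : ℝ) = s + n := by exact_mod_cast hs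
  obtain ⟨D, hDeq, hDm, hD⟩ := arith_core m s hm
  have hP := ramsey_main m n k hm hk s D (D + s + 1) hs (by omega) rfl hDm hD
  have hle : ramseyNumber (List.replicate m C4 ++
      List.ofFn (fun i => (⟨Fin (k i + 1), starGraph (k i)⟩ : VGraph))) ≤ D + s + 1 :=
    Nat.sInf_le ⟨by omega, hP⟩
  rw [hsR, show ((m : ℝ) + 1) ^ 2 / 4 + ((s : ℝ) + n) - n = ((m : ℝ) + 1) ^ 2 / 4 + s by ring,
    show (1 : ℝ) + (s + n) - n = 1 + s by ring, hDeq]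
  exact_mod_cast hle
end

section
/- Let k, m ≥ 1 be integers with m + k > 3. Then R(C_4, …, C_4, K_{1,k}) (with m copies of C_4) ≤ k + (m² + m)/2 + ⌈ m · √( k + (m² + 2m − 3)/4 ) ⌉. -/
open SimpleGraph

open Finset in
/-- Number of common neighbours. -/
noncomputable def cdg {V : Type} [Fintype V] (G : SimpleGraph V) (u v : V) : ℕ :=
  by classical exact (univ.filter (fun w => G.Adj w u ∧ G.Adj w v)).card

open Finset in
/-- Degree, classically. -/
noncomputable def dg {V : Type} [Fintype V] (G : SimpleGraph V) (u : V) : ℕ :=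
  by classical exact (univ.filter (fun w => G.Adj u w)).card

lemma cdg_self {V : Type} [Fintype V] (G : SimpleGraph V) (u : V) : cdg G u u = dg G u := by
  classical
  simp [cdg, dg, G.adj_comm]

open Finset in
lemma sum_dg_sq {V : Type} [Fintype V] (G : SimpleGraph V) :
    ∑ w, dg G w ^ 2 = ∑ u, ∑ v, cdg G u v := by
  classical
  simp only [cdg, dg, card_filter, sq, sum_mul_sum]
  rw [sum_comm]
  refine sum_congr rfl fun u _ => ?_
  rw [sum_comm]
  refine sum_congr rfl fun v _ => sum_congr rfl fun w _ => ?_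
  by_cases h1 : G.Adj w u <;> by_cases h2 : G.Adj w v <;> simp [h1, h2]

open Finset in
lemma sum_dg_sq_le {V : Type} [Fintype V] (G : SimpleGraph V)
    (h : ∀ u v, u ≠ v → cdg G u v ≤ 1) :
    (∑ w, (dg G w : ℤ) ^ 2) ≤ ∑ w, (dg G w : ℤ) +
      (Fintype.card V : ℤ) * ((Fintype.card V : ℤ) - 1) := by
  classical
  have h1 : (∑ w, (dg G w : ℤ) ^ 2) = ∑ u, ∑ v, (cdg G u v : ℤ) := by
    exact_mod_cast sum_dg_sq G
  rw [h1]
  have h2 : ∀ u, ∑ v, (cdg G u v : ℤ) ≤ dg G u + ((Fintype.card V : ℤ) - 1) := by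
    intro u
    rw [← add_sum_erase univ _ (mem_univ u), cdg_self]
    have : ∑ v ∈ univ.erase u, (cdg G u v : ℤ) ≤ ∑ v ∈ univ.erase u, 1 := by
      apply sum_le_sum
      intro v hv
      exact_mod_cast h u v (ne_of_mem_erase hv).symm
    have hc : ((univ.erase u).card : ℤ) = (Fintype.card V : ℤ) - 1 := by
      have h5 := card_erase_add_one (mem_univ u)
      rw [card_univ] at h5
      rw [← h5]
      push_cast
      ring
    simp only [sum_const, nsmul_eq_mul, mul_one, hc] at this
    linarith
  calc _ ≤ ∑ u, ((dg G u : ℤ) + ((Fintype.card V : ℤ) - 1)) := sum_le_sum fun u _ => h2 u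
    _ = _ := by rw [sum_add_distrib]; simp; ring

open Finset in
/-- Equality case. -/
lemma cdg_eq_one {V : Type} [Fintype V] (G : SimpleGraph V)
    (h : ∀ u v, u ≠ v → cdg G u v ≤ 1) (d : ℕ) (hd : ∀ v, dg G v = d)
    (hN : (Fintype.card V : ℤ) - 1 ≤ (d : ℤ) ^ 2 - d) :
    (∀ u v, u ≠ v → cdg G u v = 1) := by
  classical
  intro a b hab
  by_contra hne
  have hlt : cdg G a b < 1 := lt_of_le_of_ne (h a b hab) hne
  have h1 : (∑ w, (dg G w : ℤ) ^ 2) = ∑ u, ∑ v, (cdg G u v : ℤ) := by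
    exact_mod_cast sum_dg_sq G
  have h0 : ∀ u v, (cdg G u v : ℤ) ≤ if u = v then (d : ℤ) else 1 := by
    intro u v
    split_ifs with huv
    · subst huv; rw [cdg_self, hd]
    · exact_mod_cast h u v huv
  have h2 : ∑ u, ∑ v, (cdg G u v : ℤ) < ∑ u : V, ∑ v : V, if u = v then (d : ℤ) else 1 := by
    apply sum_lt_sum
    · intro u _
      exact sum_le_sum fun v _ => h0 u v
    · refine ⟨a, mem_univ _, sum_lt_sum (fun v _ => h0 a v) ⟨b, mem_univ _, ?_⟩⟩
      rw [if_neg hab]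
      exact_mod_cast hlt
  have h3 : ∀ u : V, (∑ v : V, if u = v then (d : ℤ) else 1) = d + (Fintype.card V - 1) := by
    intro u
    have : ∀ v : V, (if u = v then (d : ℤ) else 1) = (if u = v then (d : ℤ) - 1 else 0) + 1 := by
      intro v; split_ifs <;> ring
    simp only [this, sum_add_distrib]
    simp
    ring
  rw [← h1] at h2
  simp only [h3, hd, sum_const, card_univ, nsmul_eq_mul] at h2
  have : (0 : ℤ) ≤ Fintype.card V := by positivity
  nlinarith

open Finset in
lemma card_of_friend {V : Type} [Fintype V] [Nonempty V] (G : SimpleGraph V)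
    (h : ∀ u v, u ≠ v → cdg G u v = 1) (d : ℕ) (hd : ∀ v, dg G v = d) :
    (Fintype.card V : ℤ) = (d : ℤ) ^ 2 - d + 1 := by
  classical
  have h1 : (∑ w, (dg G w : ℤ) ^ 2) = ∑ u, ∑ v, (cdg G u v : ℤ) := by
    exact_mod_cast sum_dg_sq G
  have h0 : ∀ u v, (cdg G u v : ℤ) = if u = v then (d : ℤ) else 1 := by
    intro u v
    split_ifs with huv
    · subst huv; rw [cdg_self, hd]
    · exact_mod_cast h u v huv
  have h3 : ∀ u : V, (∑ v : V, if u = v then (d : ℤ) else 1) = d + (Fintype.card V - 1) := by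
    intro u
    have : ∀ v : V, (if u = v then (d : ℤ) else 1) = (if u = v then (d : ℤ) - 1 else 0) + 1 := by
      intro v; split_ifs <;> ring
    simp only [this, sum_add_distrib]
    simp
    ring
  simp only [h0, h3, hd, sum_const, card_univ, nsmul_eq_mul] at h1
  have hp : (Fintype.card V : ℤ) ≠ 0 := by
    exact_mod_cast Fintype.card_ne_zero
  have := mul_left_cancel₀ hp h1
  linarith

open Finset in
/-- Regular part of the friendship theorem. -/
lemma friend_deg {V : Type} [Fintype V] [Nonempty V] (G : SimpleGraph V)
    (h : ∀ u v, u ≠ v → cdg G u v = 1) (d : ℕ) (hd : ∀ v, dg G v = d) : d ≤ 2 := by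
  classical
  by_contra! hd3
  have hcard := card_of_friend G h d hd
  let p := (d - 1).minFac
  have hp : p.Prime := Nat.minFac_prime (by omega)
  have : Fact p.Prime := ⟨hp⟩
  have hdp : ((d : ℕ) : ZMod p) = 1 := by
    have h1 : ((d - 1 : ℕ) : ZMod p) = 0 := (ZMod.natCast_eq_zero_iff _ _).2 (Nat.minFac_dvd _)
    have : d = (d - 1) + 1 := by omega
    rw [this, Nat.cast_add, h1]; simp
  have hNp : ((Fintype.card V : ℕ) : ZMod p) = 1 := by
    have := congrArg (Int.cast : ℤ → ZMod p) hcard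
    push_cast at this
    rw [this, hdp]; ring
  let A := G.adjMatrix (ZMod p)
  let J : Matrix V V (ZMod p) := Matrix.of fun _ _ => 1
  have hA2 : A * A = J := by
    ext u v
    have : (A * A) u v = (cdg G u v : ZMod p) := by
      simp only [A, Matrix.mul_apply, SimpleGraph.adjMatrix_apply, cdg, card_filter, Nat.cast_sum]
      refine sum_congr rfl fun w _ => ?_
      rw [G.adj_comm u w]
      by_cases h1 : G.Adj w u <;> by_cases h2 : G.Adj w v <;> simp [h1, h2]
    rw [this]
    by_cases huv : u = v
    · subst huv; rw [cdg_self, hd, hdp]; rfl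
    · rw [h u v huv]; simp [J]
  have hAJ : J * A = J := by
    ext u v
    have : (J * A) u v = (dg G v : ZMod p) := by
      simp only [A, J, Matrix.mul_apply, SimpleGraph.adjMatrix_apply, dg, card_filter, Nat.cast_sum]
      refine sum_congr rfl fun w _ => ?_
      rw [G.adj_comm w v]
      by_cases h1 : G.Adj v w <;> simp [h1]
    rw [this, hd, hdp]; rfl
  have hpow : ∀ n, A ^ (n + 2) = J := by
    intro n
    induction n with
    | zero => rw [zero_add, sq, hA2]
    | succ n ih => rw [show n + 1 + 2 = (n + 2) + 1 by ring, pow_succ, ih, hAJ]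
  have htr := ZMod.trace_pow_card A
  have hp2 := hp.two_le
  obtain ⟨q, hq⟩ := Nat.exists_eq_add_of_le' hp2
  have e1 : A ^ p = J := (congrArg (fun n => A ^ n) hq).trans (hpow q)
  rw [e1] at htr
  have e2 : A.trace = 0 := SimpleGraph.trace_adjMatrix ..
  rw [e2, zero_pow hp.ne_zero] at htr
  have e3 : J.trace = 1 := by
    simp [Matrix.trace, J, hNp]
  rw [e3] at htr
  exact one_ne_zero htr

open Finset in
lemma core_s7 {V : Type} [Fintype V] (m k D : ℕ) (G : Fin m → SimpleGraph V)
    (hk : 1 ≤ k) (hm : 1 ≤ m) (hmk : 3 < m + k) (hN : Fintype.card V = D + k)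
    (hD : (m : ℤ) ^ 2 * (D + k - 1) ≤ D ^ 2 - m * D) (hmD : m ≤ D)
    (hc : ∀ i u v, u ≠ v → cdg (G i) u v ≤ 1)
    (hdeg : ∀ v, D ≤ ∑ i, dg (G i) v) : False := by
  classical
  have : Nonempty V := Fintype.card_pos_iff.1 (by omega)
  have hNz : (Fintype.card V : ℤ) = D + k := by exact_mod_cast hN
  set N : ℤ := (Fintype.card V : ℤ) with hNdef
  have hN0 : 0 < N := by omega
  set T : ℤ := ∑ i, ∑ v, (dg (G i) v : ℤ) with hT
  have hTD : N * D ≤ T := by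
    rw [hT, sum_comm]
    have : ∑ v : V, (D : ℤ) ≤ ∑ v : V, ∑ i, (dg (G i) v : ℤ) :=
      sum_le_sum fun v _ => by exact_mod_cast hdeg v
    simpa using this
  have hS : ∑ i, ∑ v, (dg (G i) v : ℤ) ^ 2 ≤ T + m * (N * (N - 1)) := by
    have := sum_le_sum (s := univ) fun i _ => sum_dg_sq_le (G i) (hc i)
    rw [sum_add_distrib] at this
    simpa using this
  have hexp : ∑ i, ∑ v, ((m : ℤ) * dg (G i) v - D) ^ 2 =
      m ^ 2 * (∑ i, ∑ v, (dg (G i) v : ℤ) ^ 2) - 2 * m * D * T + m * (N * D ^ 2) := by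
    have : ∀ i v, ((m : ℤ) * dg (G i) v - D) ^ 2 =
      m ^ 2 * (dg (G i) v : ℤ) ^ 2 - 2 * m * D * (dg (G i) v : ℤ) + D ^ 2 := by
      intro i v; ring
    simp only [this, sum_add_distrib, sum_sub_distrib, ← mul_sum]
    simp [hT, hNdef]
  have hm0 : (0 : ℤ) < m := by exact_mod_cast hm
  have hmD' : (m : ℤ) ≤ D := by exact_mod_cast hmD
  have hle : ∑ i, ∑ v, ((m : ℤ) * dg (G i) v - D) ^ 2 ≤ 0 := by
    rw [hexp]
    have a1 : (m : ℤ) ^ 2 * (∑ i, ∑ v, (dg (G i) v : ℤ) ^ 2) ≤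
      m ^ 2 * (T + m * (N * (N - 1))) := mul_le_mul_of_nonneg_left hS (by positivity)
    have a2 : 0 ≤ ((m : ℤ) * (2 * D - m)) * (T - N * D) :=
      mul_nonneg (mul_nonneg hm0.le (by linarith)) (by linarith)
    have a3 : 0 ≤ ((m : ℤ) * N) * (D ^ 2 - m * D - m ^ 2 * (N - 1)) := by
      apply mul_nonneg (by positivity)
      rw [hNz]; linarith
    nlinarith
  have hz : ∀ i v, (m : ℤ) * dg (G i) v = D := by
    intro i v
    have b1 : ((m : ℤ) * dg (G i) v - D) ^ 2 ≤ ∑ v, ((m : ℤ) * dg (G i) v - D) ^ 2 :=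
      single_le_sum (f := fun v => ((m : ℤ) * dg (G i) v - D) ^ 2)
        (fun _ _ => sq_nonneg _) (mem_univ v)
    have b2 : ∑ v, ((m : ℤ) * dg (G i) v - D) ^ 2 ≤ ∑ i, ∑ v, ((m : ℤ) * dg (G i) v - D) ^ 2 :=
      single_le_sum (f := fun i => ∑ v, ((m : ℤ) * dg (G i) v - D) ^ 2)
        (fun _ _ => sum_nonneg fun _ _ => sq_nonneg _) (mem_univ i)
    have b3 : ((m : ℤ) * dg (G i) v - D) ^ 2 = 0 := le_antisymm (by linarith) (sq_nonneg _)
    have := pow_eq_zero_iff (two_ne_zero) |>.1 b3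
    linarith
  let i0 : Fin m := ⟨0, hm⟩
  obtain ⟨v0⟩ := ‹Nonempty V›
  have : Nonempty V := ⟨v0⟩
  set d := dg (G i0) v0 with hd
  have hmd : (m : ℤ) * d = D := hz i0 v0
  have hreg : ∀ v, dg (G i0) v = d := by
    intro v
    have := (hz i0 v).trans hmd.symm
    exact_mod_cast mul_left_cancel₀ hm0.ne' this
  have hdN : N - 1 ≤ (d : ℤ) ^ 2 - d := by
    have : (m : ℤ) ^ 2 * (N - 1) ≤ m ^ 2 * ((d : ℤ) ^ 2 - d) := by
      rw [hNz]
      refine hD.trans (le_of_eq ?_)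
      rw [← hmd]; ring
    exact le_of_mul_le_mul_left this (by positivity)
  have hone := cdg_eq_one (G i0) (hc i0) d hreg hdN
  have hcard := card_of_friend (G i0) hone d hreg
  have hd2 := friend_deg (G i0) hone d hreg
  have hkz : (1 : ℤ) ≤ k := by exact_mod_cast hk
  interval_cases d <;> simp at hmd hcard <;> omega

/-- Colour class graph. -/
def colG {N n : ℕ} (c : Sym2 (Fin N) → Fin n) (i : Fin n) : SimpleGraph (Fin N) where
  Adj u v := u ≠ v ∧ c s(u, v) = i
  symm := ⟨fun u v h => ⟨h.1.symm, by rw [Sym2.eq_swap]; exact h.2⟩⟩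
  loopless := ⟨fun u h => h.1 rfl⟩

open Finset in
lemma cyc {N : ℕ} (G : SimpleGraph (Fin N)) (u v : Fin N) (huv : u ≠ v)
    (h : 1 < cdg G u v) : ∃ f : Fin 4 ↪ Fin N, ∀ a b, (SimpleGraph.cycleGraph 4).Adj a b →
      G.Adj (f a) (f b) := by
  classical
  obtain ⟨x, hx, y, hy, hxy⟩ := one_lt_card.1 h
  simp only [mem_filter, mem_univ, true_and] at hx hy
  refine ⟨⟨![u, x, v, y], ?_⟩, ?_⟩
  · have h1 := hx.1.ne
    have h2 := hx.2.ne
    have h3 := hy.1.ne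
    have h4 := hy.2.ne
    intro a b hab
    fin_cases a <;> fin_cases b <;> simp_all [eq_comm]
  · have h1 := hx.1.symm
    have h2 := hx.2.symm
    have h3 := hy.1.symm
    have h4 := hy.2.symm
    intro a b hab
    rw [SimpleGraph.cycleGraph_adj] at hab
    fin_cases a <;> fin_cases b <;>
      first
      | exact absurd hab (by decide)
      | exact h1
      | exact h2
      | exact h3
      | exact h4
      | exact hx.1
      | exact hx.2
      | exact hy.1
      | exact hy.2

open Finset in
lemma sta {N k : ℕ} (G : SimpleGraph (Fin N)) (v : Fin N) (h : k ≤ dg G v) :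
    ∃ f : Fin (k + 1) ↪ Fin N, ∀ a b, (_root_.starGraph k).Adj a b → G.Adj (f a) (f b) := by
  classical
  unfold dg at h
  obtain ⟨s, hs, hsk⟩ := exists_subset_card_eq h
  let e := s.orderEmbOfFin hsk
  have he : ∀ i, G.Adj v (e i) := fun i => by
    have := hs (s.orderEmbOfFin_mem hsk i)
    simpa using this
  refine ⟨⟨Fin.cons v e, ?_⟩, ?_⟩
  · rw [Fin.cons_injective_iff]
    refine ⟨?_, e.injective⟩
    rintro ⟨i, hi⟩
    exact (he i).ne hi.symm
  · intro a b hab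
    rw [_root_.starGraph, SimpleGraph.fromRel_adj] at hab
    obtain ⟨hne, h0 | h0⟩ := hab
    · subst h0
      obtain ⟨j, rfl⟩ := Fin.exists_succ_eq.2 hne.symm
      simpa using he j
    · subst h0
      obtain ⟨j, rfl⟩ := Fin.exists_succ_eq.2 hne
      simpa using (he j).symm

open Finset in
lemma colour (m k D : ℕ) (hk : 1 ≤ k) (hm : 1 ≤ m) (hmk : 3 < m + k)
    (hD : (m : ℤ) ^ 2 * (D + k - 1) ≤ D ^ 2 - m * D) (hmD : m ≤ D)
    (c : Sym2 (Fin (D + k)) → Fin (m + 1)) :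
    (∃ i : Fin m, ∃ f : Fin 4 ↪ Fin (D + k), ∀ a b, (SimpleGraph.cycleGraph 4).Adj a b →
      c s(f a, f b) = i.castSucc) ∨
    (∃ f : Fin (k + 1) ↪ Fin (D + k), ∀ a b, (_root_.starGraph k).Adj a b →
      c s(f a, f b) = Fin.last m) := by
  classical
  by_contra! hcon
  obtain ⟨h1, h2⟩ := hcon
  refine core_s7 m k D (fun i => colG c i.castSucc) hk hm hmk (by simp) hD hmD ?_ ?_
  · intro i u v huv
    by_contra! hlt
    obtain ⟨f, hf⟩ := cyc _ u v huv hlt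
    obtain ⟨a, b, hab, hne⟩ := h1 i f
    exact hne (hf a b hab).2
  · intro v
    have hlast : dg (colG c (Fin.last m)) v < k := by
      by_contra! hge
      obtain ⟨f, hf⟩ := sta _ v hge
      obtain ⟨a, b, hab, hne⟩ := h2 f
      exact hne (hf a b hab).2
    have htot : ∑ i : Fin (m + 1), dg (colG c i) v = D + k - 1 := by
      have e1 : (univ.erase v).card = D + k - 1 := by
        rw [card_erase_of_mem (mem_univ v)]; simp
      rw [← e1, card_eq_sum_card_fiberwise (f := fun w => c s(v, w)) (t := univ) (by simp)]
      refine sum_congr rfl fun i _ => ?_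
      unfold dg
      congr 1
      ext w
      simp [colG, eq_comm]
    rw [Fin.sum_univ_castSucc] at htot
    omega

lemma ram (m k N : ℕ) (H : ∀ c : Sym2 (Fin N) → Fin (m + 1),
    (∃ i : Fin m, ∃ f : Fin 4 ↪ Fin N, ∀ a b, (SimpleGraph.cycleGraph 4).Adj a b →
      c s(f a, f b) = i.castSucc) ∨
    (∃ f : Fin (k + 1) ↪ Fin N, ∀ a b, (_root_.starGraph k).Adj a b →
      c s(f a, f b) = Fin.last m)) :
    ramseyProp (List.replicate m C4 ++ [(⟨Fin (k + 1), _root_.starGraph k⟩ : VGraph)]) N := by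
  intro c
  have hl : (List.replicate m C4 ++ [(⟨Fin (k + 1), _root_.starGraph k⟩ : VGraph)]).length = m + 1 := by
    simp
  have key : ∀ (i : Fin (List.replicate m C4 ++
      [(⟨Fin (k + 1), _root_.starGraph k⟩ : VGraph)]).length) (X : VGraph),
      (List.replicate m C4 ++ [(⟨Fin (k + 1), _root_.starGraph k⟩ : VGraph)]).get i = X →
      (∃ f : X.V ↪ Fin N, ∀ u v, X.G.Adj u v → c s(f u, f v) = i) →
      ∃ (i : Fin (List.replicate m C4 ++ [(⟨Fin (k + 1), _root_.starGraph k⟩ : VGraph)]).length)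
        (f : ((List.replicate m C4 ++ [(⟨Fin (k + 1), _root_.starGraph k⟩ : VGraph)]).get i).V ↪ Fin N),
      ∀ u v, ((List.replicate m C4 ++
        [(⟨Fin (k + 1), _root_.starGraph k⟩ : VGraph)]).get i).G.Adj u v → c s(f u, f v) = i := by
    rintro i X rfl h
    exact ⟨i, h⟩
  rcases H (fun e => Fin.cast hl (c e)) with ⟨i, f, hf⟩ | ⟨f, hf⟩
  · refine key (Fin.cast hl.symm i.castSucc) C4 ?_ ⟨f, fun u v huv => ?_⟩
    · have : i.val < (List.replicate m C4).length := by simp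
      simp [List.getElem_append_left this]
    · have := hf u v huv
      rw [← this]; rfl
  · refine key (Fin.cast hl.symm (Fin.last m)) ⟨Fin (k + 1), _root_.starGraph k⟩ ?_
      ⟨f, fun u v huv => ?_⟩
    · simp
    · have := hf u v huv
      rw [← this]; rfl

/-- For `k, m ≥ 1` with `m + k > 3`,
`R(C₄,…,C₄ (m copies), K_{1,k}) ≤ k + (m²+m)/2 + ⌈m·√(k + (m²+2m−3)/4)⌉`. -/
theorem statement7 (k m : ℕ) (hk : 1 ≤ k) (hm : 1 ≤ m) (h : 3 < m + k) :
    ((ramseyNumber (List.replicate m C4 ++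
        [(⟨Fin (k + 1), starGraph k⟩ : VGraph)]) : ℝ)) ≤
      (k : ℝ) + ((m : ℝ) ^ 2 + m) / 2 +
      (⌈(m : ℝ) * Real.sqrt ((k : ℝ) + ((m : ℝ) ^ 2 + 2 * m - 3) / 4)⌉ : ℝ) := by
  set s := Real.sqrt ((k : ℝ) + ((m : ℝ) ^ 2 + 2 * m - 3) / 4) with hs
  have hmR : (1 : ℝ) ≤ m := by exact_mod_cast hm
  have hkR : (1 : ℝ) ≤ k := by exact_mod_cast hk
  have hs2 : s ^ 2 = (k : ℝ) + ((m : ℝ) ^ 2 + 2 * m - 3) / 4 :=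
    Real.sq_sqrt (by nlinarith)
  have hs0 : 0 ≤ s := Real.sqrt_nonneg _
  have hc0 : 0 ≤ ⌈(m : ℝ) * s⌉ := Int.ceil_nonneg (by positivity)
  obtain ⟨q, hq⟩ := Int.eq_ofNat_of_zero_le hc0
  have hqs : (m : ℝ) * s ≤ q := by
    have := Int.le_ceil ((m : ℝ) * s)
    rw [hq] at this
    exact_mod_cast this
  have hq1 : 1 ≤ q := by
    have : 0 < s := Real.sqrt_pos.2 (by nlinarith)
    have : (0 : ℝ) < q := lt_of_lt_of_le (by positivity) hqs
    exact_mod_cast this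
  obtain ⟨t, ht⟩ : ∃ t, m * (m + 1) = t + t := Nat.even_mul_succ_self m
  have htR : (m : ℝ) ^ 2 + m = 2 * t := by
    have : ((m * (m + 1) : ℕ) : ℝ) = ((t + t : ℕ) : ℝ) := by rw [ht]
    push_cast at this; linarith
  have hmt : m ≤ t := by nlinarith
  have hN : ramseyNumber (List.replicate m C4 ++
        [(⟨Fin (k + 1), starGraph k⟩ : VGraph)]) ≤ (t + q) + k := by
    refine Nat.sInf_le ⟨by omega, ram m k _ (colour m k (t + q) hk hm h ?_ (by omega))⟩
    have : (m : ℝ) ^ 2 * ((t + q : ℕ) + k - 1) ≤ ((t + q : ℕ) : ℝ) ^ 2 - m * (t + q : ℕ) := by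
      have hsq : ((m : ℝ) * s) ^ 2 ≤ (q : ℝ) ^ 2 := pow_le_pow_left₀ (by positivity) hqs 2
      rw [mul_pow, hs2] at hsq
      have ht' : (t : ℝ) = ((m : ℝ) ^ 2 + m) / 2 := by linarith
      push_cast
      rw [ht']
      linarith
    exact_mod_cast this
  have hNR : (ramseyNumber (List.replicate m C4 ++
        [(⟨Fin (k + 1), starGraph k⟩ : VGraph)]) : ℝ) ≤ (t + q) + k := by exact_mod_cast hN
  rw [htR, hq]
  push_cast
  linarith
end

section
/- For every integer m ≥ 2, the m-color diagonal Ramsey number of the four-cycle satisfies R(C_4, …, C_4) (with m copies of C_4) ≤ m² + m + 1. -/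
open SimpleGraph

/-- A regular symmetric 0/1 matrix with zero trace and
`A ^ 2 = J + m I`, row sums `m + 1`, does not exist for `m ≥ 2`. -/
lemma no_friendship (m : ℕ) (hm : 2 ≤ m) (N : ℕ) (hN : N = m ^ 2 + m + 1)
    (a : Fin N → Fin N → ℤ) (hdiag : ∀ u, a u u = 0)
    (hrow : ∀ u, ∑ w, a u w = m + 1)
    (hcol : ∀ u, ∑ w, a u w * a w u = m + 1)
    (hco : ∀ u v, u ≠ v → ∑ w, a u w * a w v = 1) : False := by
  obtain ⟨p, hp, hpm⟩ := Nat.exists_prime_and_dvd (show m ≠ 1 by omega)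
  have : Fact p.Prime := ⟨hp⟩
  have hm0 : (m : ZMod p) = 0 := (ZMod.natCast_eq_zero_iff m p).2 hpm
  let A : Matrix (Fin N) (Fin N) (ZMod p) := Matrix.of fun u v => (a u v : ZMod p)
  let J : Matrix (Fin N) (Fin N) (ZMod p) := Matrix.of fun _ _ => 1
  have hAA : A * A = J := by
    ext u v
    have h : ∑ w, a u w * a w v = if u = v then (m : ℤ) + 1 else 1 := by
      split_ifs with h
      · subst h; exact hcol u
      · exact hco u v h
    have h2 := congrArg (Int.cast : ℤ → ZMod p) h
    push_cast at h2
    simp only [Matrix.mul_apply, A, J, Matrix.of_apply]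
    rw [h2]; split_ifs <;> simp [hm0]
  have hAJ : A * J = J := by
    ext u v
    have h2 := congrArg (Int.cast : ℤ → ZMod p) (hrow u)
    push_cast at h2
    simp only [Matrix.mul_apply, A, J, Matrix.of_apply, mul_one]
    rw [h2]; simp [hm0]
  have hpow : ∀ k, A ^ (k + 2) = J := by
    intro k
    induction k with
    | zero => rw [zero_add, pow_two, hAA]
    | succ k ih => rw [show k + 1 + 2 = (k + 2) + 1 by ring, pow_succ', ih, hAJ]
  have hApJ : A ^ p = J := by
    have := hpow (p - 2)
    rwa [Nat.sub_add_cancel hp.two_le] at this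
  have htr := ZMod.trace_pow_card A
  rw [hApJ] at htr
  have h1 : J.trace = 1 := by
    simp [Matrix.trace, J, hN, hm0]
  have h2 : A.trace = 0 := by
    simp [Matrix.trace, A, hdiag]
  rw [h1, h2, zero_pow hp.ne_zero] at htr
  exact one_ne_zero htr

/-- The combinatorial core, for an arbitrary type of `m` colors. -/
lemma exists_mono_C4 {ι : Type} [Fintype ι] [DecidableEq ι] (m : ℕ) (hm : 2 ≤ m)
    (hι : Fintype.card ι = m) (N : ℕ) (hN : N = m ^ 2 + m + 1)
    (c : Sym2 (Fin N) → ι) :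
    ∃ (i : ι) (f : Fin 4 ↪ Fin N),
      ∀ u v, (SimpleGraph.cycleGraph 4).Adj u v → c s(f u, f v) = i := by
  by_contra hno
  let a : ι → Fin N → Fin N → ℤ := fun i u v => if u ≠ v ∧ c s(u, v) = i then 1 else 0
  have hdiag : ∀ i u, a i u u = 0 := by intro i u; simp [a]
  have hsymm : ∀ i u v, a i u v = a i v u := by
    intro i u v; simp only [a, ne_comm (a := u), Sym2.eq_swap (a := u)]
  have hidem : ∀ i u v, a i u v * a i u v = a i u v := by
    intro i u v; simp only [a]; split_ifs <;> simp
  have hle : ∀ i u v, u ≠ v → ∑ w, a i u w * a i w v ≤ 1 := by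
    intro i u v huv
    have h1 : ∑ w, a i u w * a i w v
        = ((Finset.univ.filter fun w => (u ≠ w ∧ c s(u, w) = i) ∧ (w ≠ v ∧ c s(w, v) = i)).card
          : ℤ) := by
      rw [Finset.card_filter]
      push_cast
      refine Finset.sum_congr rfl fun w _ => ?_
      simp only [a]
      split_ifs <;> simp_all
    rw [h1]
    norm_cast
    rw [Finset.card_le_one]
    intro x hx y hy
    by_contra hxy
    simp only [Finset.mem_filter, Finset.mem_univ, true_and] at hx hy
    obtain ⟨⟨hux, cux⟩, hxv, cxv⟩ := hx
    obtain ⟨⟨huy, cuy⟩, hyv, cyv⟩ := hy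
    have cxu : c s(x, u) = i := by rw [Sym2.eq_swap]; exact cux
    have cyu : c s(y, u) = i := by rw [Sym2.eq_swap]; exact cuy
    have cvx : c s(v, x) = i := by rw [Sym2.eq_swap]; exact cxv
    have cvy : c s(v, y) = i := by rw [Sym2.eq_swap]; exact cyv
    refine hno ⟨i, ⟨![u, x, v, y], ?_⟩, ?_⟩
    · intro s t hst
      fin_cases s <;> fin_cases t <;>
        first
        | rfl
        | (exfalso
           first
           | exact hux hst | exact hux hst.symm | exact hxv hst | exact hxv hst.symm
           | exact huy hst | exact huy hst.symm | exact hyv hst | exact hyv hst.symm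
           | exact huv hst | exact huv hst.symm | exact hxy hst | exact hxy hst.symm)
    · intro s t hst
      have hst' : s = t + 1 ∨ t = s + 1 := by
        revert hst; revert s t; decide
      rcases hst' with rfl | rfl
      · fin_cases t <;> simpa
      · fin_cases s <;> simpa
  let d : ι → Fin N → ℤ := fun i w => ∑ v, a i w v
  have hdeg : ∀ w, ∑ i, d i w = (N : ℤ) - 1 := by
    intro w
    simp only [d]
    rw [Finset.sum_comm]
    have : ∀ v, ∑ i, a i w v = 1 - if w = v then 1 else 0 := by
      intro v
      by_cases h : w = v <;> simp [a, h]
    simp [this]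
  have hcod : ∀ i u, ∑ w, a i u w * a i w u = d i u := by
    intro i u
    refine Finset.sum_congr rfl fun w _ => ?_
    rw [hsymm i w u, hidem]
  -- the defect of color i
  let e : ι → Fin N → Fin N → ℤ := fun i u v =>
    if u = v then 0 else 1 - ∑ w, a i u w * a i w v
  have he0 : ∀ i u v, 0 ≤ e i u v := by
    intro i u v
    simp only [e]
    split_ifs with h
    · exact le_rfl
    · linarith [hle i u v h]
  have hsq : ∀ i, ∑ u, ∑ v, ∑ w, a i u w * a i w v = ∑ w, d i w ^ 2 := by
    intro i
    have : ∀ u, ∑ v, ∑ w, a i u w * a i w v = ∑ w, a i u w * d i w := by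
      intro u
      rw [Finset.sum_comm]
      simp only [d, Finset.mul_sum]
    simp only [this]
    rw [Finset.sum_comm]
    refine Finset.sum_congr rfl fun w _ => ?_
    rw [← Finset.sum_mul, pow_two]
    congr 1
    exact Finset.sum_congr rfl fun u _ => hsymm i u w
  have hesum : ∀ i, ∑ u, ∑ v, e i u v
      = (N : ℤ) * (N - 1) + ∑ w, d i w - ∑ w, d i w ^ 2 := by
    intro i
    have h1 : ∀ u v, e i u v = 1 - (∑ w, a i u w * a i w v)
        + (if u = v then d i u - 1 else 0) := by
      intro u v
      simp only [e]
      split_ifs with h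
      · subst h; rw [hcod]; ring
      · ring
    simp only [h1, Finset.sum_add_distrib, Finset.sum_sub_distrib, hsq]
    simp
    ring
  have hNz : (N : ℤ) = m ^ 2 + m + 1 := by rw [hN]; push_cast; ring
  have hcomm : ∑ i, ∑ w, d i w = (N : ℤ) * (N - 1) := by
    rw [Finset.sum_comm]; simp [hdeg]; ring
  have htot : ∑ i, ((∑ w, (d i w - (m + 1)) ^ 2) + ∑ u, ∑ v, e i u v) = 0 := by
    have h1 : ∀ i, (∑ w, (d i w - (m + 1)) ^ 2) + ∑ u, ∑ v, e i u v
        = (N : ℤ) * (N - 1) + N * (m + 1) ^ 2 - (2 * m + 1) * ∑ w, d i w := by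
      intro i
      have h2 : ∑ w, (d i w - (m + 1)) ^ 2
          = ∑ w, d i w ^ 2 - 2 * (m + 1) * ∑ w, d i w + N * (m + 1) ^ 2 := by
        have : ∀ w, (d i w - (m + 1)) ^ 2
          = d i w ^ 2 - 2 * (m + 1) * d i w + (m + 1) ^ 2 := fun w => by ring
        simp only [this, Finset.sum_add_distrib, Finset.sum_sub_distrib, ← Finset.mul_sum]
        simp
      rw [hesum, h2]; ring
    simp only [h1, Finset.sum_sub_distrib, ← Finset.mul_sum, hcomm]
    simp [hι, hNz]
    ring
  have hee : ∀ i, 0 ≤ ∑ u, ∑ v, e i u v := fun i =>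
    Finset.sum_nonneg fun u _ => Finset.sum_nonneg fun v _ => he0 i u v
  have hdd : ∀ i, 0 ≤ ∑ w, (d i w - (m + 1)) ^ 2 := fun i =>
    Finset.sum_nonneg fun w _ => sq_nonneg _
  obtain ⟨i⟩ : Nonempty ι := Fintype.card_pos_iff.1 (by omega)
  have hi := (Finset.sum_eq_zero_iff_of_nonneg
    (fun j _ => add_nonneg (hdd j) (hee j))).1 htot i (Finset.mem_univ _)
  have hi1 : ∑ w, (d i w - (m + 1)) ^ 2 = 0 := by linarith [hdd i, hee i]
  have hi2 : ∑ u, ∑ v, e i u v = 0 := by linarith [hdd i, hee i]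
  have hd : ∀ w, d i w = m + 1 := by
    intro w
    have := (Finset.sum_eq_zero_iff_of_nonneg (fun w _ => sq_nonneg _)).1 hi1 w
      (Finset.mem_univ _)
    have := pow_eq_zero_iff (two_ne_zero) |>.1 this
    linarith
  refine no_friendship m hm N hN (a i) (hdiag i) hd (fun u => (hcod i u).trans (hd u)) ?_
  intro u v huv
  have h1 := (Finset.sum_eq_zero_iff_of_nonneg
    (fun u _ => Finset.sum_nonneg fun v _ => he0 i u v)).1 hi2 u (Finset.mem_univ _)
  have h2 := (Finset.sum_eq_zero_iff_of_nonneg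
    (fun v _ => he0 i u v)).1 h1 v (Finset.mem_univ _)
  simp only [e, if_neg huv] at h2
  linarith

/-- For every integer `m ≥ 2`, the `m`-color diagonal Ramsey number of the
four-cycle satisfies `R(C₄, …, C₄) ≤ m² + m + 1`. -/
theorem statement8 (m : ℕ) (hm : 2 ≤ m) :
    ramseyNumber (List.replicate m C4) ≤ m ^ 2 + m + 1 := by
  refine Nat.sInf_le ⟨by positivity, ?_⟩
  intro c
  have key : ∀ i, (List.replicate m C4).get i = C4 := by intro i; simp
  obtain ⟨i, h⟩ := exists_mono_C4 m hm (by simp) _ rfl c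
  refine ⟨i, ?_⟩
  rw [key i]
  exact h
end

section
/- The four-color Ramsey number satisfies R(C_4, K_3, K_3, K_3) ≤ 57; that is, every coloring of the edges of the complete graph on 57 vertices with colors 1, 2, 3, 4 contains a cycle of length 4 in color 1 or a triangle in one of the colors 2, 3, 4. -/
open SimpleGraph

section Helpers

open Finset

variable {V : Type*} [Fintype V] [DecidableEq V]

/-- No four-cycle: two distinct vertices have at most one common neighbour. -/
def QFree {V : Type*} (G : SimpleGraph V) : Prop :=
  ∀ a b x y, a ≠ b → x ≠ y → G.Adj a x → G.Adj a y → G.Adj b x → G.Adj b y → False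

/-- No triangle. -/
def TFree {V : Type*} (G : SimpleGraph V) : Prop :=
  ∀ a b c, G.Adj a b → G.Adj a c → G.Adj b c → False

/-- A three-element set of pairwise adjacent vertices. -/
def IsTri {V : Type*} (G : SimpleGraph V) (T : Finset V) : Prop :=
  T.card = 3 ∧ ∀ x ∈ T, ∀ y ∈ T, x ≠ y → G.Adj x y

lemma third_vertex (T : Finset V) (h : T.card = 3) (y z : V) :
    ∃ t ∈ T, t ≠ y ∧ t ≠ z := by
  have h1 : (T \ {y, z}).Nonempty := by
    rw [← Finset.card_pos]
    have := Finset.le_card_sdiff {y, z} T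
    have h2 : ({y, z} : Finset V).card ≤ 2 := Finset.card_le_two
    omega
  obtain ⟨t, ht⟩ := h1
  simp at ht
  exact ⟨t, ht.1, ht.2.1, ht.2.2⟩

lemma tri_nbr (G : SimpleGraph V) (hG : QFree G) (T : Finset V) (hT : IsTri G T)
    (x y z : V) (hx : x ∉ T) (hy : y ∈ T) (hz : z ∈ T) (hxy : G.Adj x y) (hxz : G.Adj x z) :
    y = z := by
  by_contra hne
  obtain ⟨t, ht, hty, htz⟩ := third_vertex T hT.1 y z
  exact hG x t y z (fun h => hx (h ▸ ht)) hne hxy hxz (hT.2 t ht y hy hty) (hT.2 t ht z hz htz)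

lemma tri_edges (G : SimpleGraph V) [DecidableRel G.Adj] (hG : QFree G) (T U : Finset V)
    (hT : IsTri G T) (hU : IsTri G U) (hd : Disjoint T U) :
    ∑ x ∈ T, (U.filter (G.Adj x)).card ≤ 1 := by
  have h : ∑ x ∈ T, (U.filter (G.Adj x)).card = ((T ×ˢ U).filter (fun p => G.Adj p.1 p.2)).card := by
    simp only [Finset.card_filter]
    rw [Finset.sum_product]
  rw [h, Finset.card_le_one]
  rintro ⟨x, y⟩ h1 ⟨x', y'⟩ h2
  simp only [Finset.mem_filter, Finset.mem_product] at h1 h2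
  obtain ⟨⟨hx, hy⟩, hxy⟩ := h1
  obtain ⟨⟨hx', hy'⟩, hxy'⟩ := h2
  have nd : ∀ t ∈ T, t ∉ U := fun t ht hu => Finset.disjoint_left.mp hd ht hu
  by_cases e1 : x = x'
  · subst e1
    rw [tri_nbr G hG U hU x y y' (nd x hx) hy hy' hxy hxy']
  · by_cases e2 : y = y'
    · subst e2
      exact absurd (tri_nbr G hG T hT y x x' (fun h => nd y h hy) hx hx' hxy.symm hxy'.symm) e1
    · exfalso
      exact hG x y' y x' (fun h => nd x hx (h ▸ hy')) (fun h => nd x' hx' (h ▸ hy)) hxy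
        (hT.2 x hx x' hx' e1) (hU.2 y' hy' y hy (Ne.symm e2)) hxy'.symm

/-- The structure of `C₄`-free sets with at least six vertices and no independent triple. -/
lemma six_struct (G : SimpleGraph V) [DecidableRel G.Adj] (hG : QFree G) (S : Finset V)
    (hS : 6 ≤ S.card)
    (hI : ∀ a ∈ S, ∀ b ∈ S, ∀ c ∈ S, a ≠ b → a ≠ c → b ≠ c →
      G.Adj a b ∨ G.Adj a c ∨ G.Adj b c) :
    ∃ T U : Finset V, S = T ∪ U ∧ Disjoint T U ∧ IsTri G T ∧ IsTri G U := by
  have htri : ∃ T ⊆ S, IsTri G T := by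
    obtain ⟨x, hx⟩ : S.Nonempty := by rw [← Finset.card_pos]; omega
    have hc := Finset.card_filter_add_card_filter_not (s := S.erase x) (G.Adj x)
    rw [Finset.card_erase_of_mem hx] at hc
    by_cases h3 : 3 ≤ ((S.erase x).filter (G.Adj x)).card
    · obtain ⟨a, ha, b, hb, c, hc, hab, hac, hbc⟩ := Finset.two_lt_card.mp h3
      simp only [Finset.mem_filter, Finset.mem_erase] at ha hb hc
      have key : ∀ p q, p ∈ S → q ∈ S → G.Adj x p → G.Adj x q → G.Adj p q →
          ∃ T ⊆ S, IsTri G T := by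
        intro p q hp hq h1 h2 h3
        refine ⟨{x, p, q}, ?_, ?_, ?_⟩
        · intro t; simp; rintro (rfl | rfl | rfl) <;> assumption
        · rw [Finset.card_eq_three]; exact ⟨x, p, q, h1.ne, h2.ne, h3.ne, rfl⟩
        · intro s hs t ht hne
          simp at hs ht
          rcases hs with rfl | rfl | rfl <;> rcases ht with rfl | rfl | rfl <;>
            first | exact absurd rfl hne | assumption | (apply SimpleGraph.Adj.symm; assumption)
      rcases hI a ha.1.2 b hb.1.2 c hc.1.2 hab hac hbc with h | h | h
      · exact key a b ha.1.2 hb.1.2 ha.2 hb.2 h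
      · exact key a c ha.1.2 hc.1.2 ha.2 hc.2 h
      · exact key b c hb.1.2 hc.1.2 hb.2 hc.2 h
    · have h3' : 3 ≤ ((S.erase x).filter (fun y => ¬ G.Adj x y)).card := by omega
      obtain ⟨T, hT, hTc⟩ := Finset.exists_subset_card_eq h3'
      refine ⟨T, fun t ht => ?_, hTc, ?_⟩
      · have := hT ht
        simp only [Finset.mem_filter, Finset.mem_erase] at this
        exact this.1.2
      · intro s hs t ht hne
        have h1 := hT hs
        have h2 := hT ht
        simp only [Finset.mem_filter, Finset.mem_erase] at h1 h2
        rcases hI x hx s h1.1.2 t h2.1.2 (Ne.symm h1.1.1) (Ne.symm h2.1.1) hne with h | h | h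
        · exact absurd h h1.2
        · exact absurd h h2.2
        · exact h
  obtain ⟨T, hTS, hT⟩ := htri
  have hcl : ∀ d ∈ S \ T, ∀ e ∈ S \ T, d ≠ e → G.Adj d e := by
    intro d hd e he hne
    simp only [Finset.mem_sdiff] at hd he
    have hd1 : (T.filter (G.Adj d)).card ≤ 1 := by
      rw [Finset.card_le_one]
      intro a ha b hb
      simp only [Finset.mem_filter] at ha hb
      exact tri_nbr G hG T hT d a b hd.2 ha.1 hb.1 ha.2 hb.2
    have he1 : (T.filter (G.Adj e)).card ≤ 1 := by
      rw [Finset.card_le_one]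
      intro a ha b hb
      simp only [Finset.mem_filter] at ha hb
      exact tri_nbr G hG T hT e a b he.2 ha.1 hb.1 ha.2 hb.2
    have hne' : (T \ (T.filter (G.Adj d) ∪ T.filter (G.Adj e))).Nonempty := by
      rw [← Finset.card_pos]
      have h1 := Finset.le_card_sdiff (T.filter (G.Adj d) ∪ T.filter (G.Adj e)) T
      have h2 := Finset.card_union_le (T.filter (G.Adj d)) (T.filter (G.Adj e))
      have := hT.1
      omega
    obtain ⟨t, ht⟩ := hne'
    simp only [Finset.mem_sdiff, Finset.mem_union, Finset.mem_filter, not_or, not_and] at ht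
    rcases hI d hd.1 e he.1 t (hTS ht.1) hne (fun h => hd.2 (h ▸ ht.1))
      (fun h => he.2 (h ▸ ht.1)) with h | h | h
    · exact h
    · exact absurd h (ht.2.1 ht.1)
    · exact absurd h (ht.2.2 ht.1)
  have hge : 3 ≤ (S \ T).card := by
    rw [Finset.card_sdiff_of_subset hTS]
    have := hT.1
    omega
  obtain ⟨U, hU, hUc⟩ := Finset.exists_subset_card_eq hge
  have hUT : IsTri G U := ⟨hUc, fun x hx y hy => hcl x (hU hx) y (hU hy)⟩
  have hUeq : S \ T = U := by
    refine Finset.Subset.antisymm (fun w hw => ?_) hU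
    by_contra hwU
    obtain ⟨a, b, c, hab, -, -, rfl⟩ := Finset.card_eq_three.mp hUc
    apply hab
    refine tri_nbr G hG _ hUT w a b hwU (by simp) (by simp) (hcl w hw a (hU (by simp)) ?_)
      (hcl w hw b (hU (by simp)) ?_)
    · rintro rfl; simp at hwU
    · rintro rfl; simp at hwU
  refine ⟨T, U, ?_, ?_, hT, hUT⟩
  · rw [← hUeq, Finset.union_sdiff_of_subset hTS]
  · rw [← hUeq]; exact Finset.disjoint_sdiff

/-- Counting paths of length two from a fixed vertex. -/
lemma two_paths (G : SimpleGraph V) [DecidableRel G.Adj] (hG : QFree G) (k : ℕ)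
    (hk : ∀ v, k + 1 ≤ G.degree v) (v : V) :
    G.degree v * k ≤ Fintype.card V - 1 ∧
    (G.degree v * k = Fintype.card V - 1 → ∀ w, w ≠ v → ∃ u, G.Adj v u ∧ G.Adj w u) := by
  set B := (G.neighborFinset v).biUnion (fun u => (G.neighborFinset u).erase v) with hB
  have hcard : G.degree v * k ≤ B.card := by
    rw [hB, Finset.card_biUnion]
    · rw [← G.card_neighborFinset_eq_degree v, ← smul_eq_mul]
      apply Finset.card_nsmul_le_sum
      intro u hu
      have : v ∈ G.neighborFinset u := by
        simp at hu ⊢; exact hu.symm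
      rw [Finset.card_erase_of_mem this, G.card_neighborFinset_eq_degree]
      have := hk u
      omega
    · intro x hx y hy hxy
      rw [Function.onFun, Finset.disjoint_left]
      intro w hw hw'
      simp at hx hy hw hw'
      exact hG v w x y (Ne.symm hw.1) hxy hx hy hw.2.symm hw'.2.symm
  have hsub : B ⊆ Finset.univ.erase v := by
    intro w hw
    simp [hB] at hw ⊢
    tauto
  have hc2 : (Finset.univ.erase v).card = Fintype.card V - 1 := by
    rw [Finset.card_erase_of_mem (Finset.mem_univ v), Finset.card_univ]
  have hle := Finset.card_le_card hsub
  refine ⟨by omega, fun he w hw => ?_⟩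
  have hBe : B = Finset.univ.erase v := Finset.eq_of_subset_of_card_le hsub (by omega)
  have hwB : w ∈ B := by rw [hBe]; simp [hw]
  simp [hB] at hwB
  obtain ⟨u, h1, -, h2⟩ := hwB
  exact ⟨u, h1, h2.symm⟩

/-- A `C₄`-free graph on 57 vertices has a vertex of degree at most seven. -/
lemma min_deg_57 (G : SimpleGraph V) [DecidableRel G.Adj] (hG : QFree G)
    (hV : Fintype.card V = 57) : ∃ v, G.degree v ≤ 7 := by
  by_contra hcon
  push Not at hcon
  have hdeg : ∀ v, G.degree v = 8 := by
    intro v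
    have := (two_paths G hG 7 hcon v).1
    have := hcon v
    omega
  have hcn : ∀ v w, w ≠ v → ∃ u, G.Adj v u ∧ G.Adj w u := by
    intro v
    refine (two_paths G hG 7 hcon v).2 ?_
    rw [hdeg, hV]
  haveI : Fact (Nat.Prime 7) := ⟨by norm_num⟩
  let A : Matrix V V (ZMod 7) := G.adjMatrix (ZMod 7)
  let J : Matrix V V (ZMod 7) := Matrix.of fun _ _ => 1
  have h8 : ((8 : ℕ) : ZMod 7) = 1 := rfl
  have hAJ : A * J = J := by
    ext v w
    simp only [A, J, SimpleGraph.adjMatrix_mul_apply, Matrix.of_apply, Finset.sum_const,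
      SimpleGraph.card_neighborFinset_eq_degree, hdeg, nsmul_eq_mul, mul_one, h8]
  have hAA : A * A = J := by
    ext v w
    simp only [A, J, SimpleGraph.adjMatrix_mul_apply, Matrix.of_apply, SimpleGraph.adjMatrix_apply]
    rw [Finset.sum_boole]
    by_cases hvw : w = v
    · subst hvw
      have : (G.neighborFinset w).filter (fun u => G.Adj u w) = G.neighborFinset w := by
        ext u; simp; exact fun h => h.symm
      rw [this, SimpleGraph.card_neighborFinset_eq_degree, hdeg, h8]
    · obtain ⟨u, hu1, hu2⟩ := hcn v w hvw
      have : (G.neighborFinset v).filter (fun u => G.Adj u w) = {u} := by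
        ext t
        simp
        constructor
        · rintro ⟨h1, h2⟩
          by_contra hne
          exact hG v w t u (Ne.symm hvw) hne h1 hu1 h2.symm hu2
        · rintro rfl; exact ⟨hu1, hu2.symm⟩
      rw [this]; simp
  have hA7 : A ^ 7 = J := by
    have : A ^ 7 = A * (A * (A * (A * (A * (A * A))))) := by
      simp only [pow_succ, pow_zero, one_mul, mul_assoc]
    rw [this, hAA, hAJ, hAJ, hAJ, hAJ, hAJ]
  have htr := ZMod.trace_pow_card (p := 7) A
  rw [hA7] at htr
  have h1 : Matrix.trace J = 1 := by
    simp only [Matrix.trace, Matrix.diag, J, Matrix.of_apply, Finset.sum_const, Finset.card_univ,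
      hV]
    rfl
  have h2 : Matrix.trace A = 0 := by
    simp [A]
  rw [h1, h2] at htr
  rw [zero_pow (by norm_num)] at htr
  exact one_ne_zero htr

/-- Degree bookkeeping for a triangle outside the closed neighbourhood of `v`. -/
lemma tri_sum (G : SimpleGraph V) [DecidableRel G.Adj] (hG : QFree G)
    (hmin : ∀ x, 4 ≤ G.degree x) (v : V) (T U₁ U₂ U₃ : Finset V)
    (hT : IsTri G T) (h1 : IsTri G U₁) (h2 : IsTri G U₂) (h3 : IsTri G U₃)
    (d1 : Disjoint T U₁) (d2 : Disjoint T U₂) (d3 : Disjoint T U₃)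
    (hcov : ∀ x, x ≠ v → ¬ G.Adj v x → x ∈ T ∨ x ∈ U₁ ∨ x ∈ U₂ ∨ x ∈ U₃)
    (hTv : ∀ x ∈ T, x ≠ v ∧ ¬ G.Adj v x) :
    ∀ x ∈ T, G.degree x = 4 ∧ ∃ u, G.Adj v u ∧ G.Adj x u := by
  have hb : ∀ x ∈ T, G.degree x ≤ ((G.neighborFinset v).filter (G.Adj x)).card + 2
      + (U₁.filter (G.Adj x)).card + (U₂.filter (G.Adj x)).card + (U₃.filter (G.Adj x)).card := by
    intro x hx
    have hsub : G.neighborFinset x ⊆ (G.neighborFinset v).filter (G.Adj x) ∪ T.erase x ∪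
        U₁.filter (G.Adj x) ∪ U₂.filter (G.Adj x) ∪ U₃.filter (G.Adj x) := by
      intro y hy
      have hy' : G.Adj x y := by simpa using hy
      have hyv : y ≠ v := by
        rintro rfl; exact (hTv x hx).2 hy'.symm
      have hne : y ≠ x := hy'.ne'
      have := hcov y hyv
      simp only [Finset.mem_union, Finset.mem_filter, Finset.mem_erase,
        SimpleGraph.mem_neighborFinset]
      tauto
    have hle := Finset.card_le_card hsub
    rw [G.card_neighborFinset_eq_degree] at hle
    have e : (T.erase x).card = 2 := by rw [Finset.card_erase_of_mem hx, hT.1]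
    have a1 := Finset.card_union_le ((G.neighborFinset v).filter (G.Adj x)) (T.erase x)
    have a2 := Finset.card_union_le ((G.neighborFinset v).filter (G.Adj x) ∪ T.erase x)
      (U₁.filter (G.Adj x))
    have a3 := Finset.card_union_le ((G.neighborFinset v).filter (G.Adj x) ∪ T.erase x ∪
      U₁.filter (G.Adj x)) (U₂.filter (G.Adj x))
    have a4 := Finset.card_union_le ((G.neighborFinset v).filter (G.Adj x) ∪ T.erase x ∪
      U₁.filter (G.Adj x) ∪ U₂.filter (G.Adj x)) (U₃.filter (G.Adj x))
    omega
  have hn : ∀ x ∈ T, ((G.neighborFinset v).filter (G.Adj x)).card ≤ 1 := by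
    intro x hx
    rw [Finset.card_le_one]
    intro a ha b hb
    simp only [Finset.mem_filter, SimpleGraph.mem_neighborFinset] at ha hb
    by_contra hne
    exact hG v x a b (Ne.symm (hTv x hx).1) hne ha.1 hb.1 ha.2 hb.2
  have s1 := tri_edges G hG T U₁ hT h1 d1
  have s2 := tri_edges G hG T U₂ hT h2 d2
  have s3 := tri_edges G hG T U₃ hT h3 d3
  have key : ∀ x ∈ T, G.degree x = 4 ∧ ((G.neighborFinset v).filter (G.Adj x)).card = 1 := by
    obtain ⟨a, b, c, hab, hac, hbc, rfl⟩ := Finset.card_eq_three.mp hT.1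
    rw [Finset.sum_insert (by simp [hab, hac]), Finset.sum_pair hbc] at s1 s2 s3
    have := hb a (by simp)
    have := hb b (by simp)
    have := hb c (by simp)
    have := hn a (by simp)
    have := hn b (by simp)
    have := hn c (by simp)
    have := hmin a
    have := hmin b
    have := hmin c
    intro x hx
    simp only [Finset.mem_insert, Finset.mem_singleton] at hx
    rcases hx with rfl | rfl | rfl <;> constructor <;> omega
  intro x hx
  refine ⟨(key x hx).1, ?_⟩
  have hpos : (((G.neighborFinset v).filter (G.Adj x))).Nonempty := by
    rw [← Finset.card_pos, (key x hx).2]; exact Nat.one_pos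
  obtain ⟨u, hu⟩ := hpos
  simp only [Finset.mem_filter, SimpleGraph.mem_neighborFinset] at hu
  exact ⟨u, hu⟩

/-- `R(C₄, K₃, K₃) ≤ 17`. -/
lemma ramsey_17 (G A B : SimpleGraph V) (hG : QFree G) (hA : TFree A) (hB : TFree B)
    (hcov : ∀ x y, x ≠ y → G.Adj x y ∨ A.Adj x y ∨ B.Adj x y)
    (hV : Fintype.card V = 17) : False := by
  classical
  have struct : ∀ (X Y : SimpleGraph V), TFree X → TFree Y →
      (∀ x y, x ≠ y → G.Adj x y ∨ X.Adj x y ∨ Y.Adj x y) → ∀ v, 6 ≤ X.degree v →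
      ∃ T U : Finset V, X.neighborFinset v = T ∪ U ∧ Disjoint T U ∧ IsTri G T ∧ IsTri G U := by
    intro X Y hX hY hc v hv
    apply six_struct G hG
    · rw [X.card_neighborFinset_eq_degree]; exact hv
    · intro a ha b hb c hc' hab hac hbc
      simp only [SimpleGraph.mem_neighborFinset] at ha hb hc'
      have n1 := hX v a b ha hb
      have n2 := hX v a c ha hc'
      have n3 := hX v b c hb hc'
      have m := hY a b c
      have c1 := hc a b hab
      have c2 := hc a c hac
      have c3 := hc b c hbc
      tauto
  have le6 : ∀ (X : SimpleGraph V) (v : V) (T U : Finset V), X.neighborFinset v = T ∪ U →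
      IsTri G T → IsTri G U → X.degree v ≤ 6 := by
    intro X v T U h hT hU
    rw [← X.card_neighborFinset_eq_degree, h]
    have := Finset.card_union_le T U
    have := hT.1
    have := hU.1
    omega
  have hcov' : ∀ x y, x ≠ y → G.Adj x y ∨ B.Adj x y ∨ A.Adj x y := fun x y h => by
    have := hcov x y h; tauto
  have hA6 : ∀ v, A.degree v ≤ 6 := by
    intro v
    by_contra h
    obtain ⟨T, U, h1, -, h2, h3⟩ := struct A B hA hB hcov v (by omega)
    exact h (le6 A v T U h1 h2 h3)
  have hB6 : ∀ v, B.degree v ≤ 6 := by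
    intro v
    by_contra h
    obtain ⟨T, U, h1, -, h2, h3⟩ := struct B A hB hA hcov' v (by omega)
    exact h (le6 B v T U h1 h2 h3)
  -- the set of non-neighbours
  let W : V → Finset V := fun v => (Finset.univ.erase v) \ G.neighborFinset v
  have hWmem : ∀ v x, x ∈ W v ↔ x ≠ v ∧ ¬ G.Adj v x := by
    intro v x; simp [W]
  have hWcard : ∀ v, (W v).card + G.degree v = 16 := by
    intro v
    have hs : G.neighborFinset v ⊆ Finset.univ.erase v := by
      intro x hx; simp at hx ⊢; exact hx.ne'
    have := Finset.card_sdiff_add_card_eq_card hs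
    rw [Finset.card_erase_of_mem (Finset.mem_univ v), Finset.card_univ, hV,
      G.card_neighborFinset_eq_degree] at this
    exact this
  have hWsub : ∀ v, W v ⊆ A.neighborFinset v ∪ B.neighborFinset v := by
    intro v x hx
    rw [hWmem] at hx
    have := hcov v x (Ne.symm hx.1)
    simp only [Finset.mem_union, SimpleGraph.mem_neighborFinset]
    tauto
  have hWle : ∀ v, (W v).card ≤ (A.neighborFinset v ∪ B.neighborFinset v).card :=
    fun v => Finset.card_le_card (hWsub v)
  have hun : ∀ v, (A.neighborFinset v ∪ B.neighborFinset v).card ≤ A.degree v + B.degree v := by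
    intro v
    have := Finset.card_union_le (A.neighborFinset v) (B.neighborFinset v)
    rwa [A.card_neighborFinset_eq_degree, B.card_neighborFinset_eq_degree] at this
  have hmin : ∀ v, 4 ≤ G.degree v := by
    intro v
    have := hWcard v
    have := hWle v
    have := hun v
    have := hA6 v
    have := hB6 v
    omega
  have Q : ∀ v, G.degree v = 4 → ∀ x ∈ W v, G.degree x = 4 ∧ (∃ u, G.Adj v u ∧ G.Adj x u) ∧
      ∃ y ∈ W v, ∃ z ∈ W v, G.Adj x y ∧ G.Adj x z ∧ G.Adj y z := by
    intro v hv
    have w1 := hWcard v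
    have w2 := hWle v
    have w3 := hun v
    have w4 := hA6 v
    have w5 := hB6 v
    obtain ⟨T₁, T₂, eA, dA, t1, t2⟩ := struct A B hA hB hcov v (by omega)
    obtain ⟨T₃, T₄, eB, dB, t3, t4⟩ := struct B A hB hA hcov' v (by omega)
    have hWeq : W v = A.neighborFinset v ∪ B.neighborFinset v :=
      Finset.eq_of_subset_of_card_le (hWsub v) (by omega)
    have hdis : Disjoint (A.neighborFinset v) (B.neighborFinset v) := by
      rw [← Finset.card_union_eq_card_add_card, A.card_neighborFinset_eq_degree,
        B.card_neighborFinset_eq_degree]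
      omega
    rw [eA, eB] at hdis hWeq
    rw [Finset.disjoint_union_left, Finset.disjoint_union_right, Finset.disjoint_union_right]
      at hdis
    obtain ⟨⟨d13, d14⟩, d23, d24⟩ := hdis
    have hm : ∀ x, (x ≠ v ∧ ¬ G.Adj v x) ↔ (x ∈ T₁ ∨ x ∈ T₂) ∨ x ∈ T₃ ∨ x ∈ T₄ := by
      intro x
      rw [← hWmem, hWeq]
      simp only [Finset.mem_union]
    have r1 := tri_sum G hG hmin v T₁ T₂ T₃ T₄ t1 t2 t3 t4 dA d13 d14
      (fun x h h' => by have := (hm x).1 ⟨h, h'⟩; tauto) (fun x hx => (hm x).2 (by tauto))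
    have r2 := tri_sum G hG hmin v T₂ T₁ T₃ T₄ t2 t1 t3 t4 dA.symm d23 d24
      (fun x h h' => by have := (hm x).1 ⟨h, h'⟩; tauto) (fun x hx => (hm x).2 (by tauto))
    have r3 := tri_sum G hG hmin v T₃ T₁ T₂ T₄ t3 t1 t2 t4 d13.symm d23.symm dB
      (fun x h h' => by have := (hm x).1 ⟨h, h'⟩; tauto) (fun x hx => (hm x).2 (by tauto))
    have r4 := tri_sum G hG hmin v T₄ T₁ T₂ T₃ t4 t1 t2 t3 d14.symm d24.symm dB.symm
      (fun x h h' => by have := (hm x).1 ⟨h, h'⟩; tauto) (fun x hx => (hm x).2 (by tauto))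
    have tri : ∀ T : Finset V, IsTri G T → T ⊆ W v → ∀ x ∈ T,
        ∃ y ∈ W v, ∃ z ∈ W v, G.Adj x y ∧ G.Adj x z ∧ G.Adj y z := by
      intro T hT hTW x hx
      obtain ⟨y, hy, hyx, -⟩ := third_vertex T hT.1 x x
      obtain ⟨z, hz, hzx, hzy⟩ := third_vertex T hT.1 x y
      exact ⟨y, hTW hy, z, hTW hz, hT.2 x hx y hy (Ne.symm hyx), hT.2 x hx z hz (Ne.symm hzx),
        hT.2 y hy z hz (Ne.symm hzy)⟩
    intro x hx
    have hx' := (hm x).1 ((hWmem v x).1 hx)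
    rcases hx' with (h | h) | h | h
    · exact ⟨(r1 x h).1, (r1 x h).2, tri T₁ t1 (by rw [hWeq]; intro t ht; simp [ht]) x h⟩
    · exact ⟨(r2 x h).1, (r2 x h).2, tri T₂ t2 (by rw [hWeq]; intro t ht; simp [ht]) x h⟩
    · exact ⟨(r3 x h).1, (r3 x h).2, tri T₃ t3 (by rw [hWeq]; intro t ht; simp [ht]) x h⟩
    · exact ⟨(r4 x h).1, (r4 x h).2, tri T₄ t4 (by rw [hWeq]; intro t ht; simp [ht]) x h⟩
  obtain ⟨v, hv⟩ : ∃ v, G.degree v = 4 := by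
    by_contra hcon
    push Not at hcon
    have h5 : ∀ v, 4 + 1 ≤ G.degree v := fun v => by
      have := hmin v
      have := hcon v
      omega
    obtain ⟨v⟩ : Nonempty V := by rw [← Fintype.card_pos_iff]; omega
    have := (two_paths G hG 4 h5 v).1
    have := h5 v
    omega
  obtain ⟨x, hx⟩ : (W v).Nonempty := by
    rw [← Finset.card_pos]
    have := hWcard v
    omega
  obtain ⟨hx4, -, y, hy, z, hz, hxy, hxz, hyz⟩ := Q v hv x hx
  have hy4 := (Q v hv y hy).1
  have hz4 := (Q v hv z hz).1
  have hN4 : ∀ u, G.Adj x u → G.degree u = 4 := by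
    intro u hu
    by_contra hu4
    have adj : ∀ t, G.degree t = 4 → G.Adj t u := by
      intro t ht
      by_contra hn
      have hut : u ≠ t := by rintro rfl; exact hu4 ht
      exact hu4 (Q t ht u ((hWmem t u).2 ⟨hut, hn⟩)).1
    exact hG x u y z hu.ne hyz.ne hxy hxz (adj y hy4).symm (adj z hz4).symm
  have hzW : z ∉ W x := by
    rw [hWmem]; tauto
  have hsub : insert z (W x) ⊆
      (G.neighborFinset x).biUnion (fun u => (G.neighborFinset u).erase x) := by
    intro t ht
    rw [Finset.mem_insert] at ht
    simp only [Finset.mem_biUnion, Finset.mem_erase, SimpleGraph.mem_neighborFinset]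
    rcases ht with rfl | ht
    · exact ⟨y, hxy, hxz.ne', hyz⟩
    · obtain ⟨u, hu1, hu2⟩ := (Q x hx4 t ht).2.1
      exact ⟨u, hu1, ((hWmem x t).1 ht).1, hu2.symm⟩
  have hle := Finset.card_le_card hsub
  rw [Finset.card_insert_of_notMem hzW] at hle
  have hle2 := Finset.card_biUnion_le_card_mul (G.neighborFinset x)
    (fun u => (G.neighborFinset u).erase x) 3 (by
      intro u hu
      have hu' : G.Adj x u := by simpa using hu
      have : x ∈ G.neighborFinset u := by simpa using hu'.symm
      rw [Finset.card_erase_of_mem this, G.card_neighborFinset_eq_degree, hN4 u hu'])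
  rw [G.card_neighborFinset_eq_degree, hx4] at hle2
  have := hWcard x
  omega

/-- The neighbourhood of a vertex in a triangle-free colour has at most 16 vertices. -/
lemma nbr_le_16 (G X A B : SimpleGraph V) [DecidableRel X.Adj] (hG : QFree G) (hX : TFree X)
    (hA : TFree A) (hB : TFree B)
    (hcov : ∀ x y, x ≠ y → G.Adj x y ∨ X.Adj x y ∨ A.Adj x y ∨ B.Adj x y) (v : V) :
    X.degree v ≤ 16 := by
  by_contra hcon
  have h17 : 17 ≤ (X.neighborFinset v).card := by
    rw [X.card_neighborFinset_eq_degree]; omega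
  obtain ⟨S, hS, hSc⟩ := Finset.exists_subset_card_eq h17
  have hadj : ∀ x : S, X.Adj v x := fun x => by simpa using hS x.2
  refine ramsey_17 (V := S) (G.comap Subtype.val) (A.comap Subtype.val) (B.comap Subtype.val)
    ?_ ?_ ?_ ?_ (by simpa using hSc)
  · intro a b x y hab hxy h1 h2 h3 h4
    exact hG a b x y (fun h => hab (Subtype.ext h)) (fun h => hxy (Subtype.ext h)) h1 h2 h3 h4
  · intro a b c h1 h2 h3
    exact hA a b c h1 h2 h3
  · intro a b c h1 h2 h3
    exact hB a b c h1 h2 h3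
  · intro x y hxy
    have h1 := hcov x y (fun h => hxy (Subtype.ext h))
    have h2 := hX v x y (hadj x) (hadj y)
    simp only [SimpleGraph.comap_adj]
    tauto

lemma ramsey_57 (G X A B : SimpleGraph V) (hG : QFree G) (hX : TFree X)
    (hA : TFree A) (hB : TFree B)
    (hcov : ∀ x y, x ≠ y → G.Adj x y ∨ X.Adj x y ∨ A.Adj x y ∨ B.Adj x y)
    (hV : Fintype.card V = 57) : False := by
  classical
  obtain ⟨v, hv⟩ := min_deg_57 G hG hV
  have h1 := nbr_le_16 G X A B hG hX hA hB hcov v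
  have h2 := nbr_le_16 G A X B hG hA hX hB (fun x y h => by have := hcov x y h; tauto) v
  have h3 := nbr_le_16 G B X A hG hB hX hA (fun x y h => by have := hcov x y h; tauto) v
  have hsub : Finset.univ.erase v ⊆ G.neighborFinset v ∪ X.neighborFinset v ∪
      A.neighborFinset v ∪ B.neighborFinset v := by
    intro x hx
    have hx' : x ≠ v := by simpa using hx
    have := hcov v x (Ne.symm hx')
    simp only [Finset.mem_union, SimpleGraph.mem_neighborFinset]
    tauto
  have hle := Finset.card_le_card hsub
  rw [Finset.card_erase_of_mem (Finset.mem_univ v), Finset.card_univ, hV] at hle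
  have a1 := Finset.card_union_le (G.neighborFinset v) (X.neighborFinset v)
  have a2 := Finset.card_union_le (G.neighborFinset v ∪ X.neighborFinset v) (A.neighborFinset v)
  have a3 := Finset.card_union_le (G.neighborFinset v ∪ X.neighborFinset v ∪ A.neighborFinset v)
    (B.neighborFinset v)
  simp only [SimpleGraph.card_neighborFinset_eq_degree] at a1 a2 a3
  omega

end Helpers

/-- The graph of edges of a given colour. -/
def colGraph {n k : ℕ} (c : Sym2 (Fin n) → Fin k) (i : Fin k) : SimpleGraph (Fin n) where
  Adj x y := x ≠ y ∧ c s(x, y) = i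
  symm := ⟨fun x y h => ⟨h.1.symm, by rw [Sym2.eq_swap]; exact h.2⟩⟩
  loopless := ⟨fun x h => h.1 rfl⟩

lemma tfree_of_no_embedding {n k : ℕ} (c : Sym2 (Fin n) → Fin k) (i : Fin k)
    (h : ¬ ∃ f : Fin 3 ↪ Fin n, ∀ u v, (⊤ : SimpleGraph (Fin 3)).Adj u v → c s(f u, f v) = i) :
    TFree (colGraph c i) := by
  intro a b d h1 h2 h3
  apply h
  have s1 := h1.symm.2
  have s2 := h2.symm.2
  have s3 := h3.symm.2
  have n1 := h1.1
  have n2 := h2.1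
  have n3 := h3.1
  refine ⟨⟨![a, b, d], ?_⟩, ?_⟩
  · intro u v huv
    fin_cases u <;> fin_cases v <;> simp_all
  · intro u v huv
    have e1 := h1.2
    have e2 := h2.2
    have e3 := h3.2
    fin_cases u <;> fin_cases v <;> first | exact absurd rfl huv.ne | assumption

lemma qfree_of_no_embedding {n k : ℕ} (c : Sym2 (Fin n) → Fin k) (i : Fin k)
    (h : ¬ ∃ f : Fin 4 ↪ Fin n, ∀ u v, (SimpleGraph.cycleGraph 4).Adj u v → c s(f u, f v) = i) :
    QFree (colGraph c i) := by
  intro a b x y hab hxy h1 h2 h3 h4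
  apply h
  have n1 := h1.1
  have n2 := h2.1
  have n3 := h3.1
  have n4 := h4.1
  refine ⟨⟨![a, x, b, y], ?_⟩, ?_⟩
  · intro u v huv
    fin_cases u <;> fin_cases v <;> simp_all
  · intro u v huv
    have e1 := h1.2
    have e2 := h2.2
    have e3 := h3.2
    have e4 := h4.2
    have s1 := h1.symm.2
    have s2 := h2.symm.2
    have s3 := h3.symm.2
    have s4 := h4.symm.2
    fin_cases u <;> fin_cases v <;> first | assumption | (exfalso; revert huv; decide)

/-- `R(C₄, K₃, K₃, K₃) ≤ 57`. -/
theorem statement14 : ramseyNumber [C4, Kc 3, Kc 3, Kc 3] ≤ 57 := by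
  apply Nat.sInf_le
  refine ⟨by norm_num, ?_⟩
  intro c
  by_contra hcon
  have h0 : QFree (colGraph c (0 : Fin 4)) :=
    qfree_of_no_embedding c (0 : Fin 4) (fun ⟨f, hf⟩ => hcon ⟨(0 : Fin 4), f, hf⟩)
  have h1 : TFree (colGraph c (1 : Fin 4)) :=
    tfree_of_no_embedding c (1 : Fin 4) (fun ⟨f, hf⟩ => hcon ⟨(1 : Fin 4), f, hf⟩)
  have h2 : TFree (colGraph c (2 : Fin 4)) :=
    tfree_of_no_embedding c (2 : Fin 4) (fun ⟨f, hf⟩ => hcon ⟨(2 : Fin 4), f, hf⟩)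
  have h3 : TFree (colGraph c (3 : Fin 4)) :=
    tfree_of_no_embedding c (3 : Fin 4) (fun ⟨f, hf⟩ => hcon ⟨(3 : Fin 4), f, hf⟩)
  refine ramsey_57 _ _ _ _ h0 h1 h2 h3 ?_ (by simp)
  intro x y hxy
  have key : ∀ j : Fin 4, j = 0 ∨ j = 1 ∨ j = 2 ∨ j = 3 := by decide
  rcases key (c s(x, y)) with h | h | h | h
  · exact Or.inl ⟨hxy, h⟩
  · exact Or.inr (Or.inl ⟨hxy, h⟩)
  · exact Or.inr (Or.inr (Or.inl ⟨hxy, h⟩))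
  · exact Or.inr (Or.inr (Or.inr ⟨hxy, h⟩))
end
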